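/- arXiv:1811.04188 — 2 statements merged into one kernel-verified Lean document; each statement's English description precedes it below -/
import Mathlib

section
/- Fix a real number x with 1/2 < x < 1, and fix a nonnegative integer m. Define the curve γ : ℝ → ℂ^{m+1} by γ(y) = (ζ(x+iy), ζ'(x+iy), …, ζ^{(m)}(x+iy)). Then the image γ(ℝ) is everywhere dense in ℂ^{m+1}. -/
section
open MeasureTheory Set Filter Topology Asymptotics
namespace Vor

/-- fractional part, complex valued -/
noncomputable def FF (v : ℝ) : ℂ := (v : ℂ) - (⌊v⌋₊ : ℂ)

noncomputable def fz : ℝ → ℂ := (Ioi (1:ℝ)).indicator FF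

lemma FF_norm_le {v : ℝ} (hv : 0 ≤ v) : ‖FF v‖ ≤ 1 := by
  have h1 := Nat.floor_le hv
  have h2 := Nat.lt_floor_add_one v
  have : FF v = ((v - (⌊v⌋₊ : ℝ) : ℝ) : ℂ) := by simp [FF]
  rw [this, Complex.norm_real, Real.norm_eq_abs, abs_le]
  constructor <;> linarith

lemma FF_meas : Measurable FF := by
  unfold FF
  have : Measurable (fun v : ℝ => ((⌊v⌋₊ : ℕ) : ℂ)) :=
    (measurable_from_nat (f := fun n : ℕ => (n : ℂ))).comp Nat.measurable_floor
  exact Complex.measurable_ofReal.sub this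

lemma fz_meas : Measurable fz := FF_meas.indicator measurableSet_Ioi

lemma fz_norm_le (v : ℝ) : ‖fz v‖ ≤ 1 := by
  unfold fz
  by_cases h : v ∈ Ioi (1:ℝ)
  · rw [indicator_of_mem h]; exact FF_norm_le (by have : (1:ℝ) < v := h; linarith)
  · rw [indicator_of_notMem h]; simp

lemma fz_locInt : LocallyIntegrableOn fz (Ioi 0) volume := by
  apply LocallyIntegrable.locallyIntegrableOn
  apply (locallyIntegrable_const (1:ℝ)).mono fz_meas.aestronglyMeasurable
  filter_upwards with v
  simpa using fz_norm_le v

lemma fz_top : fz =O[atTop] fun x : ℝ => x ^ (-(0:ℝ)) := by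
  apply IsBigO.of_bound 1
  filter_upwards with v
  simpa using fz_norm_le v

lemma fz_zero (b : ℝ) : fz =O[𝓝[>] 0] fun x : ℝ => x ^ (-b) := by
  apply IsBigO.of_bound 1
  have : ∀ᶠ v : ℝ in 𝓝[>] 0, v < 1 := nhdsWithin_le_nhds (Iio_mem_nhds one_pos)
  filter_upwards [this] with v hv
  have : fz v = 0 := indicator_of_notMem (by simp; linarith) _
  rw [this]; simp

lemma fz_conv {s : ℂ} (hs : 0 < s.re) : MellinConvergent fz (-s) :=
  mellinConvergent_of_isBigO_rpow (a := 0) (b := (-s).re - 1) fz_locInt fz_top (by simpa using hs)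
    (fz_zero _) (by linarith)

lemma fz_diff {s : ℂ} (hs : 0 < s.re) : DifferentiableAt ℂ (fun s => mellin fz (-s)) s := by
  have : DifferentiableAt ℂ (mellin fz) (-s) :=
    mellin_differentiableAt_of_isBigO_rpow (a := 0) (b := (-s).re - 1) fz_locInt fz_top
      (by simpa using hs) (fz_zero _) (by linarith)
  exact this.comp s differentiableAt_id.neg

lemma mellin_fz (s : ℂ) : mellin fz (-s) = ∫ t in Ioi (1:ℝ), (t:ℂ) ^ (-s-1) * FF t := by
  unfold mellin fz
  have : ∀ t : ℝ, (t:ℂ) ^ (-s-1) • (Ioi (1:ℝ)).indicator FF t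
      = (Ioi (1:ℝ)).indicator (fun t : ℝ => (t:ℂ) ^ (-s-1) * FF t) t := by
    intro t
    by_cases h : t ∈ Ioi (1:ℝ)
    · simp only [indicator_of_mem h, smul_eq_mul]
    · simp only [indicator_of_notMem h, smul_zero]
  simp_rw [this]
  rw [setIntegral_indicator measurableSet_Ioi]
  congr 2
  ext t; simp only [mem_inter_iff, mem_Ioi]
  exact ⟨fun h => h.2, fun h => ⟨by linarith, h⟩⟩

lemma fz_intOn {s : ℂ} (hs : 0 < s.re) :
    IntegrableOn (fun t : ℝ => (t:ℂ) ^ (-s-1) * FF t) (Ioi 1) := by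
  have h := fz_conv hs
  unfold MellinConvergent at h
  have h2 := h.mono_set (Ioi_subset_Ioi (zero_le_one (α := ℝ)))
  refine h2.congr_fun ?_ measurableSet_Ioi
  intro t ht
  simp only [fz, indicator_of_mem ht, smul_eq_mul]

lemma zeta_gt {s : ℂ} (hs : 1 < s.re) :
    riemannZeta s = s / (s - 1) - s * mellin fz (-s) := by
  have h0 : s ≠ 1 := by rintro rfl; simp at hs
  have hi := integral_Ioi_cpow_of_lt (a := -s) (by simpa using hs) one_pos
  have hii := integrableOn_Ioi_cpow_of_lt (a := -s) (by simpa using hs) one_pos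
  rw [← LSeries_one_eq_riemannZeta hs, LSeries_eq_mul_integral' 1 zero_le_one hs]
  · rw [mellin_fz, div_eq_mul_one_div, ← mul_sub]
    congr 1
    have e : (1:ℂ) / (s - 1) = ∫ t in Ioi (1:ℝ), (t:ℂ) ^ (-s) := by
      rw [hi]; simp; rw [show -s + 1 = -(s-1) by ring, neg_div_neg_eq, one_div]
    rw [e, ← integral_sub hii (fz_intOn (by linarith))]
    apply setIntegral_congr_fun measurableSet_Ioi
    intro t ht
    have ht1 : (1:ℝ) < t := ht
    have ht0 : (t:ℂ) ≠ 0 := by norm_cast; linarith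
    simp only [Pi.one_apply, Finset.sum_const, Nat.card_Icc, FF, nsmul_eq_mul, mul_one]
    rw [show -s = (-s - 1) + 1 by ring, Complex.cpow_add _ _ ht0, Complex.cpow_one,
      show -(s+1) = -s-1 by ring, show -s - 1 + 1 - 1 = -s-1 by ring]
    simp only [add_tsub_cancel_right]
    ring
  · simp only [Pi.one_apply, norm_one, Finset.sum_const, Nat.card_Icc, nsmul_eq_mul, mul_one,
      Real.rpow_one, add_tsub_cancel_right]
    exact isBigO_refl _ _

lemma zeta_pos {s : ℂ} (hs : 0 < s.re) (h1 : s ≠ 1) :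
    riemannZeta s = s / (s - 1) - s * mellin fz (-s) := by
  have hU : IsOpen {s : ℂ | 0 < s.re} := isOpen_lt continuous_const Complex.continuous_re
  have hpre : IsPreconnected {s : ℂ | 0 < s.re} := (convex_halfSpace_re_gt 0).isPreconnected
  have A1 : AnalyticOnNhd ℂ riemannZeta₁ {s : ℂ | 0 < s.re} :=
    differentiable_riemannZeta₁.differentiableOn.analyticOnNhd hU
  have A2 : AnalyticOnNhd ℂ (fun s => s - (s - 1) * (s * mellin fz (-s))) {s : ℂ | 0 < s.re} := by
    apply DifferentiableOn.analyticOnNhd _ hU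
    intro z hz
    have := fz_diff hz
    exact (by fun_prop : DifferentiableAt ℂ (fun s => s - (s - 1) * (s * mellin fz (-s))) z).differentiableWithinAt
  have key : ∀ z : ℂ, z ≠ 1 → riemannZeta₁ z = (z - 1) * riemannZeta z := by
    intro z hz
    rw [riemannZeta_eq_inv_sub_mul hz, mul_inv_cancel_left₀ (sub_ne_zero.2 hz)]
  have E := A1.eqOn_of_preconnected_of_eventuallyEq A2 hpre (z₀ := 2) (by simp) (by
    have : {s : ℂ | 1 < s.re} ∈ 𝓝 (2:ℂ) :=
      (isOpen_lt continuous_const Complex.continuous_re).mem_nhds (by simp)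
    filter_upwards [this] with z hz
    have h0 : z ≠ 1 := by rintro rfl; simp at hz
    have : z - 1 ≠ 0 := sub_ne_zero.2 h0
    rw [key z h0, zeta_gt hz]; field_simp)
  have := E hs
  simp only at this
  rw [key s h1] at this
  have h2 : s - 1 ≠ 0 := sub_ne_zero.2 h1
  apply mul_left_cancel₀ h2
  rw [this]; field_simp

lemma zeta_strip {s : ℂ} (hs : 0 < s.re) (hs1 : s.re < 1) :
    ∫ y : ℝ, ((⌊Real.exp y⌋₊ : ℂ) - Real.exp y) * Complex.exp (-s * y) = riemannZeta s / s := by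
  have h1 : s ≠ 1 := by rintro rfl; simp at hs1
  have h0 : s ≠ 0 := by rintro rfl; simp at hs
  have hm := hasMellin_cpow_Ioc 1 (s := -s) (by simp; linarith)
  have hsub := hasMellin_sub ((fz_conv hs).const_smul (-1 : ℂ)) hm.1
  have e1 : ∫ y : ℝ, ((⌊Real.exp y⌋₊ : ℂ) - Real.exp y) * Complex.exp (-s * y)
      = ∫ t in Ioi (0:ℝ), (t:ℂ) ^ (-s-1) * (-FF t) := by
    have := integral_image_eq_integral_abs_deriv_smul (s := univ) (f := Real.exp) (f' := Real.exp)
      MeasurableSet.univ (fun x _ => (Real.hasDerivAt_exp x).hasDerivWithinAt)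
      Real.exp_injective.injOn (fun t : ℝ => (t:ℂ) ^ (-s-1) * (-FF t))
    rw [image_univ, Real.range_exp] at this
    rw [this, setIntegral_univ]
    congr 1; ext y
    have hy : (Real.exp y : ℂ) ≠ 0 := by exact_mod_cast (Real.exp_pos y).ne'
    rw [abs_of_pos (Real.exp_pos y), Complex.real_smul, FF, Complex.cpow_sub _ _ hy,
      Complex.cpow_one, Complex.cpow_def_of_ne_zero hy, ← Complex.ofReal_log (Real.exp_pos y).le,
      Real.log_exp, mul_comm (y:ℂ)]
    field_simp
    ring
  have e2 : ∫ t in Ioi (0:ℝ), (t:ℂ) ^ (-s-1) * (-FF t) =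
      mellin (fun t => (-1:ℂ) • fz t - (Ioc 0 1).indicator (fun t : ℝ => (t:ℂ) ^ (1:ℂ)) t) (-s) := by
    unfold mellin
    apply setIntegral_congr_ae measurableSet_Ioi
    have : ∀ᵐ t : ℝ, t ≠ 1 := by simp [ae_iff]
    filter_upwards [this] with t ht ht0
    have ht0' : (0:ℝ) < t := ht0
    rw [smul_eq_mul]
    congr 1
    rcases lt_or_gt_of_ne ht with h | h
    · have : ⌊t⌋₊ = 0 := Nat.floor_eq_zero.2 h
      rw [fz, indicator_of_notMem (by simp; linarith), indicator_of_mem (show t ∈ Ioc (0:ℝ) 1 from ⟨ht0', h.le⟩)]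
      simp [FF, this]
    · rw [fz, indicator_of_mem (by simpa using h), indicator_of_notMem (by simp; intros; linarith)]
      simp
  rw [e1, e2, hsub.2, hm.2, mellin_const_smul, zeta_pos hs h1]
  have h2 : s - 1 ≠ 0 := sub_ne_zero.2 h1
  have h3 : -s + 1 ≠ 0 := by intro h; apply h2; linear_combination -h
  rw [show -s + 1 = -(s-1) by ring]
  simp only [smul_eq_mul]
  field_simp
  ring
end Vor
end

section
open MeasureTheory Set Filter Topology
open scoped ComplexConjugate
namespace Vor

lemma bessel {g : ℝ → ℂ} (hg : Integrable g) (hg2 : Integrable (fun y => ‖g y‖ ^ 2)) {T : ℝ}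
    (hT : 0 < T) :
    ∫ τ in Icc (-T) T, ‖∫ y, g y * Complex.exp (-Complex.I * τ * y)‖ ^ 2
      ≤ 20 * ∫ y, ‖g y‖ ^ 2 := by
  set b : ℝ := 1 / T ^ 2 with hb
  have hbpos : 0 < b := by positivity
  set w : ℝ → ℝ := fun τ => Real.exp (-b * τ ^ 2) with hw
  have hwi : Integrable w := integrable_exp_neg_mul_sq hbpos
  set gh : ℝ → ℂ := fun τ => ∫ y, g y * Complex.exp (-Complex.I * τ * y) with hgh
  set K : ℝ → ℝ := fun u => Real.sqrt (Real.pi / b) * Real.exp (-(1/(4*b)) * u ^ 2) with hK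
  have hKi : Integrable K := (integrable_exp_neg_mul_sq (by positivity)).const_mul _
  have hKint : ∫ u, K u = 2 * Real.pi := by
    rw [hK, integral_const_mul, integral_gaussian, ← Real.sqrt_mul (by positivity)]
    rw [show Real.pi / b * (Real.pi / (1 / (4 * b))) = (2 * Real.pi) ^ 2 by field_simp; ring]
    rw [Real.sqrt_sq (by positivity)]
  have hKev : ∀ u, K (-u) = K u := by intro u; simp [hK]
  have hKnn : ∀ u, 0 ≤ K u := by intro u; simp only [hK]; positivity
  -- triple function
  set Φ : ℝ → ℝ × ℝ → ℂ := fun τ p =>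
    (w τ : ℂ) * (g p.1 * conj (g p.2)) * Complex.exp (-Complex.I * τ * (p.1 - p.2)) with hΦ
  have hgc : Integrable (fun y => conj (g y)) := by
    exact (LinearIsometryEquiv.integrable_comp_iff (Complex.conjLIE)).2 hg
  have hprod : Integrable (fun p : ℝ × ℝ => g p.1 * conj (g p.2)) (volume.prod volume) :=
    hg.mul_prod hgc
  have hΦi : Integrable (Function.uncurry Φ) (volume.prod (volume.prod volume)) := by
    have h1 : Integrable (fun q : ℝ × (ℝ × ℝ) => (w q.1 : ℂ) * (g q.2.1 * conj (g q.2.2)))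
        (volume.prod (volume.prod volume)) := (hwi.ofReal (𝕜 := ℂ)).mul_prod hprod
    refine h1.mul_bdd (c := 1) ?_ ?_
    · apply Continuous.aestronglyMeasurable; fun_prop
    · filter_upwards with q
      rw [show -Complex.I * (q.1:ℂ) * ((q.2.1 : ℂ) - q.2.2) =
        ((-(q.1 * (q.2.1 - q.2.2)) : ℝ) : ℂ) * Complex.I by push_cast; ring,
        Complex.norm_exp_ofReal_mul_I]
  have hsw := integral_integral_swap hΦi
  have inner1 : ∀ τ, ∫ p, Φ τ p ∂(volume.prod volume) = ((w τ * ‖gh τ‖ ^ 2 : ℝ) : ℂ) := by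
    intro τ
    have : ∀ p : ℝ × ℝ, Φ τ p = (w τ : ℂ) * ((g p.1 * Complex.exp (-Complex.I * τ * p.1)) *
        conj (g p.2 * Complex.exp (-Complex.I * τ * p.2))) := by
      intro p
      simp only [hΦ, map_mul, ← Complex.exp_conj, Complex.conj_I, map_neg, Complex.conj_ofReal]
      rw [show -Complex.I * (τ:ℂ) * ((p.1:ℂ) - p.2) = (-Complex.I * τ * p.1) + (- -Complex.I * τ * p.2) by ring,
        Complex.exp_add]
      ring
    simp_rw [this]
    rw [integral_const_mul, integral_prod_mul (fun y => g y * Complex.exp (-Complex.I * τ * y))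
      (fun y => conj (g y * Complex.exp (-Complex.I * τ * y))), integral_conj]
    rw [show (∫ y, g y * Complex.exp (-Complex.I * τ * y)) = gh τ from rfl, Complex.mul_conj,
      Complex.normSq_eq_norm_sq]
    push_cast; rfl
  have inner2 : ∀ p : ℝ × ℝ, ∫ τ, Φ τ p = (g p.1 * conj (g p.2)) * (K (p.1 - p.2) : ℂ) := by
    intro p
    have e : ∀ τ : ℝ, Φ τ p = (g p.1 * conj (g p.2)) *
        (Complex.exp (Complex.I * (-(p.1 - p.2) : ℂ) * τ) * Complex.exp (-(b:ℂ) * τ ^ 2)) := by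
      intro τ
      simp only [hΦ, hw]
      push_cast
      rw [show -Complex.I * (τ:ℂ) * ((p.1:ℂ) - p.2) = Complex.I * (-((p.1:ℂ) - p.2)) * τ by ring]
      ring
    simp_rw [e]
    rw [integral_const_mul, fourierIntegral_gaussian (by simpa using hbpos)]
    congr 1
    simp only [hK]
    push_cast
    congr 1
    · rw [Real.sqrt_eq_rpow, Complex.ofReal_cpow (by positivity)]; push_cast; rfl
    · congr 1; field_simp
  have hcv : Integrable (fun p : ℝ × ℝ => ‖g p.2‖ ^ 2 * K (p.1 - p.2)) (volume.prod volume) :=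
    Integrable.convolution_integrand (ContinuousLinearMap.mul ℝ ℝ) hg2 hKi
  have hcv' : Integrable (fun p : ℝ × ℝ => ‖g p.1‖ ^ 2 * K (p.1 - p.2)) (volume.prod volume) := by
    have := hcv.swap
    refine this.congr ?_
    filter_upwards with p
    simp only [Function.comp, Prod.fst_swap, Prod.snd_swap]
    rw [← hKev, neg_sub]
  have v1 : ∫ p : ℝ × ℝ, ‖g p.2‖ ^ 2 * K (p.1 - p.2) ∂(volume.prod volume)
      = (∫ y, ‖g y‖ ^ 2) * (2 * Real.pi) := by
    have := integral_convolution (ContinuousLinearMap.mul ℝ ℝ) hg2 hKi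
    rw [integral_prod _ hcv, ← hKint]
    exact this
  have v2 : ∫ p : ℝ × ℝ, ‖g p.1‖ ^ 2 * K (p.1 - p.2) ∂(volume.prod volume)
      = (∫ y, ‖g y‖ ^ 2) * (2 * Real.pi) := by
    rw [← v1, ← integral_prod_swap]
    congr 1; ext p
    simp only [Prod.fst_swap, Prod.snd_swap]
    rw [← hKev, neg_sub]
  have total : ∫ τ, w τ * ‖gh τ‖ ^ 2 ≤ (∫ y, ‖g y‖ ^ 2) * (2 * Real.pi) := by
    have h1 : ((∫ τ, w τ * ‖gh τ‖ ^ 2 : ℝ) : ℂ) =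
        ∫ p : ℝ × ℝ, (g p.1 * conj (g p.2)) * (K (p.1 - p.2) : ℂ) ∂(volume.prod volume) := by
      rw [← integral_complex_ofReal]
      simp_rw [← inner1, ← inner2]
      exact hsw
    have h2 : (∫ τ, w τ * ‖gh τ‖ ^ 2) ≤ ‖((∫ τ, w τ * ‖gh τ‖ ^ 2 : ℝ) : ℂ)‖ := by
      rw [Complex.norm_real]; exact le_abs_self _
    refine h2.trans ?_
    rw [h1]
    calc _ ≤ ∫ p : ℝ × ℝ, (1/2 * (‖g p.1‖ ^ 2 * K (p.1 - p.2)) +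
          1/2 * (‖g p.2‖ ^ 2 * K (p.1 - p.2))) ∂(volume.prod volume) := by
          apply norm_integral_le_of_norm_le ((hcv'.const_mul _).add (hcv.const_mul _))
          filter_upwards with p
          rw [norm_mul, norm_mul, RCLike.norm_conj, Complex.norm_real, Real.norm_eq_abs,
            abs_of_nonneg (hKnn _)]
          simp only [Pi.add_apply]
          nlinarith [mul_nonneg (hKnn (p.1 - p.2)) (sq_nonneg (‖g p.1‖ - ‖g p.2‖))]
      _ = _ := by
          rw [integral_add (hcv'.const_mul _) (hcv.const_mul _), integral_const_mul,
            integral_const_mul, v1, v2]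
          ring
  have hIntg : Integrable (fun τ => w τ * ‖gh τ‖ ^ 2) := by
    have := hΦi.integral_prod_left
    have h2 := this.norm
    refine h2.congr ?_
    filter_upwards with τ
    have e := inner1 τ
    simp only [Function.uncurry]
    rw [e, Complex.norm_real, Real.norm_eq_abs, abs_of_nonneg]
    simp only [hw]; positivity
  have fin : ∫ τ in Icc (-T) T, ‖gh τ‖ ^ 2 ≤ Real.exp 1 * ∫ τ, w τ * ‖gh τ‖ ^ 2 := by
    rw [← integral_const_mul]
    calc _ ≤ ∫ τ in Icc (-T) T, Real.exp 1 * (w τ * ‖gh τ‖ ^ 2) := by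
          apply integral_mono_of_nonneg
          · filter_upwards with τ; positivity
          · exact (hIntg.const_mul _).integrableOn
          · filter_upwards [ae_restrict_mem measurableSet_Icc] with τ hτ
            have : 1 ≤ Real.exp 1 * w τ := by
              simp only [hw]
              rw [← Real.exp_add]
              apply Real.one_le_exp
              have : τ ^ 2 ≤ T ^ 2 := sq_le_sq' hτ.1 hτ.2
              have : b * τ ^ 2 ≤ 1 := by
                rw [hb, one_div, inv_mul_le_iff₀ (by positivity)]; linarith
              linarith
            nlinarith [sq_nonneg ‖gh τ‖]
      _ ≤ _ := by
          apply setIntegral_le_integral (hIntg.const_mul _)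
          filter_upwards with τ
          simp only [hw, Pi.zero_apply]; positivity
  have hn : 0 ≤ ∫ y, ‖g y‖ ^ 2 := integral_nonneg fun y => by positivity
  have h20 : Real.exp 1 * (2 * Real.pi) ≤ 20 := by
    have := Real.exp_one_lt_d9
    have := Real.pi_lt_d2
    nlinarith [Real.exp_pos 1, Real.pi_pos]
  calc _ ≤ _ := fin
    _ ≤ Real.exp 1 * ((∫ y, ‖g y‖ ^ 2) * (2 * Real.pi)) := by gcongr
    _ = (Real.exp 1 * (2 * Real.pi)) * ∫ y, ‖g y‖ ^ 2 := by ring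
    _ ≤ _ := by gcongr
end Vor
end

section
open MeasureTheory Set Filter Topology
namespace Vor

/-- summatory function -/
noncomputable def A (c : ℕ → ℂ) (v : ℝ) : ℂ := ∑ n ∈ Finset.Icc 1 ⌊v⌋₊, c n

noncomputable def R (c : ℕ → ℂ) (ρ : ℂ) (v : ℝ) : ℂ := A c v - ρ * v

structure Good (c : ℕ → ℂ) (ρ : ℂ) (L : ℝ) (G : ℂ → ℂ) : Prop where
  bd : ∀ v : ℝ, 0 < v → ‖R c ρ v‖ ≤ L
  int : ∀ s : ℂ, 0 < s.re → s.re < 1 →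
    ∫ y : ℝ, R c ρ (Real.exp y) * Complex.exp (-s * y) = G s / s

lemma A_meas (c : ℕ → ℂ) : Measurable (A c) :=
  (measurable_from_nat (f := fun k : ℕ => ∑ n ∈ Finset.Icc 1 k, c n)).comp Nat.measurable_floor

lemma R_meas (c : ℕ → ℂ) (ρ : ℂ) : Measurable (R c ρ) :=
  (A_meas c).sub (Complex.measurable_ofReal.const_mul _)

lemma R_small (c : ℕ → ℂ) (ρ : ℂ) {v : ℝ} (h : v < 1) : R c ρ v = - ρ * v := by
  simp [R, A, Nat.floor_eq_zero.2 h]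

variable {c : ℕ → ℂ} {ρ : ℂ} {L : ℝ} {G : ℂ → ℂ}

lemma Good.L_nonneg (h : Good c ρ L G) : 0 ≤ L := (norm_nonneg _).trans (h.bd 1 one_pos)

lemma Good.rho (h : Good c ρ L G) : ‖ρ‖ ≤ L := by
  by_contra hc
  push Not at hc
  have hL := h.L_nonneg
  have hρ : 0 < ‖ρ‖ := by linarith
  set v : ℝ := (L / ‖ρ‖ + 1) / 2 with hv
  have h1 : L / ‖ρ‖ < 1 := by rw [div_lt_one hρ]; exact hc
  have h0 : 0 ≤ L / ‖ρ‖ := by positivity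
  have hv1 : v < 1 := by linarith
  have hv0 : 0 < v := by linarith
  have := h.bd v hv0
  rw [R_small _ _ hv1, norm_mul, norm_neg, Complex.norm_real, Real.norm_eq_abs,
    abs_of_pos hv0, hv] at this
  have e : ‖ρ‖ * ((L / ‖ρ‖ + 1) / 2) = (L + ‖ρ‖) / 2 := by field_simp
  rw [e] at this
  linarith

lemma Good.bd2 (h : Good c ρ L G) {v : ℝ} (hv : 0 < v) (h1 : v < 1) : ‖R c ρ v‖ ≤ L * v := by
  rw [R_small _ _ h1, norm_mul, norm_neg, Complex.norm_real, Real.norm_eq_abs, abs_of_pos hv]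
  exact mul_le_mul_of_nonneg_right h.rho hv.le

lemma norm_cexp_neg (s : ℂ) (y : ℝ) : ‖Complex.exp (-s * y)‖ = Real.exp (-s.re * y) := by
  rw [Complex.norm_exp]; simp

lemma Good.integrable (h : Good c ρ L G) {s : ℂ} (h0 : 0 < s.re) (h1 : s.re < 1) :
    Integrable (fun y : ℝ => R c ρ (Real.exp y) * Complex.exp (-s * y)) := by
  have hm : AEStronglyMeasurable (fun y : ℝ => R c ρ (Real.exp y) * Complex.exp (-s * y)) := by
    apply Measurable.aestronglyMeasurable
    apply ((R_meas c ρ).comp Real.measurable_exp).mul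
    fun_prop
  rw [← integrableOn_univ, ← Iic_union_Ioi (a := (0:ℝ)), integrableOn_union]
  constructor
  · refine ((integrableOn_exp_mul_Iic (a := 1 - s.re) (by linarith) 0).const_mul L).mono'
      hm.restrict ?_
    have : ∀ᵐ y : ℝ, y ≠ 0 := by simp [ae_iff]
    filter_upwards [ae_restrict_mem measurableSet_Iic, ae_restrict_of_ae this] with y hy hy0
    have hy' : y < 0 := lt_of_le_of_ne hy hy0
    rw [norm_mul, norm_cexp_neg]
    have := h.bd2 (Real.exp_pos y) (by simpa using hy')
    calc _ ≤ L * Real.exp y * Real.exp (-s.re * y) := by gcongr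
      _ = _ := by rw [mul_assoc, ← Real.exp_add]; congr 2; ring
  · refine ((integrableOn_exp_mul_Ioi (a := - s.re) (by linarith) 0).const_mul L).mono'
      hm.restrict ?_
    filter_upwards with y
    rw [norm_mul, norm_cexp_neg]
    have := h.bd _ (Real.exp_pos y)
    gcongr

lemma good_zeta : Good (fun _ => 1) 1 1 riemannZeta := by
  have hR : ∀ v : ℝ, R (fun _ => 1) 1 v = - FF v := by
    intro v; simp [R, A, FF]
  constructor
  · intro v hv; rw [hR, norm_neg]; exact FF_norm_le hv.le
  · intro s h0 h1
    rw [← zeta_strip h0 h1]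
    congr 1; ext y; rw [hR]; simp [FF]

lemma good_one : Good (fun n => if n = 1 then 1 else 0) 0 1 (fun _ => 1) := by
  have hR : ∀ v : ℝ, R (fun n => if n = 1 then 1 else 0) 0 v = if 1 ≤ v then 1 else 0 := by
    intro v
    simp [R, A, Nat.one_le_floor_iff]
  constructor
  · intro v hv; rw [hR]; split_ifs <;> simp
  · intro s h0 h1
    have : ∀ y : ℝ, R (fun n => if n = 1 then 1 else 0) 0 (Real.exp y) * Complex.exp (-s * y)
      = (Ici (0:ℝ)).indicator (fun y : ℝ => Complex.exp (-s * y)) y := by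
      intro y
      rw [hR]
      by_cases hy : 0 ≤ y
      · rw [indicator_of_mem (by exact hy), if_pos (by simpa using hy), one_mul]
      · rw [indicator_of_notMem (by exact hy), if_neg (by simpa using hy), zero_mul]
    simp_rw [this]
    rw [integral_indicator measurableSet_Ici, integral_Ici_eq_integral_Ioi,
      integral_exp_mul_complex_Ioi (by simpa using h0)]
    simp

/-- dilation of coefficients -/
def dil (d : ℕ) (c : ℕ → ℂ) (n : ℕ) : ℂ := if d ∣ n then c (n / d) else 0

lemma A_dil {d : ℕ} (hd : 0 < d) (c : ℕ → ℂ) (v : ℝ) : A (dil d c) v = A c (v / d) := by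
  unfold A dil
  rw [Nat.floor_div_natCast, ← Finset.sum_filter]
  symm
  apply Finset.sum_bij (fun m _ => d * m)
  · intro m hm
    simp only [Finset.mem_Icc, Finset.mem_filter] at hm ⊢
    refine ⟨⟨Nat.mul_pos hd hm.1, ?_⟩, dvd_mul_right _ _⟩
    rw [mul_comm]; exact (Nat.le_div_iff_mul_le hd).1 hm.2
  · intro a _ b _ h; exact Nat.eq_of_mul_eq_mul_left hd h
  · intro n hn
    simp only [Finset.mem_Icc, Finset.mem_filter] at hn
    obtain ⟨⟨h1, h2⟩, m, rfl⟩ := hn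
    refine ⟨m, ?_, rfl⟩
    rw [Finset.mem_Icc]
    refine ⟨Nat.pos_of_mul_pos_left h1, ?_⟩
    rw [Nat.le_div_iff_mul_le hd, mul_comm]; exact h2
  · intro m hm; rw [Nat.mul_div_cancel_left _ hd]

lemma R_dil {d : ℕ} (hd : 0 < d) (c : ℕ → ℂ) (ρ : ℂ) (v : ℝ) :
    R (dil d c) (ρ / d) v = R c ρ (v / d) := by
  unfold R
  rw [A_dil hd]
  push_cast
  ring

lemma Good.dil (h : Good c ρ L G) {d : ℕ} (hd : 0 < d) :
    Good (dil d c) (ρ / d) L (fun s => (d:ℂ) ^ (-s) * G s) := by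
  have hd' : (0:ℝ) < d := by exact_mod_cast hd
  constructor
  · intro v hv
    rw [R_dil hd]; exact h.bd _ (by positivity)
  · intro s h0 h1
    have e : ∀ y : ℝ, R (Vor.dil d c) (ρ / d) (Real.exp y) * Complex.exp (-s * y)
        = (d:ℂ) ^ (-s) * (R c ρ (Real.exp (y - Real.log d)) *
          Complex.exp (-s * (y - Real.log d : ℝ))) := by
      intro y
      rw [R_dil hd, Real.exp_sub, Real.exp_log hd', Complex.cpow_def_of_ne_zero (by exact_mod_cast hd'.ne'),
        ← Complex.natCast_log]
      rw [mul_left_comm, ← Complex.exp_add]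
      congr 2
      push_cast; ring
    simp_rw [e]
    rw [integral_const_mul, integral_sub_right_eq_self
      (fun y : ℝ => R c ρ (Real.exp y) * Complex.exp (-s * y)) (Real.log d), h.int s h0 h1]
    ring

lemma Good.add {c' : ℕ → ℂ} {ρ' : ℂ} {L' : ℝ} {G' : ℂ → ℂ} (h : Good c ρ L G)
    (h' : Good c' ρ' L' G') : Good (fun n => c n + c' n) (ρ + ρ') (L + L') (fun s => G s + G' s) := by
  have hR : ∀ v, R (fun n => c n + c' n) (ρ + ρ') v = R c ρ v + R c' ρ' v := by
    intro v; simp only [R, A, Finset.sum_add_distrib]; ring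
  constructor
  · intro v hv; rw [hR]; exact (norm_add_le _ _).trans (add_le_add (h.bd v hv) (h'.bd v hv))
  · intro s h0 h1
    simp_rw [hR, add_mul]
    rw [integral_add (h.integrable h0 h1) (h'.integrable h0 h1), h.int s h0 h1, h'.int s h0 h1]
    ring

lemma Good.smul (h : Good c ρ L G) (a : ℂ) :
    Good (fun n => a * c n) (a * ρ) (‖a‖ * L) (fun s => a * G s) := by
  have hR : ∀ v, R (fun n => a * c n) (a * ρ) v = a * R c ρ v := by
    intro v; simp only [R, A, ← Finset.mul_sum]; ring
  constructor
  · intro v hv; rw [hR, norm_mul]; exact mul_le_mul_of_nonneg_left (h.bd v hv) (norm_nonneg _)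
  · intro s h0 h1
    simp_rw [hR, mul_assoc]
    rw [integral_const_mul, h.int s h0 h1]
    ring

lemma good_zero : Good (fun _ => 0) 0 0 (fun _ => 0) := by
  constructor
  · intro v _; simp [R, A]
  · intro s _ _; simp [R, A]

lemma good_sum {ι : Type*} (F : Finset ι) (cc : ι → ℕ → ℂ) (rr : ι → ℂ) (LL : ι → ℝ)
    (GG : ι → ℂ → ℂ) (h : ∀ i ∈ F, Good (cc i) (rr i) (LL i) (GG i)) :
    Good (fun n => ∑ i ∈ F, cc i n) (∑ i ∈ F, rr i) (∑ i ∈ F, LL i) (fun s => ∑ i ∈ F, GG i s) := by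
  classical
  induction F using Finset.induction_on with
  | empty => simpa using good_zero
  | insert a F ha ih =>
    simp only [Finset.sum_insert ha]
    exact (h a (by simp)).add (ih fun i hi => h i (by simp [hi]))

lemma Good.mono (h : Good c ρ L G) {L' : ℝ} (hL : L ≤ L') : Good c ρ L' G :=
  ⟨fun v hv => (h.bd v hv).trans hL, h.int⟩
end Vor
end

section
open MeasureTheory Set Filter Topology
namespace Vor
variable {c : ℕ → ℂ} {ρ : ℂ} {L : ℝ} {G : ℂ → ℂ}

lemma exp_sub_one_lower {z : ℂ} (hz : ‖z‖ ≤ 1/2) : ‖z‖ / 2 ≤ ‖Complex.exp z - 1‖ := by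
  have h := Complex.norm_exp_sub_one_sub_id_le (x := z) (by linarith)
  have h2 : ‖z‖ ≤ ‖Complex.exp z - 1‖ + ‖Complex.exp z - 1 - z‖ := by
    have := norm_sub_le (Complex.exp z - 1) (Complex.exp z - 1 - z)
    simpa using this
  nlinarith [norm_nonneg z]

lemma exp_le_lin {h : ℝ} (h0 : 0 ≤ h) (h1 : h ≤ 1/2) : Real.exp h ≤ 1 + 2 * h := by
  have := Real.abs_exp_sub_one_sub_id_le (x := h) (by rw [abs_of_nonneg h0]; linarith)
  rw [abs_le] at this
  nlinarith [this.2]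

/-- difference of the summatory function over a short interval -/
lemma dA_bound (c : ℕ → ℂ) {σ h V y : ℝ} (hσ : 0 < σ) (hσ1 : σ < 1) (h0 : 0 < h) (h1 : h ≤ 1/8)
    (hV : 2 * h * V ≤ 1) (hy : Real.exp y ≤ V) {N : ℕ} (hN : Real.exp h * V ≤ N) :
    ‖A c (Real.exp (y + h)) - A c (Real.exp y)‖ ^ 2 * Real.exp (-(2 * σ) * y)
      ≤ ∑ n ∈ Finset.Icc 1 N, (Ico (Real.log n - h) (Real.log n)).indicator
          (fun _ => 2 * (‖c n‖ ^ 2 * (n:ℝ) ^ (-(2 * σ)))) y := by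
  have hnn : ∀ n ∈ Finset.Icc 1 N, 0 ≤ (Ico (Real.log n - h) (Real.log n)).indicator
          (fun _ => 2 * (‖c n‖ ^ 2 * (n:ℝ) ^ (-(2 * σ)))) y := by
    intro n _; apply indicator_nonneg; intro x _; positivity
  have hlin := exp_le_lin h0.le (by linarith)
  have hey := Real.exp_pos y
  have hub : Real.exp (y + h) ≤ Real.exp y + 1 := by
    rw [Real.exp_add]; nlinarith
  have hfl1 : ⌊Real.exp y⌋₊ ≤ ⌊Real.exp (y + h)⌋₊ :=
    Nat.floor_mono (Real.exp_le_exp.2 (by linarith))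
  have hfl2 : ⌊Real.exp (y + h)⌋₊ ≤ ⌊Real.exp y⌋₊ + 1 := by
    rw [← Nat.floor_add_one hey.le]; exact Nat.floor_mono hub
  rcases eq_or_lt_of_le hfl1 with e | l
  · unfold A
    rw [e]; simp only [sub_self, norm_zero]
    simpa using Finset.sum_nonneg hnn
  · set n := ⌊Real.exp y⌋₊ + 1 with hn
    have e : ⌊Real.exp (y + h)⌋₊ = n := by omega
    have hA : A c (Real.exp (y + h)) - A c (Real.exp y) = c n := by
      unfold A
      rw [e, hn, Finset.sum_Icc_succ_top (by omega)]; ring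
    have hn0 : (0:ℝ) < n := by rw [hn]; positivity
    have hle : (n:ℝ) ≤ Real.exp (y + h) := by rw [← e]; exact Nat.floor_le (Real.exp_pos _).le
    have hlt : Real.exp y < n := by rw [hn]; push_cast; exact Nat.lt_floor_add_one _
    have hl1 : Real.log n - h ≤ y := by
      have := Real.log_le_log hn0 hle; rw [Real.log_exp] at this; linarith
    have hl2 : y < Real.log n := by rwa [Real.lt_log_iff_exp_lt hn0]
    have hmem : n ∈ Finset.Icc 1 N := by
      rw [Finset.mem_Icc]; refine ⟨by omega, ?_⟩
      have : (n:ℝ) ≤ N := by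
        refine hle.trans (le_trans ?_ hN)
        rw [Real.exp_add, mul_comm]; gcongr
      exact_mod_cast this
    refine le_trans ?_ (Finset.single_le_sum hnn hmem)
    rw [indicator_of_mem (show y ∈ Ico _ _ from ⟨hl1, hl2⟩), hA]
    have : Real.exp (-(2*σ) * y) ≤ 2 * (n:ℝ) ^ (-(2 * σ)) := by
      rw [Real.rpow_def_of_pos hn0]
      have h2 : (2:ℝ) ≥ Real.exp (1/4) := by
        have := exp_le_lin (h := 1/4) (by norm_num) (by norm_num); linarith
      calc Real.exp (-(2*σ) * y) ≤ Real.exp (1/4 + Real.log n * (-(2*σ))) := by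
            apply Real.exp_le_exp.2; nlinarith
        _ = Real.exp (1/4) * Real.exp (Real.log n * (-(2*σ))) := Real.exp_add _ _
        _ ≤ _ := by gcongr
    nlinarith [sq_nonneg ‖c n‖]

lemma key_L2 (hG : Good c ρ L G) {s' : ℂ} (hσ : 1/2 < s'.re) (hσ1 : s'.re < 1) {S : ℝ}
    (hS : ∀ N : ℕ, ∑ n ∈ Finset.Icc 1 N, ‖c n‖ ^ 2 * (n:ℝ) ^ (-(2 * s'.re)) ≤ S)
    {h V : ℝ} (h0 : 0 < h) (h1 : h ≤ 1/8) (hV0 : 0 < V) (hV : 2 * h * V = 1) :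
    Integrable (fun y : ℝ => ‖(R c ρ (Real.exp (y + h)) - R c ρ (Real.exp y)) *
      Complex.exp (-s' * y)‖ ^ 2) ∧
    ∫ y : ℝ, ‖(R c ρ (Real.exp (y + h)) - R c ρ (Real.exp y)) * Complex.exp (-s' * y)‖ ^ 2
      ≤ 4 * h * S + (4 + 1 / (1 - s'.re)) * L ^ 2 * V ^ (-(2 * s'.re)) := by
  set σ := s'.re with hσdef
  set N : ℕ := ⌈Real.exp h * V⌉₊ with hN
  have hNle : Real.exp h * V ≤ N := Nat.le_ceil _
  set Y := Real.log V with hY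
  have hlin := exp_le_lin h0.le (by linarith)
  set U1 : ℝ → ℝ := (Ioi Y).indicator (fun y => 4 * L ^ 2 * Real.exp (-(2 * σ) * y)) with hU1
  set U2 : ℝ → ℝ := (Iic Y).indicator (fun y => 8 * L ^ 2 * h ^ 2 * Real.exp ((2 - 2 * σ) * y))
    with hU2
  set U3 : ℝ → ℝ := fun y => 2 * ∑ n ∈ Finset.Icc 1 N,
    (Ico (Real.log n - h) (Real.log n)).indicator
          (fun _ => 2 * (‖c n‖ ^ 2 * (n:ℝ) ^ (-(2 * σ)))) y with hU3
  have hL := hG.L_nonneg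
  have i1 : Integrable U1 := by
    apply IntegrableOn.integrable_indicator _ measurableSet_Ioi
    exact (integrableOn_exp_mul_Ioi (by linarith) _).const_mul _
  have i2 : Integrable U2 := by
    apply IntegrableOn.integrable_indicator _ measurableSet_Iic
    exact (integrableOn_exp_mul_Iic (by linarith) _).const_mul _
  have i3' : ∀ n ∈ Finset.Icc 1 N, Integrable (fun y => (Ico (Real.log n - h) (Real.log n)).indicator
          (fun _ => 2 * (‖c n‖ ^ 2 * (n:ℝ) ^ (-(2 * σ)))) y) := by
    intro n _
    apply IntegrableOn.integrable_indicator _ measurableSet_Ico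
    apply integrableOn_const (by simp)
  have i3 : Integrable U3 := (integrable_finsetSum _ i3').const_mul _
  have hVe : ∀ a : ℝ, Real.exp (a * Y) = V ^ a := by
    intro a; rw [Real.rpow_def_of_pos hV0, hY, mul_comm]
  have v1 : ∫ y, U1 y ≤ 4 * L ^ 2 * V ^ (-(2 * σ)) := by
    rw [hU1, integral_indicator measurableSet_Ioi, integral_const_mul,
      integral_exp_mul_Ioi (by linarith), hVe, neg_div_neg_eq]
    have : 0 ≤ V ^ (-(2 * σ)) := by positivity
    gcongr
    apply div_le_self this; linarith
  have v2 : ∫ y, U2 y = 1 / (1 - σ) * L ^ 2 * V ^ (-(2 * σ)) := by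
    rw [hU2, integral_indicator measurableSet_Iic, integral_const_mul,
      integral_exp_mul_Iic (by linarith), hVe]
    rw [show 2 - 2 * σ = 2 + (-(2 * σ)) by ring, Real.rpow_add hV0]
    have : 1 - σ ≠ 0 := by linarith
    have h3 : 2 + (-(2*σ)) = 2 * (1 - σ) := by ring
    rw [h3]
    have h4 : V ^ (2:ℝ) = V ^ 2 := by norm_cast
    rw [h4]
    field_simp
    have : h ^ 2 * V ^ 2 = 1 / 4 := by
      have : h * V = 1 / 2 := by linarith
      rw [← mul_pow, this]; norm_num
    linear_combination 8 * L ^ 2 * this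
  have v3 : ∫ y, U3 y ≤ 4 * h * S := by
    rw [hU3, integral_const_mul, integral_finsetSum _ i3']
    have : ∀ n ∈ Finset.Icc 1 N, ∫ y, (Ico (Real.log n - h) (Real.log n)).indicator
          (fun _ => 2 * (‖c n‖ ^ 2 * (n:ℝ) ^ (-(2 * σ)))) y
          = 2 * h * (‖c n‖ ^ 2 * (n:ℝ) ^ (-(2 * σ))) := by
      intro n _
      rw [integral_indicator measurableSet_Ico]
      simp [h0.le]
      ring
    rw [Finset.sum_congr rfl this, ← Finset.mul_sum]
    nlinarith [hS N]
  have hpt : ∀ y : ℝ, ‖(R c ρ (Real.exp (y + h)) - R c ρ (Real.exp y)) *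
      Complex.exp (-s' * y)‖ ^ 2 ≤ U1 y + U2 y + U3 y := by
    intro y
    rw [norm_mul, norm_cexp_neg, mul_pow, ← Real.exp_nat_mul]
    rw [show ((2:ℕ):ℝ) * (-s'.re * y) = -(2*σ) * y by push_cast; ring]
    have u3 : 0 ≤ U3 y := by
      simp only [hU3]
      apply mul_nonneg zero_le_two
      apply Finset.sum_nonneg
      intro n _; apply indicator_nonneg; intro x _; positivity
    by_cases hy : Y < y
    · have e2 : U2 y = 0 := indicator_of_notMem (by simp; exact hy) _
      have e1 : U1 y = 4 * L ^ 2 * Real.exp (-(2 * σ) * y) := indicator_of_mem (show y ∈ Ioi Y from hy) _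
      rw [e1, e2]
      have : ‖R c ρ (Real.exp (y + h)) - R c ρ (Real.exp y)‖ ≤ 2 * L := by
        have := norm_sub_le (R c ρ (Real.exp (y + h))) (R c ρ (Real.exp y))
        have := hG.bd _ (Real.exp_pos (y+h))
        have := hG.bd _ (Real.exp_pos y)
        linarith
      have : ‖R c ρ (Real.exp (y + h)) - R c ρ (Real.exp y)‖ ^ 2 ≤ (2 * L) ^ 2 := by gcongr
      have := mul_le_mul_of_nonneg_right this (Real.exp_pos (-(2 * σ) * y)).le
      nlinarith
    · push Not at hy
      have e1 : U1 y = 0 := indicator_of_notMem (by simp; exact hy) _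
      have e2 : U2 y = 8 * L ^ 2 * h ^ 2 * Real.exp ((2 - 2 * σ) * y) :=
        indicator_of_mem (show y ∈ Iic Y from hy) _
      rw [e1, e2]
      have hyV : Real.exp y ≤ V := by
        rwa [← Real.le_log_iff_exp_le hV0]
      have hd := dA_bound c (σ := σ) (by linarith) hσ1 h0 h1 hV.le hyV hNle
      have hR : R c ρ (Real.exp (y + h)) - R c ρ (Real.exp y)
        = (A c (Real.exp (y + h)) - A c (Real.exp y)) - ρ * ((Real.exp h - 1) * Real.exp y : ℝ) := by
        simp only [R]; rw [Real.exp_add]; push_cast; ring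
      have hnn : 0 ≤ (Real.exp h - 1) * Real.exp y := mul_nonneg (by linarith [Real.add_one_le_exp h]) (Real.exp_pos y).le
      have hn : ‖ρ * ((Real.exp h - 1) * Real.exp y : ℝ)‖ ≤ L * (2 * h * Real.exp y) := by
        rw [norm_mul, Complex.norm_real, Real.norm_eq_abs, abs_of_nonneg]
        · exact mul_le_mul hG.rho (by nlinarith [Real.exp_pos y]) hnn hG.L_nonneg
        · exact hnn
      have hsq : ‖R c ρ (Real.exp (y + h)) - R c ρ (Real.exp y)‖ ^ 2 ≤
          2 * ‖A c (Real.exp (y + h)) - A c (Real.exp y)‖ ^ 2 + 2 * (L * (2 * h * Real.exp y)) ^ 2 := by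
        rw [hR]
        have := norm_sub_le (A c (Real.exp (y + h)) - A c (Real.exp y)) (ρ * ((Real.exp h - 1) * Real.exp y : ℝ))
        set a := ‖A c (Real.exp (y + h)) - A c (Real.exp y)‖
        set b := L * (2 * h * Real.exp y)
        have h5 : ‖(A c (Real.exp (y + h)) - A c (Real.exp y)) - ρ * ((Real.exp h - 1) * Real.exp y : ℝ)‖ ≤ a + b := by linarith
        calc _ ≤ (a + b) ^ 2 := by gcongr
          _ ≤ _ := by nlinarith [sq_nonneg (a - b)]
      have h6 : Real.exp y ^ 2 * Real.exp (-(2*σ) * y) = Real.exp ((2 - 2 * σ) * y) := by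
        rw [← Real.exp_nat_mul, ← Real.exp_add]; congr 1; push_cast; ring
      calc _ ≤ (2 * ‖A c (Real.exp (y + h)) - A c (Real.exp y)‖ ^ 2 + 2 * (L * (2 * h * Real.exp y)) ^ 2)
            * Real.exp (-(2*σ) * y) := by gcongr
        _ = 2 * (‖A c (Real.exp (y + h)) - A c (Real.exp y)‖ ^ 2 * Real.exp (-(2*σ) * y)) +
            8 * L ^ 2 * h ^ 2 * (Real.exp y ^ 2 * Real.exp (-(2*σ) * y)) := by ring
        _ ≤ _ := by rw [h6]; simp only [hU3]; linarith
  have hm : AEStronglyMeasurable (fun y : ℝ => ‖(R c ρ (Real.exp (y + h)) - R c ρ (Real.exp y)) *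
      Complex.exp (-s' * y)‖ ^ 2) := by
    apply Measurable.aestronglyMeasurable
    apply Measurable.pow_const
    apply Measurable.norm
    apply Measurable.mul
    · apply Measurable.sub
      · exact (R_meas c ρ).comp (Real.measurable_exp.comp (measurable_add_const h))
      · exact (R_meas c ρ).comp Real.measurable_exp
    · fun_prop
  have hi : Integrable (fun y => U1 y + U2 y + U3 y) := (i1.add i2).add i3
  have hIntg := hi.mono' hm (by
    filter_upwards with y
    rw [Real.norm_eq_abs, abs_of_nonneg (by positivity)]; exact hpt y)
  refine ⟨hIntg, ?_⟩
  calc _ ≤ ∫ y, (U1 y + U2 y + U3 y) := integral_mono hIntg hi hpt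
    _ = (∫ y, U1 y) + (∫ y, U2 y) + (∫ y, U3 y) := by
        have e1 := integral_add (i1.add i2) i3
        have e2 := integral_add i1 i2
        simp only [Pi.add_apply] at e1
        rw [e1, e2]
    _ ≤ _ := by rw [v2]; nlinarith

lemma key (hG : Good c ρ L G) {s' : ℂ} (hσ : 1/2 < s'.re) (hσ1 : s'.re < 1) (hs2 : ‖s'‖ ≤ 2) {S : ℝ}
    (hS : ∀ N : ℕ, ∑ n ∈ Finset.Icc 1 N, ‖c n‖ ^ 2 * (n:ℝ) ^ (-(2 * s'.re)) ≤ S)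
    {T : ℝ} (hT : 2 ≤ T) :
    ∫ τ in Icc (-T) T, ‖G (s' + τ * Complex.I)‖ ^ 2
      ≤ 1280 * (T * S + (4 + 1 / (1 - s'.re)) * L ^ 2 * T ^ (2 - 2 * s'.re)) := by
  set σ := s'.re with hσdef
  set h : ℝ := 1 / (4 * T) with hh
  have hT0 : 0 < T := by linarith
  have h0 : 0 < h := by positivity
  have hhT : h * T = 1 / 4 := by rw [hh]; field_simp
  have h1 : h ≤ 1/8 := by nlinarith
  obtain ⟨hi2, hb⟩ := key_L2 hG hσ hσ1 hS h0 h1 (V := 2 * T) (by positivity) (by linarith)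
  set g : ℝ → ℂ := fun y => (R c ρ (Real.exp (y + h)) - R c ρ (Real.exp y)) * Complex.exp (-s' * y)
    with hg
  have shift : ∀ s : ℂ, ∀ y : ℝ, R c ρ (Real.exp (y + h)) * Complex.exp (-s * y)
      = Complex.exp (h * s) * (R c ρ (Real.exp (y + h)) * Complex.exp (-s * (y + h : ℝ))) := by
    intro s y
    rw [mul_left_comm, ← Complex.exp_add]; congr 2; push_cast; ring
  have hI : ∀ s : ℂ, s.re = σ → Integrable (fun y : ℝ => R c ρ (Real.exp (y + h)) * Complex.exp (-s * y)) := by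
    intro s hs
    simp_rw [shift s]
    exact ((hG.integrable (s := s) (by rw [hs]; linarith) (by rw [hs]; exact hσ1)).comp_add_right h).const_mul _
  have hgi : Integrable g := by
    have := (hI s' rfl).sub (hG.integrable (s := s') (by linarith) hσ1)
    refine this.congr ?_
    filter_upwards with y
    simp only [hg, Pi.sub_apply]; ring
  have hbes := bessel hgi hi2 hT0
  have hF : ∀ τ : ℝ, ∫ y, g y * Complex.exp (-Complex.I * τ * y) =
      (Complex.exp (h * (s' + τ * Complex.I)) - 1) * (G (s' + τ * Complex.I) / (s' + τ * Complex.I)) := by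
    intro τ
    set s := s' + τ * Complex.I with hs
    have hsre : s.re = σ := by simp [hs, hσdef]
    have e : ∀ y : ℝ, g y * Complex.exp (-Complex.I * τ * y) =
        R c ρ (Real.exp (y + h)) * Complex.exp (-s * y) - R c ρ (Real.exp y) * Complex.exp (-s * y) := by
      intro y
      simp only [hg]
      rw [mul_assoc, ← Complex.exp_add, show -s' * (y:ℂ) + -Complex.I * τ * y = -s * y by rw [hs]; ring]
      ring
    simp_rw [e]
    rw [integral_sub (hI s hsre) (hG.integrable (by rw [hsre]; linarith) (by rw [hsre]; exact hσ1))]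
    simp_rw [shift s]
    rw [integral_const_mul, integral_add_right_eq_self
      (fun y : ℝ => R c ρ (Real.exp y) * Complex.exp (-s * y)) h,
      hG.int s (by rw [hsre]; linarith) (by rw [hsre]; exact hσ1)]
    ring
  have hlow : ∀ τ ∈ Icc (-T) T, (h/2) ^ 2 * ‖G (s' + τ * Complex.I)‖ ^ 2 ≤
      ‖∫ y, g y * Complex.exp (-Complex.I * τ * y)‖ ^ 2 := by
    intro τ hτ
    rw [hF, ← mul_pow]
    set s := s' + τ * Complex.I with hs
    have hsre : s.re = σ := by simp [hs, hσdef]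
    have hsn : ‖s‖ ≤ 2 + T := by
      refine (norm_add_le _ _).trans (add_le_add hs2 ?_)
      rw [norm_mul, Complex.norm_I, mul_one, Complex.norm_real, Real.norm_eq_abs, abs_le]; exact hτ
    have hspos : 0 < ‖s‖ := by
      rw [norm_pos_iff]; rintro h; rw [h] at hsre; simp at hsre; linarith
    have hz : ‖(h:ℂ) * s‖ = h * ‖s‖ := by
      rw [norm_mul, Complex.norm_real, Real.norm_eq_abs, abs_of_pos h0]
    have := exp_sub_one_lower (z := (h:ℂ) * s) (by rw [hz]; nlinarith)
    rw [hz] at this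
    rw [norm_mul, norm_div]
    apply pow_le_pow_left₀ (by positivity)
    calc h / 2 * ‖G s‖ = (h * ‖s‖ / 2) * (‖G s‖ / ‖s‖) := by field_simp
      _ ≤ _ := by gcongr
  have hgood : (h/2)^2 * ∫ τ in Icc (-T) T, ‖G (s' + τ * Complex.I)‖ ^ 2 ≤
      ∫ τ in Icc (-T) T, ‖∫ y, g y * Complex.exp (-Complex.I * τ * y)‖ ^ 2 := by
    rw [← integral_const_mul]
    apply integral_mono_of_nonneg
    · filter_upwards with τ; positivity
    · have hcont : Continuous (fun τ : ℝ => ∫ y, g y * Complex.exp (-Complex.I * τ * y)) := by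
        apply continuous_of_dominated (bound := fun y => ‖g y‖)
        · intro τ; exact hgi.aestronglyMeasurable.mul (by apply Continuous.aestronglyMeasurable; fun_prop)
        · intro τ; filter_upwards with y
          rw [norm_mul, show -Complex.I * (τ:ℂ) * y = ((-(τ * y) : ℝ) : ℂ) * Complex.I by push_cast; ring,
            Complex.norm_exp_ofReal_mul_I, mul_one]
        · exact hgi.norm
        · filter_upwards with y; fun_prop
      exact (hcont.norm.pow 2).integrableOn_Icc
    · filter_upwards [ae_restrict_mem measurableSet_Icc] with τ hτ; exact hlow τ hτ
  have hV' : (2 * T) ^ (-(2*σ)) ≤ T ^ (-(2*σ)) :=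
    Real.rpow_le_rpow_of_nonpos hT0 (by linarith) (by linarith)
  have hK : 0 ≤ (4 + 1 / (1 - σ)) * L ^ 2 := by
    have : 0 < 1 - σ := by linarith
    positivity
  have hT2 : T ^ (2 - 2*σ) = T ^ 2 * T ^ (-(2*σ)) := by
    rw [show 2 - 2*σ = 2 + (-(2*σ)) by ring, Real.rpow_add hT0]; norm_cast
  have hfin : (h/2)^2 * ∫ τ in Icc (-T) T, ‖G (s' + τ * Complex.I)‖ ^ 2 ≤
      20 * (4 * h * S + (4 + 1 / (1 - σ)) * L ^ 2 * T ^ (-(2*σ))) := by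
    refine hgood.trans (hbes.trans ?_)
    have := mul_le_mul_of_nonneg_left hV' hK
    linarith
  have hh2 : (h/2)^2 = 1 / (64 * T ^ 2) := by rw [hh]; field_simp; norm_num
  rw [hh2, one_div, inv_mul_le_iff₀ (by positivity)] at hfin
  refine hfin.trans (le_of_eq ?_)
  rw [hT2, hh]; field_simp; ring
end Vor
end

section
open MeasureTheory Set Filter Topology
namespace Vor

noncomputable def cop (Q : Finset ℕ) (n : ℕ) : ℂ := if ∀ p ∈ Q, ¬ p ∣ n then 1 else 0

lemma cop_insert {Q : Finset ℕ} (hQ : ∀ p ∈ Q, p.Prime) {p : ℕ} (hp : p.Prime) (hpQ : p ∉ Q) (n : ℕ) :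
    cop (insert p Q) n = cop Q n + (-1) * dil p (cop Q) n := by
  by_cases h : p ∣ n
  · obtain ⟨k, rfl⟩ := h
    have h1 : dil p (cop Q) (p * k) = cop Q k := by
      simp [dil, Nat.mul_div_cancel_left k hp.pos]
    have h2 : cop Q (p * k) = cop Q k := by
      have : (∀ q ∈ Q, ¬ q ∣ p * k) ↔ (∀ q ∈ Q, ¬ q ∣ k) := by
        refine forall₂_congr fun q hq => ?_
        have : q.Coprime p := (Nat.coprime_primes (hQ q hq) hp).2 (fun h => hpQ (h ▸ hq))
        rw [this.dvd_mul_left]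
      simp only [cop, this]
    rw [h1, h2]
    have : cop (insert p Q) (p * k) = 0 := by simp [cop]
    rw [this]; ring
  · have : dil p (cop Q) n = 0 := by simp [dil, h]
    rw [this]
    simp [cop, h]

lemma good_cop (Q : Finset ℕ) (hQ : ∀ p ∈ Q, p.Prime) :
    ∃ ρ L, Good (cop Q) ρ L (fun s => (∏ p ∈ Q, (1 - (p:ℂ) ^ (-s))) * riemannZeta s) := by
  induction Q using Finset.induction_on with
  | empty =>
    refine ⟨1, 1, ?_⟩
    have : cop ∅ = fun _ => 1 := by ext n; simp [cop]
    rw [this]; simpa using good_zeta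
  | insert p Q hpQ ih =>
    obtain ⟨ρ, L, h⟩ := ih (fun q hq => hQ q (Finset.mem_insert_of_mem hq))
    have hp := hQ p (Finset.mem_insert_self _ _)
    have h2 := h.add ((h.dil hp.pos).smul (-1))
    refine ⟨ρ + -1 * (ρ / p), L + ‖(-1:ℂ)‖ * L, ?_⟩
    · convert h2 using 1
      · ext n; rw [cop_insert (fun q hq => hQ q (Finset.mem_insert_of_mem hq)) hp hpQ]
      · ext s; rw [Finset.prod_insert hpQ]; ring

/-- the prime-removed zeta, minus one -/
noncomputable def HH (Q : Finset ℕ) (s : ℂ) : ℂ :=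
  (∏ p ∈ Q, (1 - (p:ℂ) ^ (-s))) * riemannZeta s - 1

noncomputable def cop1 (Q : Finset ℕ) (n : ℕ) : ℂ := cop Q n + (-1) * (if n = 1 then 1 else 0)

lemma good_HH (Q : Finset ℕ) (hQ : ∀ p ∈ Q, p.Prime) :
    ∃ ρ L, Good (cop1 Q) ρ L (HH Q) := by
  obtain ⟨ρ, L, h⟩ := good_cop Q hQ
  have h2 := h.add (good_one.smul (-1))
  refine ⟨ρ + -1 * 0, L + ‖(-1:ℂ)‖ * 1, ?_⟩
  convert h2 using 1
  · rfl
  · ext s; simp only [HH]; ring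

lemma cop1_le (Q : Finset ℕ) (n : ℕ) (hQ : ∀ p ∈ Q, p.Prime) : ‖cop1 Q n‖ ≤ ‖cop Q n‖ ∧ ‖cop1 Q n‖ ≤ 1 := by
  by_cases h : n = 1
  · subst h
    have : cop Q 1 = 1 := by
      simp only [cop]; rw [if_pos]; intro p hp h1
      exact (hQ p hp).one_lt.ne' (Nat.dvd_one.1 h1)
    simp [cop1, this]
  · simp only [cop1, h, cop, if_false]; split_ifs <;> simp

lemma cop1_zero {M n : ℕ} (hn : n ≠ 0) (hM : n < M) :
    cop1 ((Finset.range M).filter Nat.Prime) n = 0 := by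
  by_cases h : n = 1
  · subst h
    have : cop ((Finset.range M).filter Nat.Prime) 1 = 1 := by
      simp only [cop]; rw [if_pos]; intro p hp h1
      exact (Finset.mem_filter.1 hp).2.one_lt.ne' (Nat.dvd_one.1 h1)
    simp [cop1, this]
  · obtain ⟨p, hp, hd⟩ := Nat.exists_prime_and_dvd h
    have : cop ((Finset.range M).filter Nat.Prime) n = 0 := by
      simp only [cop]; rw [if_neg]; push Not
      refine ⟨p, ?_, hd⟩
      simp only [Finset.mem_filter, Finset.mem_range]
      exact ⟨(Nat.le_of_dvd (Nat.pos_of_ne_zero hn) hd).trans_lt hM, hp⟩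
    simp [cop1, this, h]

def smooth (Q : Finset ℕ) (n : ℕ) : Prop := n ≠ 0 ∧ ∀ p, p.Prime → p ∣ n → p ∈ Q

lemma weight_expand (k : ℕ) (u : ℕ → ℂ) (hu : ∀ p, ‖u p‖ = 1) (Q : Finset ℕ) (hQ : ∀ p ∈ Q, p.Prime) :
    ∃ (F : Finset ℕ) (b : ℕ → ℂ), (∀ n ∈ F, smooth Q n) ∧ (∀ n, ‖b n‖ = 1) ∧ F.card = k ^ Q.card ∧
      ∀ s : ℂ, ∏ p ∈ Q, ∑ j ∈ Finset.range k, (u p * (p:ℂ) ^ (-s)) ^ j = ∑ n ∈ F, b n * (n:ℂ) ^ (-s) := by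
  classical
  induction Q using Finset.induction_on with
  | empty =>
    refine ⟨{1}, fun _ => 1, ?_, by simp, by simp, by simp⟩
    intro n hn
    rw [Finset.mem_singleton] at hn; subst hn
    exact ⟨one_ne_zero, fun p hp h => absurd (Nat.dvd_one.1 h) hp.one_lt.ne'⟩
  | insert p Q hpQ ih =>
    obtain ⟨F, b, h1, h2, h3, h4⟩ := ih (fun q hq => hQ q (Finset.mem_insert_of_mem hq))
    have hp := hQ p (Finset.mem_insert_self _ _)
    have hpn : ∀ n ∈ F, ¬ p ∣ n := fun n hn h => hpQ ((h1 n hn).2 p hp h)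
    have hval : ∀ n ∈ F, ∀ j, (n * p ^ j).factorization p = j := by
      intro n hn j
      rw [Nat.factorization_mul (h1 n hn).1 (pow_ne_zero _ hp.ne_zero), hp.factorization_pow]
      simp [Nat.factorization_eq_zero_of_not_dvd (hpn n hn)]
    have hdiv : ∀ n ∈ F, ∀ j, (n * p ^ j) / p ^ ((n * p ^ j).factorization p) = n := by
      intro n hn j
      rw [hval n hn j, Nat.mul_div_cancel _ (pow_pos hp.pos _)]
    have hinj : Set.InjOn (fun q : ℕ × ℕ => q.1 * p ^ q.2) (F ×ˢ Finset.range k : Finset (ℕ × ℕ)) := by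
      rintro ⟨n, j⟩ hn ⟨n', j'⟩ hn' h
      simp only [Finset.coe_product, Set.mem_prod, Finset.mem_coe] at hn hn'
      simp only at h
      have e1 := hval n hn.1 j
      have e2 := hdiv n hn.1 j
      rw [h, hval n' hn'.1 j'] at e1
      rw [h, hdiv n' hn'.1 j'] at e2
      rw [e1, e2]
    refine ⟨(F ×ˢ Finset.range k).image (fun q => q.1 * p ^ q.2),
      fun m => b (m / p ^ (m.factorization p)) * u p ^ (m.factorization p), ?_, ?_, ?_, ?_⟩
    · intro m hm
      obtain ⟨⟨n, j⟩, hq, rfl⟩ := Finset.mem_image.1 hm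
      have hn := (Finset.mem_product.1 hq).1
      refine ⟨mul_ne_zero (h1 n hn).1 (pow_ne_zero _ hp.ne_zero), ?_⟩
      intro q hq hd
      rcases (hq.dvd_mul).1 hd with h | h
      · exact Finset.mem_insert_of_mem ((h1 n hn).2 q hq h)
      · rw [(Nat.prime_dvd_prime_iff_eq hq hp).1 (hq.dvd_of_dvd_pow h)]
        exact Finset.mem_insert_self _ _
    · intro m; simp [h2, hu]
    · rw [Finset.card_image_of_injOn hinj, Finset.card_product, h3, Finset.card_range,
        Finset.card_insert_of_notMem hpQ, pow_succ]
    · intro s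
      rw [Finset.prod_insert hpQ, h4, mul_comm, Finset.sum_mul_sum, Finset.sum_image hinj, Finset.sum_product]
      refine Finset.sum_congr rfl fun n hn => Finset.sum_congr rfl fun j _ => ?_
      simp only
      rw [hdiv n hn j, hval n hn j]
      push_cast
      have : ((p:ℂ) ^ j) ^ (-s) = ((p:ℂ) ^ (-s)) ^ j := by
        rw [← Complex.cpow_nat_mul, ← Complex.natCast_cpow_natCast_mul]
      have h5 : ((n:ℂ) * (p:ℂ)^j) ^ (-s) = (n:ℂ) ^ (-s) * ((p:ℂ) ^ j) ^ (-s) := by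
        have := Complex.natCast_mul_natCast_cpow n (p^j) (-s)
        push_cast at this; exact this
      rw [h5, this, mul_pow]; ring
end Vor
end

section
open MeasureTheory Set Filter Topology
namespace Vor

lemma smooth_uniq {Q : Finset ℕ} {d d' n : ℕ} (h : smooth Q d) (h' : smooth Q d')
    (hd : d ∣ n) (hd' : d' ∣ n) (hn : cop Q (n / d) ≠ 0) (hn' : cop Q (n / d') ≠ 0) : d = d' := by
  have aux : ∀ {d d' : ℕ}, smooth Q d → smooth Q d' → d ∣ n → d' ∣ n → cop Q (n / d') ≠ 0 → d ∣ d' := by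
    intro d d' h h' hd hd' hn'
    have hc : ∀ p ∈ Q, ¬ p ∣ n / d' := by
      by_contra hc; exact hn' (by simp only [cop]; rw [if_neg hc])
    have : d.Coprime (n / d') := by
      apply Nat.Coprime.symm
      by_contra hg
      obtain ⟨p, hp, hp1, hp2⟩ := Nat.Prime.not_coprime_iff_dvd.1 hg
      exact hc p (h.2 p hp hp2) hp1
    apply this.dvd_of_dvd_mul_right
    rwa [Nat.mul_div_cancel' hd']
  exact Nat.dvd_antisymm (aux h h' hd hd' hn') (aux h' h hd' hd hn)

lemma norm_sum_sq_of_unique {ι : Type*} (F : Finset ι) (f : ι → ℂ)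
    (h : ∀ i ∈ F, ∀ j ∈ F, f i ≠ 0 → f j ≠ 0 → i = j) :
    ‖∑ i ∈ F, f i‖ ^ 2 = ∑ i ∈ F, ‖f i‖ ^ 2 := by
  by_cases hz : ∃ i ∈ F, f i ≠ 0
  · obtain ⟨i, hi, hfi⟩ := hz
    have h0 : ∀ j ∈ F, j ≠ i → f j = 0 := by
      intro j hj hji; by_contra hc; exact hji (h j hj i hi hc hfi)
    rw [Finset.sum_eq_single_of_mem i hi h0, Finset.sum_eq_single_of_mem i hi]
    intro j hj hji; simp [h0 j hj hji]
  · push Not at hz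
    rw [Finset.sum_eq_zero hz, Finset.sum_eq_zero]
    · simp
    · intro j hj; simp [hz j hj]

lemma dil_sum_le {d : ℕ} (hd : 0 < d) (a : ℕ → ℂ) (σ : ℝ) {S : ℝ}
    (hS : ∀ N : ℕ, ∑ n ∈ Finset.Icc 1 N, ‖a n‖ ^ 2 * (n:ℝ) ^ (-(2 * σ)) ≤ S) (N : ℕ) :
    ∑ n ∈ Finset.Icc 1 N, (d:ℝ) ^ (2 * σ) * ‖dil d a n‖ ^ 2 * (n:ℝ) ^ (-(2 * σ)) ≤ S := by
  have hd' : (0:ℝ) < d := by exact_mod_cast hd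
  refine le_trans (le_of_eq ?_) (hS (N / d))
  have : ∀ n, (d:ℝ) ^ (2 * σ) * ‖dil d a n‖ ^ 2 * (n:ℝ) ^ (-(2 * σ)) = 
     if d ∣ n then ‖a (n/d)‖ ^ 2 * ((n/d : ℕ):ℝ) ^ (-(2 * σ)) else 0 := by
    intro n
    by_cases h : d ∣ n
    · obtain ⟨k, rfl⟩ := h
      rw [if_pos (Dvd.intro k rfl)]
      simp only [dil, Dvd.intro k rfl, if_true, Nat.mul_div_cancel_left k hd]
      push_cast
      rw [Real.mul_rpow (by positivity) (by positivity), Real.rpow_neg (x := (d:ℝ)) (by positivity)]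
      field_simp
    · simp [dil, h]
  simp_rw [this]
  rw [← Finset.sum_filter]
  symm
  apply Finset.sum_bij (fun m _ => d * m)
  · intro m hm
    simp only [Finset.mem_Icc, Finset.mem_filter] at hm ⊢
    refine ⟨⟨Nat.mul_pos hd hm.1, ?_⟩, Dvd.intro m rfl⟩
    rw [mul_comm]; exact (Nat.le_div_iff_mul_le hd).1 hm.2
  · intro a _ b _ h; exact Nat.eq_of_mul_eq_mul_left hd h
  · intro n hn
    simp only [Finset.mem_Icc, Finset.mem_filter] at hn
    obtain ⟨k, rfl⟩ := hn.2
    refine ⟨k, ?_, rfl⟩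
    rw [Finset.mem_Icc]
    refine ⟨?_, ?_⟩
    · rcases Nat.eq_zero_or_pos k with rfl | h
      · simp at hn
      · exact h
    · rw [Nat.le_div_iff_mul_le hd, mul_comm]; exact hn.1.2
  · intro m _; rw [Nat.mul_div_cancel_left m hd]

/-- the weight -/
noncomputable def ww (k : ℕ) (u : ℕ → ℂ) (Q : Finset ℕ) (τ : ℝ) : ℂ :=
  ∏ p ∈ Q, ∑ j ∈ Finset.range k, (u p * (p:ℂ) ^ (-(τ * Complex.I))) ^ j

lemma mv_weight (k : ℕ) (u : ℕ → ℂ) (hu : ∀ p, ‖u p‖ = 1) (Q : Finset ℕ) (hQ : ∀ p ∈ Q, p.Prime) :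
    ∃ L : ℝ, ∀ s' : ℂ, 1/2 < s'.re → s'.re < 1 → ‖s'‖ ≤ 2 → ∀ S : ℝ,
      (∀ N : ℕ, ∑ n ∈ Finset.Icc 1 N, ‖cop1 Q n‖ ^ 2 * (n:ℝ) ^ (-(2 * s'.re)) ≤ S) →
      ∀ T : ℝ, 2 ≤ T → ∫ τ in Icc (-T) T, ‖ww k u Q τ * HH Q (s' + τ * Complex.I)‖ ^ 2
      ≤ 1280 * (T * (k ^ Q.card * S) + (4 + 1 / (1 - s'.re)) * L ^ 2 * T ^ (2 - 2 * s'.re)) := by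
  obtain ⟨F, b, h1, h2, h3, h4⟩ := weight_expand k u hu Q hQ
  obtain ⟨ρ, L, hG⟩ := good_HH Q hQ
  refine ⟨∑ d ∈ F, (d:ℝ) * L, ?_⟩
  intro s' hσ hσ1 hs2 S hS T hT
  have hFpos : ∀ d ∈ F, 0 < d := fun d hd => Nat.pos_of_ne_zero (h1 d hd).1
  have hg : ∀ d ∈ F, Good (fun n => (b d * (d:ℂ) ^ s') * dil d (cop1 Q) n) ((b d * (d:ℂ) ^ s') * (ρ / d))
      ((d:ℝ) * L) (fun s => (b d * (d:ℂ) ^ s') * ((d:ℂ) ^ (-s) * HH Q s)) := by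
    intro d hd
    apply ((hG.dil (hFpos d hd)).smul (b d * (d:ℂ) ^ s')).mono
    apply mul_le_mul_of_nonneg_right _ hG.L_nonneg
    rw [norm_mul, h2, one_mul, Complex.norm_natCast_cpow_of_pos (hFpos d hd)]
    calc (d:ℝ) ^ s'.re ≤ (d:ℝ) ^ (1:ℝ) := by
          apply Real.rpow_le_rpow_of_exponent_le _ hσ1.le
          exact_mod_cast hFpos d hd
      _ = d := Real.rpow_one _
  have hgood := good_sum F _ _ _ _ hg
  have hk := key hgood hσ hσ1 hs2 (S := k ^ Q.card * S) ?_ hT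
  · refine le_trans (le_of_eq ?_) hk
    congr 1
    ext τ
    congr 2
    rw [ww, h4 (τ * Complex.I), Finset.sum_mul]
    refine Finset.sum_congr rfl fun d hd => ?_
    have hd0 : (d:ℂ) ≠ 0 := by exact_mod_cast (h1 d hd).1
    have : (d:ℂ) ^ (-(s' + τ * Complex.I)) = (d:ℂ) ^ (-s') * (d:ℂ) ^ (-(τ * Complex.I)) := by
      rw [← Complex.cpow_add _ _ hd0]; congr 1; ring
    rw [this, Complex.cpow_neg _ s']
    have : (d:ℂ) ^ s' ≠ 0 := by simp [Complex.cpow_eq_zero_iff, hd0]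
    field_simp
  · intro N
    have hc : ∀ n, ‖∑ d ∈ F, (b d * (d:ℂ) ^ s') * dil d (cop1 Q) n‖ ^ 2 =
        ∑ d ∈ F, (d:ℝ) ^ (2 * s'.re) * ‖dil d (cop1 Q) n‖ ^ 2 := by
      intro n
      rw [norm_sum_sq_of_unique]
      · refine Finset.sum_congr rfl fun d hd => ?_
        rw [norm_mul, norm_mul, h2, one_mul, Complex.norm_natCast_cpow_of_pos (hFpos d hd), mul_pow,
          ← Real.rpow_mul_natCast (by positivity)]
        congr 2; push_cast; ring
      · intro d hd d' hd' hne hne'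
        have e := right_ne_zero_of_mul hne
        have e' := right_ne_zero_of_mul hne'
        have aux : ∀ d, dil d (cop1 Q) n ≠ 0 → d ∣ n ∧ cop Q (n / d) ≠ 0 := by
          intro d hd
          by_cases hdn : d ∣ n
          · refine ⟨hdn, ?_⟩
            simp only [dil, hdn, if_true] at hd
            intro h0
            have := (cop1_le Q (n/d) hQ).1
            rw [h0, norm_zero] at this
            exact hd (norm_le_zero_iff.1 this)
          · simp [dil, hdn] at hd
        exact smooth_uniq (h1 d hd) (h1 d' hd') (aux d e).1 (aux d' e').1 (aux d e).2 (aux d' e').2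
    simp_rw [hc, Finset.sum_mul]
    rw [Finset.sum_comm]
    calc _ ≤ ∑ d ∈ F, S := Finset.sum_le_sum fun d hd => dil_sum_le (hFpos d hd) _ _ hS N
      _ = _ := by rw [Finset.sum_const, h3, nsmul_eq_mul]; push_cast; rfl

/-! mean of the weight -/
lemma mean_exp (α : ℝ) : Tendsto (fun T : ℝ => ((2 * T : ℝ) : ℂ)⁻¹ * ∫ τ in Icc (-T) T, Complex.exp (α * τ * Complex.I))
    atTop (𝓝 (if α = 0 then 1 else 0)) := by
  by_cases h : α = 0
  · subst h
    simp only [if_true]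
    apply tendsto_const_nhds.congr'
    filter_upwards [eventually_gt_atTop 0] with T hT
    have : (2 * (T:ℂ)) ≠ 0 := by exact_mod_cast (by positivity : 2 * T ≠ 0)
    simp
    rw [max_eq_left (by linarith)]
    have hT' : (T:ℂ) ≠ 0 := by exact_mod_cast hT.ne'
    push_cast; field_simp; ring
  · simp only [h, if_false]
    rw [tendsto_zero_iff_norm_tendsto_zero]
    have hα : 0 < |α| := abs_pos.2 h
    have hb : ∀ T : ℝ, 0 < T → ‖((2 * T : ℝ) : ℂ)⁻¹ * ∫ τ in Icc (-T) T, Complex.exp (α * τ * Complex.I)‖ ≤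
       |α|⁻¹ * T⁻¹ := by
      intro T hT
      rw [integral_Icc_eq_integral_Ioc, ← intervalIntegral.integral_of_le (by linarith)]
      have hc : (α * Complex.I : ℂ) ≠ 0 := by simp [h]
      have := integral_exp_mul_complex (a := -T) (b := T) hc
      have e : ∀ τ : ℝ, Complex.exp (α * τ * Complex.I) = Complex.exp (α * Complex.I * τ) := by
        intro τ; congr 1; ring
      simp_rw [e]
      rw [this, norm_mul, norm_inv, norm_div, Complex.norm_real, Real.norm_eq_abs, abs_of_pos (by positivity)]
      have hn : ∀ T : ℝ, ‖Complex.exp (α * Complex.I * T)‖ = 1 := by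
        intro T
        rw [show (α * Complex.I * T : ℂ) = ((α * T : ℝ):ℂ) * Complex.I by push_cast; ring, Complex.norm_exp_ofReal_mul_I]
      have h2 : ‖Complex.exp (α * Complex.I * T) - Complex.exp (α * Complex.I * (-T : ℝ))‖ ≤ 2 := by
        refine (norm_sub_le _ _).trans ?_
        rw [hn, hn]; norm_num
      have h3 : ‖(α * Complex.I : ℂ)‖ = |α| := by simp
      rw [h3]
      calc _ ≤ (2 * T)⁻¹ * (2 / |α|) := by gcongr
        _ = _ := by field_simp
    refine squeeze_zero' (Eventually.of_forall fun _ => norm_nonneg _) (g := fun T => |α|⁻¹ * T⁻¹) ?_ ?_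
    · filter_upwards [eventually_gt_atTop 0] with T hT using hb T hT
    · simpa using tendsto_inv_atTop_zero.const_mul (|α|⁻¹)

lemma mean_weight (k : ℕ) (u : ℕ → ℂ) (hu : ∀ p, ‖u p‖ = 1) (Q : Finset ℕ) (hQ : ∀ p ∈ Q, p.Prime) :
    Tendsto (fun T : ℝ => (2 * T)⁻¹ * ∫ τ in Icc (-T) T, ‖ww k u Q τ‖ ^ 2) atTop (𝓝 ((k:ℝ) ^ Q.card)) := by
  obtain ⟨F, b, h1, h2, h3, h4⟩ := weight_expand k u hu Q hQ
  have hexp : ∀ d ∈ F, ∀ τ : ℝ, (d:ℂ) ^ (-(τ * Complex.I)) = Complex.exp (-(Real.log d : ℝ) * τ * Complex.I) := by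
    intro d hd τ
    have hd0 : (d:ℂ) ≠ 0 := by exact_mod_cast (h1 d hd).1
    rw [Complex.cpow_def_of_ne_zero hd0, ← Complex.natCast_log]; congr 1; ring
  have hw : ∀ τ : ℝ, ((‖ww k u Q τ‖ ^ 2 : ℝ) : ℂ) = ∑ d ∈ F, ∑ e ∈ F, b d * (starRingEnd ℂ) (b e) *
      Complex.exp ((Real.log e - Real.log d : ℝ) * τ * Complex.I) := by
    intro τ
    have : ww k u Q τ = ∑ d ∈ F, b d * Complex.exp (-(Real.log d : ℝ) * τ * Complex.I) := by
      rw [ww, h4 (τ * Complex.I)]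
      exact Finset.sum_congr rfl fun d hd => by rw [hexp d hd]
    push_cast
    rw [← Complex.mul_conj', this, map_sum, Finset.sum_mul_sum]
    refine Finset.sum_congr rfl fun d hd => Finset.sum_congr rfl fun e he => ?_
    rw [map_mul, ← Complex.exp_conj]
    simp only [map_mul, map_neg, Complex.conj_ofReal, Complex.conj_I]
    rw [mul_mul_mul_comm, ← Complex.exp_add]
    congr 2; push_cast; ring
  have key : Tendsto (fun T : ℝ => ((2 * T : ℝ) : ℂ)⁻¹ * ∫ τ in Icc (-T) T, ((‖ww k u Q τ‖ ^ 2 : ℝ) : ℂ)) atTop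
      (𝓝 (((k:ℝ) ^ Q.card : ℝ) : ℂ)) := by
    have e : ∀ T : ℝ, ((2 * T : ℝ) : ℂ)⁻¹ * ∫ τ in Icc (-T) T, ((‖ww k u Q τ‖ ^ 2 : ℝ) : ℂ) =
       ∑ d ∈ F, ∑ e ∈ F, b d * (starRingEnd ℂ) (b e) * (((2 * T : ℝ) : ℂ)⁻¹ * ∫ τ in Icc (-T) T, 
          Complex.exp ((Real.log e - Real.log d : ℝ) * τ * Complex.I)) := by
      intro T
      simp_rw [hw]
      have hi : ∀ d e, Integrable (fun τ : ℝ => b d * (starRingEnd ℂ) (b e) *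
          Complex.exp ((Real.log e - Real.log d : ℝ) * τ * Complex.I)) (volume.restrict (Icc (-T) T)) := by
        intro d e
        exact Continuous.integrableOn_Icc (by fun_prop)
      rw [integral_finsetSum _ (fun d _ => integrable_finsetSum _ fun e _ => hi d e), Finset.mul_sum]
      refine Finset.sum_congr rfl fun d hd => ?_
      rw [integral_finsetSum _ (fun e _ => hi d e), Finset.mul_sum]
      refine Finset.sum_congr rfl fun e he => ?_
      rw [integral_const_mul]; ring
    simp_rw [e]
    have hlim : (((k:ℝ) ^ Q.card : ℝ) : ℂ) = ∑ d ∈ F, ∑ e ∈ F, b d * (starRingEnd ℂ) (b e) *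
        (if Real.log e - Real.log d = 0 then 1 else 0) := by
      have : ∀ d ∈ F, ∑ e ∈ F, b d * (starRingEnd ℂ) (b e) *
        (if Real.log e - Real.log d = 0 then 1 else 0) = 1 := by
        intro d hd
        rw [Finset.sum_eq_single_of_mem d hd]
        · simp [Complex.mul_conj', h2]
        · intro e he hne
          have : Real.log e - Real.log d ≠ 0 := by
            intro h
            have h0 : (0:ℝ) < e := by exact_mod_cast Nat.pos_of_ne_zero (h1 e he).1
            have h0' : (0:ℝ) < d := by exact_mod_cast Nat.pos_of_ne_zero (h1 d hd).1
            have := Real.log_injOn_pos h0 h0' (sub_eq_zero.1 h)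
            exact hne (by exact_mod_cast this)
          simp [this]
      rw [Finset.sum_congr rfl this, Finset.sum_const, h3]; simp
    rw [hlim]
    refine tendsto_finsetSum _ fun d _ => tendsto_finsetSum _ fun e _ => ?_
    exact (mean_exp _).const_mul _
  have := (Complex.continuous_re.tendsto _).comp key
  refine this.congr fun T => ?_
  simp only [Function.comp]
  rw [integral_complex_ofReal, ← Complex.ofReal_inv, ← Complex.ofReal_mul]
  rfl
end Vor
end

section
open MeasureTheory Set Filter Topology
namespace Vor

lemma tail_small (a : ℝ) (ha : 1 < a) {ε : ℝ} (hε : 0 < ε) : ∃ M0 : ℕ, ∀ M ≥ M0, ∀ N : ℕ,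
    ∑ n ∈ (Finset.Icc 1 N).filter (fun n => M ≤ n), (n:ℝ) ^ (-a) ≤ ε := by
  have hs : Summable (fun n : ℕ => (n:ℝ) ^ (-a)) := Real.summable_nat_rpow.2 (by linarith)
  obtain ⟨s, hs⟩ := summable_iff_vanishing_norm.1 hs ε hε
  refine ⟨s.sup id + 1, fun M hM N => ?_⟩
  have := hs ((Finset.Icc 1 N).filter (fun n => M ≤ n)) ?_
  · exact (le_abs_self _).trans this.le
  · rw [Finset.disjoint_left]
    intro n hn hns
    have h1 := (Finset.mem_filter.1 hn).2
    have h2 : n ≤ s.sup id := Finset.le_sup (f := id) hns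
    omega

abbrev PP (M : ℕ) : Finset ℕ := (Finset.range M).filter Nat.Prime

lemma PP_prime {M : ℕ} : ∀ p ∈ PP M, p.Prime := fun _ hp => (Finset.mem_filter.1 hp).2

lemma cop1_sum_le {M : ℕ} {σ0 σ : ℝ} (h : σ0 ≤ σ) {S : ℝ}
    (hS : ∀ N : ℕ, ∑ n ∈ (Finset.Icc 1 N).filter (fun n => M ≤ n), (n:ℝ) ^ (-(2*σ0)) ≤ S) (N : ℕ) :
    ∑ n ∈ Finset.Icc 1 N, ‖cop1 (PP M) n‖ ^ 2 * (n:ℝ) ^ (-(2 * σ)) ≤ S := by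
  refine le_trans ?_ (hS N)
  rw [Finset.sum_filter]
  refine Finset.sum_le_sum fun n hn => ?_
  have hn1 := (Finset.mem_Icc.1 hn).1
  split_ifs with hM
  · calc _ ≤ (1:ℝ) ^ 2 * (n:ℝ) ^ (-(2*σ0)) := by
          gcongr
          · exact (cop1_le _ n PP_prime).2
          · exact_mod_cast hn1
      _ = _ := by ring
  · rw [cop1_zero (by omega) (by omega)]; simp

lemma cpow_tau_cont (p : ℕ) (hp : p.Prime) : Continuous (fun τ : ℝ => (p:ℂ) ^ (-(τ * Complex.I))) := by
  have hp0 : (p:ℂ) ≠ 0 := by exact_mod_cast hp.ne_zero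
  simp_rw [Complex.cpow_def_of_ne_zero hp0]
  fun_prop

lemma ww_cont (k : ℕ) (u : ℕ → ℂ) (Q : Finset ℕ) (hQ : ∀ p ∈ Q, p.Prime) : Continuous (ww k u Q) := by
  unfold ww
  refine continuous_finsetProd _ fun p hp => continuous_finsetSum _ fun j _ => ?_
  exact (continuous_const.mul (cpow_tau_cont p (hQ p hp))).pow j

lemma HH_diff (Q : Finset ℕ) (hQ : ∀ p ∈ Q, p.Prime) {s : ℂ} (hs : s ≠ 1) : DifferentiableAt ℂ (HH Q) s := by
  unfold HH
  refine DifferentiableAt.sub_const (DifferentiableAt.mul ?_ (differentiableAt_riemannZeta hs)) _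
  refine DifferentiableAt.fun_finsetProd fun p hp => ?_
  have hp0 : (p:ℂ) ≠ 0 := by exact_mod_cast (hQ p hp).ne_zero
  refine DifferentiableAt.const_sub ?_ _
  exact DifferentiableAt.const_cpow differentiableAt_id.neg (Or.inl hp0)

lemma circ_re (x r φ : ℝ) (hr : 0 < r) : x - r ≤ (circleMap (x:ℂ) r φ).re ∧ (circleMap (x:ℂ) r φ).re ≤ x + r := by
  have h := Complex.abs_re_le_norm (circleMap (x:ℂ) r φ - x)
  have : ‖circleMap (x:ℂ) r φ - x‖ = r := by simp [circleMap, abs_of_pos hr]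
  rw [this, abs_le, Complex.sub_re, Complex.ofReal_re] at h
  constructor <;> linarith [h.1, h.2]

lemma HH_circ_cont (Q : Finset ℕ) (hQ : ∀ p ∈ Q, p.Prime) {x r : ℝ} (hr : 0 < r) (h1 : x + r < 1) :
    Continuous (fun q : ℝ × ℝ => HH Q (circleMap (x:ℂ) r q.2 + q.1 * Complex.I)) := by
  rw [continuous_iff_continuousAt]
  rintro ⟨τ, φ⟩
  have hs : circleMap (x:ℂ) r φ + τ * Complex.I ≠ 1 := by
    intro h
    have := congrArg Complex.re h
    have h2 := (circ_re x r φ hr).2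
    simp only [Complex.add_re, Complex.mul_re, Complex.ofReal_re, Complex.I_re, Complex.ofReal_im, Complex.I_im, Complex.one_re] at this
    linarith
  have hc : Continuous (fun q : ℝ × ℝ => circleMap (x:ℂ) r q.2 + q.1 * Complex.I) := by
    have := continuous_circleMap (x:ℂ) r
    fun_prop
  exact ContinuousAt.comp (f := fun q : ℝ × ℝ => circleMap (x:ℂ) r q.2 + q.1 * Complex.I) (g := HH Q)
    (HH_diff Q hQ hs).continuousAt hc.continuousAt

theorem exists_tau {x r : ℝ} (hr : 0 < r) (h0 : 1/2 < x - r) (h1 : x + r < 1) {ε : ℝ} (hε : 0 < ε) :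
    ∃ M0 : ℕ, ∀ M ≥ M0, ∀ z : ℕ → ℂ, (∀ p, ‖z p‖ = 1) → ∀ δ > 0, ∃ τ : ℝ,
      (∀ p ∈ PP M, ‖(p:ℂ) ^ (-(τ * Complex.I)) - z p‖ < δ) ∧
      ∫ φ in Icc 0 (2 * Real.pi), ‖HH (PP M) (circleMap (x:ℂ) r φ + τ * Complex.I)‖ ^ 2 < ε := by
  have hpi := Real.pi_pos
  set S : ℝ := ε / (8000 * Real.pi) with hS
  have hSpos : 0 < S := by positivity
  obtain ⟨M0, hM0⟩ := tail_small (2 * (x - r)) (by linarith) hSpos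
  refine ⟨M0, fun M hM z hz δ hδ => ?_⟩
  have htail := hM0 M hM
  set Q := PP M with hQdef
  have hQ : ∀ p ∈ Q, p.Prime := PP_prime
  by_contra hcon
  push Not at hcon
  set u : ℕ → ℂ := fun p => (starRingEnd ℂ) (z p) with hu
  have hu1 : ∀ p, ‖u p‖ = 1 := by intro p; simp [hu, hz]
  have huz : ∀ p, u p * z p = 1 := by
    intro p; simp only [hu]; rw [mul_comm, Complex.mul_conj', hz]; simp
  -- choose k
  obtain ⟨k, hk⟩ := exists_nat_gt (16 * Q.card / δ ^ 2)
  have hkpos : (0:ℝ) < k := lt_of_le_of_lt (by positivity) hk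
  obtain ⟨L, hL⟩ := mv_weight k u hu1 Q hQ
  set w := ww k u Q with hw
  have hwc : Continuous w := ww_cont k u Q hQ
  set I : ℝ → ℝ := fun τ => ∫ φ in Icc 0 (2 * Real.pi), ‖HH Q (circleMap (x:ℂ) r φ + τ * Complex.I)‖ ^ 2 with hI
  set P : ℝ → ℝ := fun τ => ∑ p ∈ Q, ‖u p * (p:ℂ) ^ (-(τ * Complex.I)) - 1‖ ^ 2 with hP
  have hHc := HH_circ_cont Q hQ hr h1
  have hIc : Continuous I := by
    have : Continuous (Function.uncurry fun τ φ : ℝ => ‖HH Q (circleMap (x:ℂ) r φ + τ * Complex.I)‖ ^ 2) :=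
      (hHc.norm.pow 2)
    exact continuous_parametric_integral_of_continuous this isCompact_Icc
  have hPc : Continuous P := by
    refine continuous_finsetSum _ fun p hp => ?_
    exact (((continuous_const.mul (cpow_tau_cont p (hQ p hp))).sub continuous_const).norm).pow 2
  have hI0 : ∀ τ, 0 ≤ I τ := fun τ => integral_nonneg fun φ => by positivity
  have hP0 : ∀ τ, 0 ≤ P τ := fun τ => Finset.sum_nonneg fun φ _ => by positivity
  have hpt : ∀ τ, 1 ≤ I τ / ε + P τ / δ ^ 2 := by
    intro τ
    by_cases hc : ∀ p ∈ Q, ‖(p:ℂ) ^ (-(τ * Complex.I)) - z p‖ < δ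
    · have := hcon τ hc
      have h2 : 1 ≤ I τ / ε := by rw [le_div_iff₀ hε, one_mul]; exact this
      have : 0 ≤ P τ / δ ^ 2 := div_nonneg (hP0 τ) (by positivity)
      linarith
    · push Not at hc
      obtain ⟨p, hp, hpd⟩ := hc
      have h2 : ‖u p * (p:ℂ) ^ (-(τ * Complex.I)) - 1‖ = ‖(p:ℂ) ^ (-(τ * Complex.I)) - z p‖ := by
        rw [← huz p, ← mul_sub, norm_mul, hu1, one_mul]
      have h3 : δ ^ 2 ≤ P τ := by
        calc δ ^ 2 ≤ ‖u p * (p:ℂ) ^ (-(τ * Complex.I)) - 1‖ ^ 2 := by rw [h2]; gcongr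
          _ ≤ P τ := Finset.single_le_sum (f := fun p => ‖u p * (p:ℂ) ^ (-(τ * Complex.I)) - 1‖ ^ 2)
              (fun p _ => by positivity) hp
      have h4 : 1 ≤ P τ / δ ^ 2 := by rw [le_div_iff₀ (by positivity), one_mul]; exact h3
      have : 0 ≤ I τ / ε := div_nonneg (hI0 τ) hε.le
      linarith
  -- bound for the I-part
  set K : ℝ := (4 + 1 / (1 - (x + r))) * L ^ 2 with hK
  have hIbound : ∀ T : ℝ, 2 ≤ T → ∫ τ in Icc (-T) T, ‖w τ‖ ^ 2 * I τ ≤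
      (2 * Real.pi) * (1280 * (T * (k ^ Q.card * S) + K * T ^ (2 - 2 * (x - r)))) := by
    intro T hT
    have e1 : ∀ τ, ‖w τ‖ ^ 2 * I τ = ∫ φ in Icc 0 (2 * Real.pi), ‖w τ * HH Q (circleMap (x:ℂ) r φ + τ * Complex.I)‖ ^ 2 := by
      intro τ
      rw [hI, ← integral_const_mul]
      congr 1; ext φ; rw [norm_mul, mul_pow]
    simp_rw [e1]
    rw [integral_integral_swap]
    · have hb : ∀ φ : ℝ, ∫ τ in Icc (-T) T, ‖w τ * HH Q (circleMap (x:ℂ) r φ + τ * Complex.I)‖ ^ 2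
          ≤ 1280 * (T * (k ^ Q.card * S) + K * T ^ (2 - 2 * (x - r))) := by
        intro φ
        obtain ⟨c1, c2⟩ := circ_re x r φ hr
        have hn : ‖circleMap (x:ℂ) r φ‖ ≤ 2 := by
          have := norm_add_le (x:ℂ) (r * Complex.exp (φ * Complex.I))
          rw [norm_mul, Complex.norm_exp_ofReal_mul_I, Complex.norm_real, Complex.norm_real, Real.norm_eq_abs,
            Real.norm_eq_abs, abs_of_pos hr, abs_of_pos (by linarith)] at this
          simp only [circleMap]; linarith
        refine (hL (circleMap (x:ℂ) r φ) (by linarith) (by linarith) hn S (cop1_sum_le c1 htail) T hT).trans ?_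
        have hT1 : T ^ (2 - 2 * (circleMap (x:ℂ) r φ).re) ≤ T ^ (2 - 2 * (x - r)) :=
          Real.rpow_le_rpow_of_exponent_le (by linarith) (by linarith)
        have h5 : 1 / (1 - (circleMap (x:ℂ) r φ).re) ≤ 1 / (1 - (x + r)) :=
          one_div_le_one_div_of_le (by linarith) (by linarith)
        have h6 : 0 ≤ 1 / (1 - (circleMap (x:ℂ) r φ).re) := by apply one_div_nonneg.2; linarith
        rw [hK]
        gcongr
      calc _ ≤ ∫ φ in Icc 0 (2 * Real.pi), (1280 * (T * (k ^ Q.card * S) + K * T ^ (2 - 2 * (x - r)))) := by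
            apply integral_mono_of_nonneg
            · filter_upwards with φ; exact integral_nonneg fun τ => by positivity
            · exact integrableOn_const (isCompact_Icc.measure_lt_top.ne)
            · filter_upwards with φ; exact hb φ
        _ = _ := by simp [hpi.le]
    · rw [Measure.prod_restrict]
      have : Continuous (Function.uncurry fun (τ φ : ℝ) => ‖w τ * HH Q (circleMap (x:ℂ) r φ + τ * Complex.I)‖ ^ 2) := by
        exact ((hwc.comp continuous_fst).mul hHc).norm.pow 2
      exact (this.continuousOn).integrableOn_compact (isCompact_Icc.prod isCompact_Icc)
  -- P part
  have hPbound : ∀ T : ℝ, ∫ τ in Icc (-T) T, ‖w τ‖ ^ 2 * P τ ≤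
      ∑ p ∈ Q, 4 * ∫ τ in Icc (-T) T, ‖ww k u (Q.erase p) τ‖ ^ 2 := by
    intro T
    have hq : ∀ p, ∀ q ∈ Q.erase p, q.Prime := fun p q hq => hQ q (Finset.mem_of_mem_erase hq)
    simp_rw [← integral_const_mul]
    rw [← integral_finsetSum]
    · apply integral_mono
      · exact ((hwc.norm.pow 2).mul hPc).integrableOn_Icc
      · exact integrable_finsetSum _ fun p _ => (((ww_cont k u _ (hq p)).norm.pow 2).const_mul 4).integrableOn_Icc
      · intro τ
        simp only [hP, Finset.mul_sum]
        refine Finset.sum_le_sum fun p hp => ?_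
        have hwp : w τ = (∑ j ∈ Finset.range k, (u p * (p:ℂ) ^ (-(τ * Complex.I))) ^ j) * ww k u (Q.erase p) τ := by
          rw [hw, ww, ww, Finset.mul_prod_erase Q (fun p => ∑ j ∈ Finset.range k, (u p * (p:ℂ) ^ (-(τ * Complex.I))) ^ j) hp]
        set Z := u p * (p:ℂ) ^ (-(τ * Complex.I)) with hZ
        have hZ1 : ‖Z‖ = 1 := by
          rw [hZ, norm_mul, hu1, one_mul, Complex.norm_natCast_cpow_of_pos (hQ p hp).pos]; simp
        have h7 : ‖w τ‖ * ‖Z - 1‖ ≤ 2 * ‖ww k u (Q.erase p) τ‖ := by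
          rw [← norm_mul, hwp, mul_right_comm, geom_sum_mul, norm_mul]
          gcongr
          refine (norm_sub_le _ _).trans ?_
          rw [norm_pow, hZ1]; norm_num
        calc _ = (‖w τ‖ * ‖Z - 1‖) ^ 2 := by ring
          _ ≤ (2 * ‖ww k u (Q.erase p) τ‖) ^ 2 := by gcongr
          _ = _ := by ring
    · intro p _
      exact (((ww_cont k u _ (hq p)).norm.pow 2).const_mul 4).integrableOn_Icc
  -- combine
  have hcomb : ∀ T : ℝ, 2 ≤ T → (2 * T)⁻¹ * ∫ τ in Icc (-T) T, ‖w τ‖ ^ 2 ≤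
      (2 * Real.pi) * 640 / ε * (k ^ Q.card * S + K * T ^ (1 - 2 * (x - r))) +
      (∑ p ∈ Q, 4 * ((2 * T)⁻¹ * ∫ τ in Icc (-T) T, ‖ww k u (Q.erase p) τ‖ ^ 2)) / δ ^ 2 := by
    intro T hT
    have hT0 : 0 < T := by linarith
    have hi1 : IntegrableOn (fun τ => ‖w τ‖ ^ 2 * I τ) (Icc (-T) T) := ((hwc.norm.pow 2).mul hIc).integrableOn_Icc
    have hi2 : IntegrableOn (fun τ => ‖w τ‖ ^ 2 * P τ) (Icc (-T) T) := ((hwc.norm.pow 2).mul hPc).integrableOn_Icc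
    have h8 : ∫ τ in Icc (-T) T, ‖w τ‖ ^ 2 ≤ (∫ τ in Icc (-T) T, ‖w τ‖ ^ 2 * I τ) / ε
        + (∫ τ in Icc (-T) T, ‖w τ‖ ^ 2 * P τ) / δ ^ 2 := by
      rw [← integral_div, ← integral_div, ← integral_add (hi1.div_const _) (hi2.div_const _)]
      apply integral_mono
      · exact (hwc.norm.pow 2).integrableOn_Icc
      · exact (hi1.div_const _).add (hi2.div_const _)
      · intro τ
        have := mul_le_mul_of_nonneg_left (hpt τ) (sq_nonneg ‖w τ‖)
        calc ‖w τ‖ ^ 2 = ‖w τ‖ ^ 2 * 1 := by ring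
          _ ≤ _ := this
          _ = _ := by ring
    have h9 := hIbound T hT
    have h10 := hPbound T
    have hTT : T ^ (2 - 2 * (x - r)) = T * T ^ (1 - 2 * (x - r)) := by
      rw [show 2 - 2 * (x - r) = 1 + (1 - 2 * (x - r)) by ring, Real.rpow_add hT0, Real.rpow_one]
    rw [hTT] at h9
    calc _ ≤ (2 * T)⁻¹ * (((2 * Real.pi) * (1280 * (T * (k ^ Q.card * S) + K * (T * T ^ (1 - 2 * (x - r)))))) / ε +
        (∑ p ∈ Q, 4 * ∫ τ in Icc (-T) T, ‖ww k u (Q.erase p) τ‖ ^ 2) / δ ^ 2) := by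
          refine mul_le_mul_of_nonneg_left (h8.trans ?_) (by positivity)
          gcongr
      _ = _ := by
          have : (∑ p ∈ Q, 4 * ((2 * T)⁻¹ * ∫ τ in Icc (-T) T, ‖ww k u (Q.erase p) τ‖ ^ 2)) =
            (2 * T)⁻¹ * (∑ p ∈ Q, 4 * ∫ τ in Icc (-T) T, ‖ww k u (Q.erase p) τ‖ ^ 2) := by
            rw [Finset.mul_sum]; exact Finset.sum_congr rfl fun p _ => by ring
          rw [this]
          field_simp
          ring
  have hlim1 := mean_weight k u hu1 Q hQ
  have hlim2 : Tendsto (fun T : ℝ => (2 * Real.pi) * 640 / ε * (k ^ Q.card * S + K * T ^ (1 - 2 * (x - r))) +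
      (∑ p ∈ Q, 4 * ((2 * T)⁻¹ * ∫ τ in Icc (-T) T, ‖ww k u (Q.erase p) τ‖ ^ 2)) / δ ^ 2) atTop
      (𝓝 ((2 * Real.pi) * 640 / ε * (k ^ Q.card * S + K * 0) + (∑ p ∈ Q, 4 * (k:ℝ) ^ (Q.erase p).card) / δ ^ 2)) := by
    refine Tendsto.add (Tendsto.const_mul _ (tendsto_const_nhds.add (Tendsto.const_mul _ ?_))) (Tendsto.div_const ?_ _)
    · have := tendsto_rpow_neg_atTop (y := 2 * (x - r) - 1) (by linarith)
      simpa using this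
    · refine tendsto_finsetSum _ fun p _ => Tendsto.const_mul _ ?_
      exact mean_weight k u hu1 _ (fun q hq => hQ q (Finset.mem_of_mem_erase hq))
  have hle := le_of_tendsto_of_tendsto hlim1 hlim2 (by
    filter_upwards [eventually_ge_atTop 2] with T hT using hcomb T hT)
  have hsum : ∑ p ∈ Q, 4 * (k:ℝ) ^ (Q.erase p).card ≤ (k:ℝ) ^ Q.card * (4 * Q.card / k) := by
    have : ∀ p ∈ Q, 4 * (k:ℝ) ^ (Q.erase p).card = 4 * ((k:ℝ) ^ Q.card / k) := by
      intro p hp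
      rw [← Finset.card_erase_add_one hp, pow_succ]; field_simp
    rw [Finset.sum_congr rfl this, Finset.sum_const, nsmul_eq_mul]
    apply le_of_eq; ring
  set X : ℝ := (k:ℝ) ^ Q.card with hX
  have hXpos : 0 < X := by positivity
  have hA : (2 * Real.pi) * 640 / ε * (X * S + K * 0) ≤ X * (1/4) := by
    rw [hS]; 
    have : (2 * Real.pi) * 640 / ε * (X * (ε / (8000 * Real.pi)) + K * 0) = X * (1280/8000) := by field_simp; ring
    rw [this]; nlinarith
  have hB : (∑ p ∈ Q, 4 * (k:ℝ) ^ (Q.erase p).card) / δ ^ 2 ≤ X * (1/4) := by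
    rw [div_le_iff₀ (by positivity)]
    refine hsum.trans ?_
    rw [mul_assoc]
    apply mul_le_mul_of_nonneg_left _ hXpos.le
    rw [div_lt_iff₀ (by positivity)] at hk
    rw [div_le_iff₀ hkpos]; linarith
  linarith
end Vor
end

section
open MeasureTheory Set Filter Topology
namespace Vor

lemma exists_unimod (w : ℂ) : ∃ z : ℂ, ‖z‖ = 1 ∧ z * w = -(‖w‖ : ℂ) := by
  by_cases h : w = 0
  · exact ⟨1, by simp, by simp [h]⟩
  · have hn : (‖w‖ : ℂ) ≠ 0 := by exact_mod_cast norm_ne_zero_iff.2 h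
    refine ⟨-(‖w‖ : ℂ) / w, ?_, by field_simp⟩
    rw [norm_div, norm_neg, Complex.norm_real, norm_norm, div_self (norm_ne_zero_iff.2 h)]

lemma greedy {V : Type*} [NormedAddCommGroup V] [InnerProductSpace ℂ V] (v : ℕ → V) (a : ℕ → ℂ)
    (ha : ∀ n, ‖a n‖ ≤ 1) (s : Finset ℕ) : ∃ z : ℕ → ℂ, (∀ n, ‖z n‖ = 1) ∧
      ‖∑ n ∈ s, (z n - a n) • v n‖ ^ 2 ≤ 4 * ∑ n ∈ s, ‖v n‖ ^ 2 := by
  classical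
  induction s using Finset.induction_on with
  | empty => exact ⟨fun _ => 1, by simp, by simp⟩
  | insert p s hp ih =>
    obtain ⟨z, hz, hb⟩ := ih
    set e := ∑ n ∈ s, (z n - a n) • v n with he
    obtain ⟨ζ, hζ, hζw⟩ := exists_unimod (inner ℂ e (v p))
    refine ⟨Function.update z p ζ, ?_, ?_⟩
    · intro n
      by_cases h : n = p
      · subst h; simp [hζ]
      · simp [h, hz]
    · have h1 : ∑ n ∈ s, (Function.update z p ζ n - a n) • v n = e := by
        refine Finset.sum_congr rfl fun n hn => ?_
        have : n ≠ p := fun h => hp (h ▸ hn)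
        simp [this]
      rw [Finset.sum_insert hp, Finset.sum_insert hp, h1, Function.update_self, add_comm, norm_add_sq (𝕜 := ℂ),
        inner_smul_right, sub_mul, hζw]
      have h2 : RCLike.re (-(‖inner ℂ e (v p)‖ : ℂ) - a p * inner ℂ e (v p)) ≤ 0 := by
        have := Complex.abs_re_le_norm (a p * inner ℂ e (v p))
        rw [norm_mul] at this
        have h3 := neg_le_of_abs_le this
        have h4 := mul_le_mul_of_nonneg_right (ha p) (norm_nonneg (inner ℂ e (v p)))
        simp only [RCLike.re_eq_complex_re, Complex.sub_re, Complex.neg_re, Complex.ofReal_re]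
        linarith
      have h5 : ‖(ζ - a p) • v p‖ ^ 2 ≤ 4 * ‖v p‖ ^ 2 := by
        rw [norm_smul, mul_pow]
        have : ‖ζ - a p‖ ≤ 2 := (norm_sub_le _ _).trans (by linarith [ha p])
        have : ‖ζ - a p‖ ^ 2 ≤ 2 ^ 2 := by gcongr
        nlinarith [sq_nonneg ‖v p‖]
      linarith

lemma lin_dense_disc {V : Type*} [NormedAddCommGroup V] [NormedSpace ℂ V] (v : ℕ → V)
    (hv : ∀ f : V →L[ℂ] ℂ, f ≠ 0 → ¬ Summable (fun n => ‖f (v n)‖)) (N0 : ℕ) (c : V) {ε : ℝ} (hε : 0 < ε) :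
    ∃ M ≥ N0, ∃ a : ℕ → ℂ, (∀ n, ‖a n‖ ≤ 1) ∧ ‖(∑ n ∈ Finset.Ico N0 M, a n • v n) - c‖ < ε := by
  set K : Set V := {y | ∃ M ≥ N0, ∃ a : ℕ → ℂ, (∀ n, ‖a n‖ ≤ 1) ∧ (∀ n ≥ M, a n = 0) ∧
    y = ∑ n ∈ Finset.Ico N0 M, a n • v n} with hK
  have hext : ∀ M M' : ℕ, M ≤ M' → ∀ a : ℕ → ℂ, (∀ n ≥ M, a n = 0) →
      ∑ n ∈ Finset.Ico N0 M, a n • v n = ∑ n ∈ Finset.Ico N0 M', a n • v n := by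
    intro M M' h a ha
    apply Finset.sum_subset (Finset.Ico_subset_Ico_right h)
    intro n hn hn'
    simp only [Finset.mem_Ico] at hn hn'
    rw [ha n (by omega), zero_smul]
  have hconv : Convex ℝ K := by
    rintro _ ⟨M, hM, a, ha, ha0, rfl⟩ _ ⟨M', hM', a', ha', ha0', rfl⟩ t t' ht ht' htt
    refine ⟨max M M', le_max_of_le_left hM, fun n => t * a n + t' * a' n, ?_, ?_, ?_⟩
    · intro n
      refine (norm_add_le _ _).trans ?_
      rw [norm_mul, norm_mul, Complex.norm_real, Complex.norm_real, Real.norm_eq_abs, Real.norm_eq_abs,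
        abs_of_nonneg ht, abs_of_nonneg ht']
      nlinarith [ha n, ha' n]
    · intro n hn
      simp only
      rw [ha0 n (le_trans (le_max_left _ _) hn), ha0' n (le_trans (le_max_right _ _) hn)]; simp
    · rw [hext M _ (le_max_left M M') a ha0, hext M' _ (le_max_right M M') a' ha0', Finset.smul_sum, Finset.smul_sum,
        ← Finset.sum_add_distrib]
      refine Finset.sum_congr rfl fun n _ => ?_
      rw [add_smul, mul_smul, mul_smul]; rfl
  have hmem : c ∈ closure K := by
    by_contra hc
    obtain ⟨f, u, h1, h2⟩ := RCLike.geometric_hahn_banach_closed_point (𝕜 := ℂ) hconv.closure isClosed_closure hc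
    have h0 : (0:V) ∈ K := ⟨N0, le_rfl, fun _ => 0, by simp, by simp, by simp⟩
    have hu := h1 0 (subset_closure h0)
    simp only [map_zero] at hu
    have hf : f ≠ 0 := by
      rintro rfl
      simp at h2 hu; linarith
    apply hv f hf
    have hb : ∀ M ≥ N0, ∑ n ∈ Finset.Ico N0 M, ‖f (v n)‖ ≤ u := by
      intro M hM
      choose z hz1 hz2 using fun n => exists_unimod (f (v n))
      have := h1 (∑ n ∈ Finset.Ico N0 M, (if n < M then -z n else 0) • v n) (subset_closure
        ⟨M, hM, fun n => if n < M then -z n else 0, ?_, ?_, rfl⟩)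
      · refine le_trans (le_of_eq ?_) this.le
        rw [map_sum, map_sum]
        refine Finset.sum_congr rfl fun n hn => ?_
        rw [if_pos (Finset.mem_Ico.1 hn).2, map_smul, smul_eq_mul, neg_mul, hz2]
        simp
      · intro n; simp only; split_ifs <;> simp [hz1]
      · intro n hn; simp only; rw [if_neg (by omega)]
    apply summable_of_sum_range_le (c := ∑ n ∈ Finset.range N0, ‖f (v n)‖ + u) (fun n => norm_nonneg _)
    intro n
    calc _ ≤ ∑ i ∈ Finset.range (max n N0), ‖f (v i)‖ :=
          Finset.sum_le_sum_of_subset_of_nonneg (Finset.range_mono (le_max_left _ _)) (fun _ _ _ => norm_nonneg _)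
      _ = ∑ i ∈ Finset.range N0, ‖f (v i)‖ + ∑ i ∈ Finset.Ico N0 (max n N0), ‖f (v i)‖ :=
          (Finset.sum_range_add_sum_Ico _ (le_max_right _ _)).symm
      _ ≤ _ := by linarith [hb _ (le_max_right n N0)]
  obtain ⟨y, ⟨M, hM, a, ha, _, rfl⟩, hy⟩ := Metric.mem_closure_iff.1 hmem ε hε
  refine ⟨M, hM, a, ha, ?_⟩
  rwa [dist_comm, dist_eq_norm] at hy

lemma lin_dense {V : Type*} [NormedAddCommGroup V] [InnerProductSpace ℂ V] (v : ℕ → V)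
    (hv : ∀ f : V →L[ℂ] ℂ, f ≠ 0 → ¬ Summable (fun n => ‖f (v n)‖)) (hs : Summable (fun n => ‖v n‖ ^ 2))
    {ε : ℝ} (hε : 0 < ε) : ∃ N1 : ℕ, ∀ N0 ≥ N1, ∀ c : V, 
    ∃ M ≥ N0, ∃ z : ℕ → ℂ, (∀ n, ‖z n‖ = 1) ∧ ‖(∑ n ∈ Finset.Ico N0 M, z n • v n) - c‖ < ε := by
  obtain ⟨s, hs⟩ := summable_iff_vanishing_norm.1 hs (ε ^ 2 / 16) (by positivity)
  refine ⟨s.sup id + 1, fun N0 hN0 c => ?_⟩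
  obtain ⟨M, hM, a, ha, hac⟩ := lin_dense_disc v hv N0 c (half_pos hε)
  obtain ⟨z, hz, hza⟩ := greedy v a ha (Finset.Ico N0 M)
  refine ⟨M, hM, z, hz, ?_⟩
  have h1 := hs (Finset.Ico N0 M) (by
    rw [Finset.disjoint_left]
    intro n hn hns
    have h1 := (Finset.mem_Ico.1 hn).1
    have h2 : n ≤ s.sup id := Finset.le_sup (f := id) hns
    omega)
  have h2 : ∑ n ∈ Finset.Ico N0 M, ‖v n‖ ^ 2 < ε ^ 2 / 16 := (le_abs_self _).trans_lt h1
  have h3 : ‖∑ n ∈ Finset.Ico N0 M, (z n - a n) • v n‖ < ε / 2 := by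
    apply lt_of_pow_lt_pow_left₀ 2 (by positivity)
    linarith [hza]
  have h4 : (∑ n ∈ Finset.Ico N0 M, z n • v n) - c = (∑ n ∈ Finset.Ico N0 M, (z n - a n) • v n) +
      ((∑ n ∈ Finset.Ico N0 M, a n • v n) - c) := by
    simp only [sub_smul, Finset.sum_sub_distrib]; abel
  rw [h4]
  exact (norm_add_le _ _).trans_lt (by linarith)
end Vor
end

section
open MeasureTheory Set Filter Topology
namespace Vor

lemma jet_mul_small {f g : ℂ → ℂ} {x : ℂ} (hf : AnalyticAt ℂ f x) (hg : AnalyticAt ℂ g x) {m : ℕ} {B δ : ℝ}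
    (hB : ∀ k ≤ m, ‖iteratedDeriv k f x‖ ≤ B) (hδ : ∀ k ≤ m, ‖iteratedDeriv k g x‖ ≤ δ) :
    ∀ k ≤ m, ‖iteratedDeriv k (fun s => f s * g s) x‖ ≤ 2 ^ m * B * δ := by
  intro k hk
  have hB0 : 0 ≤ B := (norm_nonneg _).trans (hB 0 (Nat.zero_le _))
  have hδ0 : 0 ≤ δ := (norm_nonneg _).trans (hδ 0 (Nat.zero_le _))
  rw [iteratedDeriv_fun_mul hf.contDiffAt hg.contDiffAt]
  calc _ ≤ ∑ i ∈ Finset.range (k+1), ‖(k.choose i : ℂ) * iteratedDeriv i f x * iteratedDeriv (k - i) g x‖ := norm_sum_le _ _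
    _ ≤ ∑ i ∈ Finset.range (k+1), (k.choose i : ℝ) * B * δ := by
        refine Finset.sum_le_sum fun i hi => ?_
        have hi := Finset.mem_range.1 hi
        rw [norm_mul, norm_mul, Complex.norm_natCast]
        gcongr
        · exact hB i (by omega)
        · exact hδ _ (by omega)
    _ = 2 ^ k * B * δ := by
        rw [← Finset.sum_mul, ← Finset.sum_mul]
        have := Nat.sum_range_choose k
        have h2 : (∑ i ∈ Finset.range (k+1), (k.choose i : ℝ)) = 2 ^ k := by exact_mod_cast this
        rw [h2]
    _ ≤ _ := by gcongr; norm_num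

lemma jet_exp (x : ℂ) (m : ℕ) : ∃ C : ℝ, 0 ≤ C ∧ ∀ δ : ℝ, δ ≤ 1 → ∀ D : ℂ → ℂ, AnalyticAt ℂ D x →
    (∀ k ≤ m, ‖iteratedDeriv k D x‖ ≤ δ) → ∀ k ≤ m, ‖iteratedDeriv k (fun s => Complex.exp (D s) - 1) x‖ ≤ C * δ := by
  induction m with
  | zero =>
    refine ⟨2, by norm_num, fun δ hδ D hD h k hk => ?_⟩
    obtain rfl : k = 0 := by omega
    have := h 0 le_rfl
    simp only [iteratedDeriv_zero] at this ⊢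
    exact (Complex.norm_exp_sub_one_le (this.trans hδ)).trans (by linarith)
  | succ m ih =>
    obtain ⟨C, hC, ih⟩ := ih
    refine ⟨C + 1 + 2 ^ m * C, by positivity, fun δ hδ D hD h k hk => ?_⟩
    have hδ0 : 0 ≤ δ := (norm_nonneg _).trans (h 0 (Nat.zero_le _))
    have ih' := ih δ hδ D hD (fun k hk => h k (by omega))
    rcases Nat.lt_or_ge k (m+1) with hk' | hk'
    · refine (ih' k (by omega)).trans ?_
      have : 0 ≤ 2 ^ m * C := by positivity
      nlinarith
    · obtain rfl : k = m + 1 := by omega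
      have hE : AnalyticAt ℂ (fun s => Complex.exp (D s) - 1) x := hD.cexp.sub analyticAt_const
      rw [iteratedDeriv_succ']
      have heq : deriv (fun s => Complex.exp (D s) - 1) =ᶠ[𝓝 x]
          fun s => deriv D s + deriv D s * (Complex.exp (D s) - 1) := by
        filter_upwards [hD.eventually_analyticAt] with s hs
        rw [deriv_sub_const, deriv_cexp hs.differentiableAt]; ring
      rw [heq.iteratedDeriv_eq]
      have h1 := hD.deriv
      have hmul : AnalyticAt ℂ (fun s => deriv D s * (Complex.exp (D s) - 1)) x := h1.mul hE
      rw [iteratedDeriv_fun_add h1.contDiffAt hmul.contDiffAt]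
      have h2 : ∀ k ≤ m, ‖iteratedDeriv k (deriv D) x‖ ≤ δ := by
        intro k hk; rw [← iteratedDeriv_succ']; exact h _ (by omega)
      have h3 := jet_mul_small h1 hE h2 ih' m le_rfl
      refine (norm_add_le _ _).trans ((add_le_add (h2 m le_rfl) h3).trans ?_)
      have : 0 ≤ 2 ^ m * C := by positivity
      have h5 : 2 ^ m * δ * (C * δ) ≤ 2 ^ m * C * δ := by
        have := mul_le_mul_of_nonneg_left hδ (mul_nonneg this hδ0)
        nlinarith
      nlinarith

lemma jet_L2 {f : ℂ → ℂ} {c : ℂ} {r : ℝ} (hr : 0 < r) (hf : DifferentiableOn ℂ f (Metric.closedBall c r)) (n : ℕ)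
    {a : ℝ} (ha : 0 < a) (h : ∫ φ in Icc 0 (2 * Real.pi), ‖f (circleMap c r φ)‖ ^ 2 ≤ a ^ 2) :
    ‖iteratedDeriv n f c‖ ≤ n.factorial / r ^ n * a := by
  have hpi := Real.pi_pos
  have hpi3 := Real.pi_gt_three
  have hc := hf.circleIntegral_one_div_sub_center_pow_smul hr n
  have hcont : Continuous (fun φ => f (circleMap c r φ)) := by
    rw [← continuousOn_univ]
    exact hf.continuousOn.comp (continuous_circleMap c r).continuousOn
      (fun φ _ => circleMap_mem_closedBall c hr.le φ)
  have h1 : ‖∮ z in C(c, r), (1 / (z - c) ^ (n + 1)) • f z‖ ≤ ∫ φ in Icc 0 (2 * Real.pi), (r ^ n)⁻¹ * ‖f (circleMap c r φ)‖ := by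
    rw [circleIntegral, intervalIntegral.integral_of_le (by positivity), ← integral_Icc_eq_integral_Ioc]
    refine (norm_integral_le_integral_norm _).trans (le_of_eq ?_)
    congr 1; ext φ
    rw [norm_smul, norm_smul, deriv_circleMap, norm_mul, Complex.norm_I, mul_one, norm_circleMap_zero, norm_div,
      norm_pow, circleMap_sub_center, norm_circleMap_zero, abs_of_pos hr, norm_one]
    field_simp
    ring
  have h2 : ∫ φ in Icc 0 (2 * Real.pi), ‖f (circleMap c r φ)‖ ≤ 4 * a := by
    calc _ ≤ ∫ φ in Icc 0 (2 * Real.pi), (a / 2 + (2 * a)⁻¹ * ‖f (circleMap c r φ)‖ ^ 2) := by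
          apply integral_mono
          · exact hcont.norm.integrableOn_Icc
          · exact (continuous_const.add ((hcont.norm.pow 2).const_mul _)).integrableOn_Icc
          · intro φ
            simp only
            set t := ‖f (circleMap c r φ)‖
            have : a / 2 + (2 * a)⁻¹ * t ^ 2 - t = (2 * a)⁻¹ * (a - t) ^ 2 := by field_simp; ring
            have h3 : 0 ≤ (2 * a)⁻¹ * (a - t) ^ 2 := by positivity
            linarith
      _ = (2 * Real.pi) * (a / 2) + (2 * a)⁻¹ * ∫ φ in Icc 0 (2 * Real.pi), ‖f (circleMap c r φ)‖ ^ 2 := by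
          have hi0 : Integrable (fun _ : ℝ => a / 2) (volume.restrict (Icc 0 (2 * Real.pi))) :=
            continuous_const.integrableOn_Icc
          have hi1 : Integrable (fun φ : ℝ => (2 * a)⁻¹ * ‖f (circleMap c r φ)‖ ^ 2)
              (volume.restrict (Icc 0 (2 * Real.pi))) :=
            (continuous_const.mul (hcont.norm.pow 2)).integrableOn_Icc
          rw [integral_add hi0 hi1, integral_const_mul]
          simp [hpi.le]
      _ ≤ (2 * Real.pi) * (a / 2) + (2 * a)⁻¹ * a ^ 2 := by gcongr
      _ = (Real.pi + 1 / 2) * a := by field_simp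
      _ ≤ _ := by have := Real.pi_lt_d2; nlinarith
  rw [hc, integral_const_mul, norm_smul] at h1
  have h3 : ‖(2 * Real.pi * Complex.I / n.factorial : ℂ)‖ = 2 * Real.pi / n.factorial := by
    simp [abs_of_pos hpi]
  rw [h3] at h1
  have hfac : (0:ℝ) < n.factorial := by exact_mod_cast n.factorial_pos
  have hrn : 0 < r ^ n := by positivity
  have h4 : 2 * Real.pi / n.factorial * ‖iteratedDeriv n f c‖ ≤ (r ^ n)⁻¹ * (4 * a) :=
    h1.trans (mul_le_mul_of_nonneg_left h2 (by positivity))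
  have h5 : 6 / n.factorial * ‖iteratedDeriv n f c‖ ≤ (r ^ n)⁻¹ * (4 * a) := by
    refine le_trans ?_ h4
    gcongr; linarith
  calc ‖iteratedDeriv n f c‖ = n.factorial / 6 * (6 / n.factorial * ‖iteratedDeriv n f c‖) := by field_simp
    _ ≤ n.factorial / 6 * ((r ^ n)⁻¹ * (4 * a)) := by gcongr
    _ = (n.factorial / r ^ n * a) * (4/6) := by field_simp
    _ ≤ _ := by
      have : 0 ≤ n.factorial / r ^ n * a := by positivity
      linarith

/-- polynomial with a given jet -/
noncomputable def BB (x : ℂ) (m : ℕ) (b : ℕ → ℂ) (s : ℂ) : ℂ :=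
  ∑ j ∈ Finset.range (m+1), b j / j.factorial * (s - x) ^ j

lemma BB_analytic (x : ℂ) (m : ℕ) (b : ℕ → ℂ) (s : ℂ) : AnalyticAt ℂ (BB x m b) s := by
  have : Differentiable ℂ (BB x m b) := by unfold BB; fun_prop
  exact this.analyticAt s

lemma BB_jet (x : ℂ) (m : ℕ) (b : ℕ → ℂ) {k : ℕ} (hk : k ≤ m) : iteratedDeriv k (BB x m b) x = b k := by
  unfold BB
  rw [iteratedDeriv_fun_sum]
  · rw [Finset.sum_eq_single_of_mem k (Finset.mem_range.2 (by omega))]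
    · rw [iteratedDeriv_const_mul_field, iteratedDeriv_comp_sub_const (f := fun s => s ^ k)]
      have hk0 : (k.factorial : ℂ) ≠ 0 := by exact_mod_cast k.factorial_ne_zero
      simp [Nat.descFactorial_self]
      field_simp
    · intro j _ hjk
      rw [iteratedDeriv_const_mul_field, iteratedDeriv_comp_sub_const (f := fun s => s ^ j)]
      simp
      right
      omega
  · intro i _
    fun_prop
end Vor
end

section
open MeasureTheory Set Filter Topology
namespace Vor

noncomputable def ell (p : ℕ) (z : ℂ) (s : ℂ) : ℂ := -Complex.log (1 - z * (p:ℂ) ^ (-s))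

lemma sqrt_two_bound : (2:ℝ) ^ (-(1/2) : ℝ) ≤ 3 / 4 := by
  rw [Real.rpow_neg (by norm_num), ← Real.sqrt_eq_rpow]
  have h : (4/3 : ℝ) ≤ Real.sqrt 2 := by
    apply Real.le_sqrt_of_sq_le; norm_num
  calc (Real.sqrt 2)⁻¹ ≤ (4/3 : ℝ)⁻¹ := by gcongr
    _ = 3/4 := by norm_num

lemma ell_norm {p : ℕ} (hp : p.Prime) {s : ℂ} : ‖(p:ℂ) ^ (-s)‖ = (p:ℝ) ^ (-s.re) := by
  rw [Complex.norm_natCast_cpow_of_pos hp.pos]; simp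

lemma ell_small {p : ℕ} (hp : p.Prime) {s : ℂ} (hs : 1 / 2 ≤ s.re) : ‖(p:ℂ) ^ (-s)‖ ≤ 3 / 4 := by
  rw [ell_norm hp]
  have h2 : (2:ℝ) ≤ p := by exact_mod_cast hp.two_le
  calc (p:ℝ) ^ (-s.re) ≤ (p:ℝ) ^ (-(1/2) : ℝ) := Real.rpow_le_rpow_of_exponent_le (by linarith) (by linarith)
    _ ≤ (2:ℝ) ^ (-(1/2) : ℝ) := Real.rpow_le_rpow_of_nonpos (by norm_num) h2 (by norm_num)
    _ ≤ _ := sqrt_two_bound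

lemma one_sub_slit {w : ℂ} (hw : ‖w‖ ≤ 3 / 4) : 1 - w ∈ Complex.slitPlane := by
  left
  have := Complex.re_le_norm w
  simp; linarith

lemma ell_small' {p : ℕ} (hp : p.Prime) {s : ℂ} (hs : 1 / 2 ≤ s.re) {z : ℂ} (hz : ‖z‖ = 1) :
    ‖z * (p:ℂ) ^ (-s)‖ ≤ 3 / 4 := by
  rw [norm_mul, hz, one_mul]; exact ell_small hp hs

lemma ell_diff {p : ℕ} (hp : p.Prime) {s : ℂ} (hs : 1 / 2 ≤ s.re) {z : ℂ} (hz : ‖z‖ = 1) :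
    DifferentiableAt ℂ (ell p z) s := by
  have hp0 : (p:ℂ) ≠ 0 := by exact_mod_cast hp.ne_zero
  have h1 : DifferentiableAt ℂ (fun s : ℂ => 1 - z * (p:ℂ) ^ (-s)) s := by
    refine (differentiableAt_const _).sub ((differentiableAt_const _).mul ?_)
    exact (differentiableAt_id.neg).const_cpow (Or.inl hp0)
  exact (h1.clog (one_sub_slit (ell_small' hp hs hz))).neg

lemma ell_exp {p : ℕ} (hp : p.Prime) {s : ℂ} (hs : 1 / 2 ≤ s.re) {z : ℂ} (hz : ‖z‖ = 1) :
    Complex.exp (ell p z s) = (1 - z * (p:ℂ) ^ (-s))⁻¹ := by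
  rw [ell, Complex.exp_neg, Complex.exp_log (Complex.slitPlane_ne_zero (one_sub_slit (ell_small' hp hs hz)))]

lemma ell_lip {p : ℕ} (hp : p.Prime) {s : ℂ} (hs : 1 / 2 ≤ s.re) {z z' : ℂ} (hz : ‖z‖ = 1) (hz' : ‖z'‖ = 1) :
    ‖ell p z s - ell p z' s‖ ≤ 4 * ‖z - z'‖ := by
  have hd : ∀ w ∈ Metric.closedBall (0:ℂ) (3/4),
      HasDerivAt (fun w => -Complex.log (1 - w)) ((1 - w)⁻¹) w := by
    intro w hw
    have h := ((hasDerivAt_id w).const_sub 1).clog (one_sub_slit (by simpa using hw))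
    have h2 := h.neg
    have h3 : -(-1 / (1 - id w)) = (1 - w)⁻¹ := by rw [neg_div, neg_neg, one_div]; rfl
    rw [h3] at h2
    exact h2
  have key := (convex_closedBall (0:ℂ) (3/4)).norm_image_sub_le_of_norm_deriv_le (𝕜 := ℂ)
    (f := fun w => -Complex.log (1 - w)) (C := 4)
    (fun w hw => (hd w hw).differentiableAt) (fun w hw => by
      rw [(hd w hw).deriv, norm_inv]
      have h1 : ‖w‖ ≤ 3/4 := by simpa using hw
      have h2 : (1/4:ℝ) ≤ ‖1 - w‖ := by
        have := norm_sub_norm_le (1:ℂ) w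
        rw [norm_one] at this; linarith
      calc ‖1 - w‖⁻¹ ≤ (1/4:ℝ)⁻¹ := by gcongr
        _ = 4 := by norm_num)
    (x := z' * (p:ℂ) ^ (-s)) (y := z * (p:ℂ) ^ (-s))
    (by simpa using ell_small hp hs |>.trans' (by rw [hz', one_mul])) (by simpa using ell_small hp hs |>.trans' (by rw [hz, one_mul]))
  refine key.trans ?_
  rw [← sub_mul, norm_mul]
  have := ell_small hp hs
  have h0 := norm_nonneg (z - z')
  nlinarith

lemma ell_approx {p : ℕ} (hp : p.Prime) {s : ℂ} (hs : 1 / 2 ≤ s.re) {z : ℂ} (hz : ‖z‖ = 1) :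
    ‖ell p z s - z * (p:ℂ) ^ (-s)‖ ≤ 2 * (p:ℝ) ^ (-2 * s.re) := by
  have hsm := ell_small' hp hs hz
  have h := Complex.norm_log_one_add_sub_self_le (z := -(z * (p:ℂ) ^ (-s))) (by rw [norm_neg]; linarith)
  have h1 : ‖ell p z s - z * (p:ℂ) ^ (-s)‖ = ‖Complex.log (1 + -(z * (p:ℂ) ^ (-s))) - -(z * (p:ℂ) ^ (-s))‖ := by
    rw [← norm_neg, ell]; congr 1
    rw [← sub_eq_add_neg]; ring
  rw [h1]
  refine h.trans ?_
  rw [norm_neg]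
  have h2 : ‖z * (p:ℂ) ^ (-s)‖ ^ 2 = (p:ℝ) ^ (-2 * s.re) := by
    rw [norm_mul, hz, one_mul, ell_norm hp, ← Real.rpow_natCast, ← Real.rpow_mul (by positivity)]
    congr 1; push_cast; ring
  rw [h2]
  have h3 : (1 - ‖z * (p:ℂ) ^ (-s)‖)⁻¹ ≤ 4 := by
    calc _ ≤ (1/4:ℝ)⁻¹ := by gcongr; linarith
      _ = 4 := by norm_num
  have h4 : 0 ≤ (p:ℝ) ^ (-2 * s.re) := by positivity
  nlinarith

/-- Cauchy constant -/
noncomputable def CC (m : ℕ) (r : ℝ) : ℝ := ∑ k ∈ Finset.range (m+1), (k.factorial : ℝ) / r ^ k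

lemma CC_pos (m : ℕ) {r : ℝ} (hr : 0 < r) : 0 < CC m r :=
  Finset.sum_pos (fun k _ => by positivity) ⟨0, by simp⟩

lemma CC_ge {m : ℕ} {r : ℝ} (hr : 0 < r) {k : ℕ} (hk : k ≤ m) : (k.factorial : ℝ) / r ^ k ≤ CC m r :=
  Finset.single_le_sum (f := fun k : ℕ => (k.factorial : ℝ) / r ^ k) (fun k _ => by positivity)
    (Finset.mem_range.2 (by omega))

lemma jet_sup {f : ℂ → ℂ} {c : ℂ} {r : ℝ} (hr : 0 < r) (hf : ∀ s ∈ Metric.closedBall c r, DifferentiableAt ℂ f s)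
    {C : ℝ} (hC : ∀ s ∈ Metric.closedBall c r, ‖f s‖ ≤ C) {m k : ℕ} (hk : k ≤ m) :
    ‖iteratedDeriv k f c‖ ≤ CC m r * C := by
  have hC0 : 0 ≤ C := (norm_nonneg _).trans (hC c (Metric.mem_closedBall_self hr.le))
  have hd : DifferentiableOn ℂ f (Metric.closedBall c r) := fun s hs => (hf s hs).differentiableWithinAt
  have h := Complex.norm_iteratedDeriv_le_of_forall_mem_sphere_norm_le k hr
    (DifferentiableOn.diffContOnCl (hd.mono Metric.closure_ball_subset_closedBall))
    (fun s hs => hC s (Metric.sphere_subset_closedBall hs))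
  calc _ ≤ k.factorial * C / r ^ k := h
    _ = (k.factorial / r ^ k) * C := by ring
    _ ≤ _ := by gcongr; exact CC_ge hr hk

lemma ball_re {x r : ℝ} {s : ℂ} (hs : s ∈ Metric.closedBall (x:ℂ) r) : x - r ≤ s.re ∧ s.re ≤ x + r := by
  rw [Metric.mem_closedBall, dist_eq_norm] at hs
  have := (Complex.abs_re_le_norm (s - x)).trans hs
  simp only [Complex.sub_re, Complex.ofReal_re] at this
  rw [abs_le] at this
  constructor <;> linarith

lemma pow_jet {p : ℕ} (hp : p.Prime) (z : ℂ) (k : ℕ) (x : ℂ) :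
    iteratedDeriv k (fun s => z * (p:ℂ) ^ (-s)) x = z * ((-(Real.log p : ℂ)) ^ k * (p:ℂ) ^ (-x)) := by
  have hp0 : (p:ℂ) ≠ 0 := by exact_mod_cast hp.ne_zero
  have : (fun s : ℂ => z * (p:ℂ) ^ (-s)) = fun s => z * Complex.exp ((-(Real.log p : ℂ)) * s) := by
    ext s
    rw [Complex.cpow_def_of_ne_zero hp0, Complex.natCast_log]
    congr 2; ring
  rw [this, iteratedDeriv_const_mul_field, iteratedDeriv_cexp_const_mul, Complex.cpow_def_of_ne_zero hp0, Complex.natCast_log]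
  congr 3
  beta_reduce
  rw [neg_mul, mul_neg]

lemma ell_analytic {p : ℕ} (hp : p.Prime) {s : ℂ} (hs : 1 / 2 < s.re) {z : ℂ} (hz : ‖z‖ = 1) :
    AnalyticAt ℂ (ell p z) s := by
  apply DifferentiableOn.analyticAt (s := {s : ℂ | 1/2 < s.re})
  · exact fun s hs => (ell_diff hp (le_of_lt hs) hz).differentiableWithinAt
  · exact (isOpen_lt continuous_const Complex.continuous_re).mem_nhds hs

lemma jet_lip {p : ℕ} (hp : p.Prime) {x r : ℝ} (hr : 0 < r) (h0 : 1 / 2 < x - r) {z z' : ℂ} (hz : ‖z‖ = 1) (hz' : ‖z'‖ = 1)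
    {m k : ℕ} (hk : k ≤ m) :
    ‖iteratedDeriv k (ell p z) x - iteratedDeriv k (ell p z') x‖ ≤ CC m r * (4 * ‖z - z'‖) := by
  have hx : 1 / 2 < (x:ℂ).re := by simp; linarith
  rw [← iteratedDeriv_fun_sub (ell_analytic hp hx hz).contDiffAt (ell_analytic hp hx hz').contDiffAt]
  refine jet_sup hr (fun s hs => ?_) (fun s hs => ?_) hk
  · have := (ball_re hs).1
    exact (ell_diff hp (by linarith) hz).sub (ell_diff hp (by linarith) hz')
  · have := (ball_re hs).1
    exact ell_lip hp (by linarith) hz hz'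

lemma jet_approx {p : ℕ} (hp : p.Prime) {x r : ℝ} (hr : 0 < r) (h0 : 1 / 2 < x - r) {z : ℂ} (hz : ‖z‖ = 1)
    {m k : ℕ} (hk : k ≤ m) :
    ‖iteratedDeriv k (ell p z) x - z * ((-(Real.log p : ℂ)) ^ k * (p:ℂ) ^ (-(x:ℂ)))‖ ≤
      CC m r * (2 * (p:ℝ) ^ (-(2 * (x - r)))) := by
  have hx : 1 / 2 < (x:ℂ).re := by simp; linarith
  have hp0 : (p:ℂ) ≠ 0 := by exact_mod_cast hp.ne_zero
  have hp1 : (1:ℝ) ≤ p := by exact_mod_cast hp.one_le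
  have hdd : Differentiable ℂ (fun s : ℂ => z * (p:ℂ) ^ (-s)) := fun s =>
    (differentiableAt_const _).mul ((differentiableAt_id.neg).const_cpow (Or.inl hp0))
  rw [← pow_jet hp, ← iteratedDeriv_fun_sub (ell_analytic hp hx hz).contDiffAt (hdd.analyticAt _).contDiffAt]
  refine jet_sup hr (fun s hs => ?_) (fun s hs => ?_) hk
  · have := (ball_re hs).1
    exact (ell_diff hp (by linarith) hz).sub (hdd s)
  · have := (ball_re hs).1
    refine (ell_approx hp (by linarith) hz).trans ?_
    gcongr 2 * ?_
    exact Real.rpow_le_rpow_of_exponent_le hp1 (by linarith)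
end Vor
end

section
open MeasureTheory Set Filter Topology
namespace Vor

open Classical in
noncomputable def vv (x : ℝ) (m : ℕ) (n : ℕ) : EuclideanSpace ℂ (Fin (m+1)) :=
  if n.Prime then WithLp.toLp 2 (fun k : Fin (m+1) => (-(Real.log n : ℂ)) ^ (k:ℕ) * (n:ℂ) ^ (-(x:ℂ))) else 0

lemma vv_apply (x : ℝ) (m : ℕ) (n : ℕ) (k : Fin (m+1)) : vv x m n k =
    if n.Prime then (-(Real.log n : ℂ)) ^ (k:ℕ) * (n:ℂ) ^ (-(x:ℂ)) else 0 := by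
  unfold vv; split_ifs <;> rfl

lemma vv_summable {x : ℝ} (hx : 1 / 2 < x) (m : ℕ) : Summable (fun n => ‖vv x m n‖ ^ 2) := by
  simp_rw [EuclideanSpace.norm_sq_eq]
  refine summable_sum (f := fun (k : Fin (m+1)) n => ‖vv x m n k‖ ^ 2) fun k _ => ?_
  have hlo : (fun n : ℕ => (Real.log n) ^ ((2 * k : ℕ) : ℝ)) =o[atTop] fun n : ℕ => (n:ℝ) ^ (x - 1/2) :=
    (isLittleO_log_rpow_rpow_atTop _ (by linarith : 0 < x - 1/2)).comp_tendsto tendsto_natCast_atTop_atTop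
  have hb := hlo.bound one_pos
  refine Summable.of_norm_bounded_eventually_nat (g := fun n : ℕ => (n:ℝ) ^ (-(x + 1/2))) ?_ ?_
  · exact Real.summable_nat_rpow.2 (by linarith)
  · filter_upwards [hb, eventually_ge_atTop 1] with n hn h1
    have hn0 : (0:ℝ) < n := by exact_mod_cast h1
    rw [norm_pow, norm_norm, vv_apply]
    split_ifs with hp
    · rw [norm_mul, norm_pow, norm_neg, Complex.norm_real, Complex.norm_natCast_cpow_of_pos h1, mul_pow]
      rw [Real.rpow_natCast, norm_pow, one_mul, Real.norm_of_nonneg (by positivity : 0 ≤ (n:ℝ) ^ (x - 1/2))] at hn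
      have e1 : ((n:ℝ) ^ (-(x:ℂ)).re) ^ 2 = (n:ℝ) ^ (-(2*x)) := by
        rw [← Real.rpow_natCast, ← Real.rpow_mul hn0.le]; congr 1; simp; ring
      rw [e1, ← pow_mul, mul_comm (k:ℕ) 2]
      calc _ ≤ (n:ℝ) ^ (x - 1/2) * (n:ℝ) ^ (-(2*x)) := by gcongr
        _ = _ := by rw [← Real.rpow_add hn0]; congr 1; ring
    · simp; positivity

lemma vv_not_summable {x : ℝ} (hx : x < 1) (m : ℕ) (f : EuclideanSpace ℂ (Fin (m+1)) →L[ℂ] ℂ) (hf : f ≠ 0) :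
    ¬ Summable (fun n => ‖f (vv x m n)‖) := by
  intro hs
  let P : Polynomial ℂ := ∑ k : Fin (m+1), Polynomial.monomial (k:ℕ) (f (EuclideanSpace.single k 1))
  have hfv : ∀ v, f v = ∑ k : Fin (m+1), v k * f (EuclideanSpace.single k 1) := by
    intro v
    conv_lhs => rw [← (EuclideanSpace.basisFun (Fin (m+1)) ℂ).sum_repr v]
    simp [map_sum]
  have hcoef : ∀ k : Fin (m+1), P.coeff k = f (EuclideanSpace.single k 1) := by
    intro k
    simp only [P, Polynomial.finsetSum_coeff, Polynomial.coeff_monomial]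
    rw [Finset.sum_eq_single k]
    · simp
    · intro j _ hj
      rw [if_neg]; exact fun h => hj (Fin.ext h)
    · simp
  have hP : P ≠ 0 := by
    intro h
    apply hf
    ext v
    rw [hfv]
    simp [← hcoef, h]
  have hlow : ∃ c > 0, ∀ᶠ n : ℕ in atTop, c ≤ ‖P.eval (-(Real.log n : ℂ))‖ := by
    rcases Nat.eq_zero_or_pos P.natDegree with h | h
    · obtain ⟨a, ha⟩ := Polynomial.natDegree_eq_zero.1 h
      refine ⟨‖a‖, ?_, ?_⟩
      · rw [gt_iff_lt, norm_pos_iff]; rintro rfl; exact hP (by rw [← ha]; simp)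
      · filter_upwards with n; rw [← ha]; simp
    · refine ⟨1, one_pos, ?_⟩
      refine (Polynomial.tendsto_norm_atTop P (Polynomial.natDegree_pos_iff_degree_pos.1 h) ?_).eventually_ge_atTop 1
      simp only [norm_neg, Complex.norm_real]
      exact tendsto_norm_atTop_atTop.comp (Real.tendsto_log_atTop.comp tendsto_natCast_atTop_atTop)
  obtain ⟨c, hc, hlow⟩ := hlow
  have hs' : Summable (fun p : Nat.Primes => c⁻¹ * ‖f (vv x m (p:ℕ))‖) :=
    (hs.comp_injective Nat.Primes.coe_nat_injective).mul_left _
  have hev : ∀ᶠ p : Nat.Primes in cofinite, c ≤ ‖P.eval (-(Real.log ((p:ℕ):ℝ) : ℂ))‖ := by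
    rw [← Nat.cofinite_eq_atTop] at hlow
    exact Nat.Primes.coe_nat_injective.tendsto_cofinite.eventually hlow
  have : Summable (fun p : Nat.Primes => (p:ℝ) ^ (-x)) := by
    refine Summable.of_norm_bounded_eventually hs' ?_
    filter_upwards [hev] with p hp
    have hpp := p.2
    rw [Real.norm_of_nonneg (by positivity), hfv]
    have e : ∑ k : Fin (m+1), vv x m (p:ℕ) k * f (EuclideanSpace.single k 1) =
        P.eval (-(Real.log ((p:ℕ):ℝ) : ℂ)) * ((p:ℕ):ℂ) ^ (-(x:ℂ)) := by
      simp only [P, Polynomial.eval_finsetSum, Polynomial.eval_monomial, Finset.sum_mul]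
      refine Finset.sum_congr rfl fun k _ => ?_
      rw [vv_apply, if_pos hpp]; ring
    rw [e, norm_mul, Complex.norm_natCast_cpow_of_pos hpp.pos]
    have h0 : 0 ≤ ((p:ℕ):ℝ) ^ (-x) := by positivity
    simp only [Complex.neg_re, Complex.ofReal_re]
    calc _ = c⁻¹ * (c * ((p:ℕ):ℝ) ^ (-x)) := by field_simp
      _ ≤ _ := by gcongr
  rw [Nat.Primes.summable_rpow] at this
  linarith
end Vor
end

section
open MeasureTheory Set Filter Topology
namespace Vor

lemma log_target (x : ℂ) (m : ℕ) (b : ℕ → ℂ) (hb : b 0 ≠ 0) :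
    ∃ L : ℂ → ℂ, AnalyticAt ℂ L x ∧ ∀ᶠ s in 𝓝 x, Complex.exp (L s) = BB x m b s := by
  have h0 : BB x m b x = b 0 := by
    have := BB_jet x m b (Nat.zero_le m)
    simpa using this
  have hd : AnalyticAt ℂ (fun s => BB x m b s / b 0) x := by
    have : AnalyticAt ℂ (fun s => BB x m b s * (b 0)⁻¹) x :=
      (BB_analytic x m b x).mul (analyticAt_const (v := (b 0)⁻¹))
    simpa only [div_eq_mul_inv] using this
  have h1 : BB x m b x / b 0 = 1 := by rw [h0, div_self hb]
  refine ⟨fun s => Complex.log (BB x m b s / b 0) + Complex.log (b 0), ?_, ?_⟩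
  · refine AnalyticAt.add (hd.clog ?_) analyticAt_const
    rw [h1]; simp
  · have hc : ∀ᶠ s in 𝓝 x, BB x m b s ≠ 0 :=
      (BB_analytic x m b x).continuousAt.eventually_ne (by rw [h0]; exact hb)
    filter_upwards [hc] with s hs
    rw [Complex.exp_add, Complex.exp_log (div_ne_zero hs hb), Complex.exp_log hb, div_mul_cancel₀ _ hb]

lemma euler_approx {x r : ℝ} (hr : 0 < r) (h0 : 1 / 2 < x - r) (h1 : x < 1) (m : ℕ) (c : ℕ → ℂ) {δ : ℝ} (hδ : 0 < δ) :
    ∃ N1 : ℕ, ∀ N0 ≥ N1, ∃ M ≥ N0, ∃ z : ℕ → ℂ, (∀ p, ‖z p‖ = 1) ∧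
      ∀ k ≤ m, ‖(∑ p ∈ PP M, iteratedDeriv k (ell p (z p)) x) - c k‖ ≤ δ := by
  have hC := CC_pos m hr
  obtain ⟨N2, hN2⟩ := tail_small (2 * (x - r)) (by linarith) (ε := δ / (4 * CC m r)) (by positivity)
  obtain ⟨N1, hN1⟩ := lin_dense (vv x m) (fun f hf => vv_not_summable h1 m f hf) (vv_summable (by linarith) m)
    (ε := δ / 2) (by positivity)
  refine ⟨max N1 N2, fun N0 hN0 => ?_⟩
  obtain ⟨M, hM, z, hz, hzc⟩ := hN1 N0 (le_trans (le_max_left _ _) hN0)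
    (WithLp.toLp 2 (fun k : Fin (m+1) => c k - ∑ p ∈ PP N0, iteratedDeriv (k:ℕ) (ell p 1) x))
  refine ⟨M, hM, fun p => if p < N0 then 1 else z p, fun p => ?_, fun k hk => ?_⟩
  · dsimp only; split_ifs
    · simp
    · exact hz p
  have hk2 : ‖(∑ n ∈ Finset.Ico N0 M, z n * vv x m n ⟨k, by omega⟩) -
      (c k - ∑ p ∈ PP N0, iteratedDeriv k (ell p 1) x)‖ < δ / 2 := by
    refine lt_of_le_of_lt ?_ hzc
    have := PiLp.norm_apply_le ((∑ n ∈ Finset.Ico N0 M, z n • vv x m n) -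
      (WithLp.toLp 2 (fun k : Fin (m+1) => c k - ∑ p ∈ PP N0, iteratedDeriv (k:ℕ) (ell p 1) x))) ⟨k, by omega⟩
    simpa using this
  have hsplit : ∑ p ∈ PP M, iteratedDeriv k (ell p (if p < N0 then 1 else z p)) x =
      (∑ p ∈ PP N0, iteratedDeriv k (ell p 1) x) +
        ∑ p ∈ (Finset.Ico N0 M).filter Nat.Prime, iteratedDeriv k (ell p (z p)) x := by
    simp only [PP, Finset.sum_filter]
    rw [← Finset.sum_range_add_sum_Ico _ hM]
    congr 1
    · refine Finset.sum_congr rfl fun p hp => ?_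
      rw [if_pos (Finset.mem_range.1 hp)]
    · refine Finset.sum_congr rfl fun p hp => ?_
      rw [if_neg (not_lt.2 (Finset.mem_Ico.1 hp).1)]
  have hdiff : ‖(∑ p ∈ (Finset.Ico N0 M).filter Nat.Prime, iteratedDeriv k (ell p (z p)) x) -
      ∑ n ∈ Finset.Ico N0 M, z n * vv x m n ⟨k, by omega⟩‖ ≤ δ / 2 := by
    have e : ∑ n ∈ Finset.Ico N0 M, z n * vv x m n ⟨k, by omega⟩ =
        ∑ p ∈ (Finset.Ico N0 M).filter Nat.Prime, z p * ((-(Real.log p : ℂ)) ^ k * (p:ℂ) ^ (-(x:ℂ))) := by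
      rw [Finset.sum_filter]
      refine Finset.sum_congr rfl fun p _ => ?_
      rw [vv_apply]; split_ifs <;> simp
    rw [e, ← Finset.sum_sub_distrib]
    calc _ ≤ ∑ p ∈ (Finset.Ico N0 M).filter Nat.Prime, CC m r * (2 * (p:ℝ) ^ (-(2 * (x - r)))) := by
          refine norm_sum_le_of_le _ fun p hp => ?_
          exact jet_approx (Finset.mem_filter.1 hp).2 hr h0 (hz p) hk
      _ = CC m r * 2 * ∑ p ∈ (Finset.Ico N0 M).filter Nat.Prime, (p:ℝ) ^ (-(2 * (x - r))) := by
          rw [Finset.mul_sum]; refine Finset.sum_congr rfl fun p _ => by ring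
      _ ≤ CC m r * 2 * ∑ n ∈ (Finset.Icc 1 M).filter (fun n => N0 ≤ n), (n:ℝ) ^ (-(2 * (x - r))) := by
          gcongr
          intro p hp
          rw [Finset.mem_filter, Finset.mem_Ico] at hp
          rw [Finset.mem_filter, Finset.mem_Icc]
          exact ⟨⟨hp.2.one_le, hp.1.2.le⟩, hp.1.1⟩
      _ ≤ CC m r * 2 * (δ / (4 * CC m r)) := by
          gcongr
          exact hN2 N0 (le_trans (le_max_right _ _) hN0) M
      _ = δ / 2 := by field_simp; norm_num
  rw [hsplit]
  calc _ = ‖((∑ p ∈ (Finset.Ico N0 M).filter Nat.Prime, iteratedDeriv k (ell p (z p)) x) -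
      ∑ n ∈ Finset.Ico N0 M, z n * vv x m n ⟨k, by omega⟩) + ((∑ n ∈ Finset.Ico N0 M, z n * vv x m n ⟨k, by omega⟩) -
      (c k - ∑ p ∈ PP N0, iteratedDeriv k (ell p 1) x))‖ := by congr 1; ring
    _ ≤ _ := norm_add_le _ _
    _ ≤ δ / 2 + δ / 2 := add_le_add hdiff hk2.le
    _ = δ := by ring

lemma jet_combine (x : ℂ) (m : ℕ) {B : ℂ → ℂ} (hB : AnalyticAt ℂ B x) : ∃ K : ℝ, 0 ≤ K ∧ ∀ δ : ℝ, δ ≤ 1 →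
    ∀ D η F : ℂ → ℂ, AnalyticAt ℂ D x → AnalyticAt ℂ η x → (∀ k ≤ m, ‖iteratedDeriv k D x‖ ≤ δ) →
    (∀ k ≤ m, ‖iteratedDeriv k η x‖ ≤ δ) → (F =ᶠ[𝓝 x] fun s => B s * Complex.exp (D s) * (1 + η s)) →
    ∀ k ≤ m, ‖iteratedDeriv k F x - iteratedDeriv k B x‖ ≤ K * δ := by
  obtain ⟨C, hC, hexp⟩ := jet_exp x m
  set B0 := ∑ k ∈ Finset.range (m+1), ‖iteratedDeriv k B x‖ with hB0
  have hB0p : 0 ≤ B0 := Finset.sum_nonneg fun _ _ => norm_nonneg _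
  refine ⟨2 ^ m * B0 * (C + 1 + 2 ^ m * C), by positivity, fun δ hδ D η F hD hη hDj hηj hF k hk => ?_⟩
  have hδ0 : 0 ≤ δ := (norm_nonneg _).trans (hDj 0 (Nat.zero_le _))
  have hBj : ∀ k ≤ m, ‖iteratedDeriv k B x‖ ≤ B0 := fun k hk =>
    Finset.single_le_sum (f := fun k => ‖iteratedDeriv k B x‖) (fun _ _ => norm_nonneg _) (Finset.mem_range.2 (by omega))
  have hE : AnalyticAt ℂ (fun s => Complex.exp (D s) - 1) x := hD.cexp.sub analyticAt_const
  have hEj := hexp δ hδ D hD hDj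
  have hEη : AnalyticAt ℂ (fun s => (Complex.exp (D s) - 1) * η s) x := hE.mul hη
  have hEηj := jet_mul_small hE hη hEj hηj
  have hG1 : AnalyticAt ℂ (fun s => (Complex.exp (D s) - 1) + η s) x := hE.add hη
  have hG : AnalyticAt ℂ (fun s => ((Complex.exp (D s) - 1) + η s) + (Complex.exp (D s) - 1) * η s) x := hG1.add hEη
  have hGj : ∀ k ≤ m, ‖iteratedDeriv k (fun s => ((Complex.exp (D s) - 1) + η s) + (Complex.exp (D s) - 1) * η s) x‖
      ≤ (C + 1 + 2 ^ m * C) * δ := by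
    intro k hk
    rw [iteratedDeriv_fun_add hG1.contDiffAt hEη.contDiffAt, iteratedDeriv_fun_add hE.contDiffAt hη.contDiffAt]
    refine (norm_add_le _ _).trans ((add_le_add ((norm_add_le _ _).trans (add_le_add (hEj k hk) (hηj k hk))) (hEηj k hk)).trans ?_)
    have h1 : 0 ≤ 2 ^ m * C * δ := by positivity
    have h2 := mul_le_mul_of_nonneg_left hδ h1
    nlinarith
  have hBG : AnalyticAt ℂ (fun s => B s * (((Complex.exp (D s) - 1) + η s) + (Complex.exp (D s) - 1) * η s)) x := hB.mul hG
  have hF' : F =ᶠ[𝓝 x] fun s => B s + B s * (((Complex.exp (D s) - 1) + η s) + (Complex.exp (D s) - 1) * η s) := by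
    filter_upwards [hF] with s hs
    rw [hs]; ring
  rw [hF'.iteratedDeriv_eq, iteratedDeriv_fun_add hB.contDiffAt hBG.contDiffAt, add_sub_cancel_left]
  refine (jet_mul_small hB hG hBj hGj k hk).trans (le_of_eq (by ring))

lemma main_approx {x : ℝ} (hx₁ : 1 / 2 < x) (hx₂ : x < 1) (m : ℕ) (b : ℕ → ℂ) (hb : b 0 ≠ 0) {ε : ℝ} (hε : 0 < ε) :
    ∃ τ : ℝ, ∀ k ≤ m, ‖iteratedDeriv k riemannZeta ((x:ℂ) + τ * Complex.I) - b k‖ < ε := by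
  obtain ⟨r, hr, h0, h1⟩ : ∃ r : ℝ, 0 < r ∧ 1 / 2 < x - r ∧ x + r < 1 := by
    refine ⟨min ((x - 1/2) / 2) ((1 - x) / 2), ?_, ?_, ?_⟩
    · exact lt_min (by linarith) (by linarith)
    · have := min_le_left ((x - 1/2) / 2) ((1 - x) / 2); linarith
    · have := min_le_right ((x - 1/2) / 2) ((1 - x) / 2); linarith
  have hC := CC_pos m hr
  obtain ⟨L, hL, hLB⟩ := log_target (x:ℂ) m b hb
  obtain ⟨K, hK, hcomb⟩ := jet_combine (x:ℂ) m (BB_analytic (x:ℂ) m b x)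
  obtain ⟨δ, hδ, hδ1, hKδ⟩ : ∃ δ : ℝ, 0 < δ ∧ δ ≤ 1 ∧ K * δ < ε := by
    refine ⟨min 1 (ε / (K + 1)), lt_min one_pos (by positivity), min_le_left _ _, ?_⟩
    have h2 : min 1 (ε / (K + 1)) ≤ ε / (K + 1) := min_le_right _ _
    calc _ ≤ K * (ε / (K + 1)) := by gcongr
      _ < (K + 1) * (ε / (K + 1)) := by gcongr; linarith
      _ = ε := by field_simp
  set a := δ / CC m r with ha
  have hapos : 0 < a := by positivity
  obtain ⟨M0, hM0⟩ := exists_tau hr h0 h1 (ε := a ^ 2) (by positivity)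
  obtain ⟨N1, hN1⟩ := euler_approx hr h0 hx₂ m (fun k => iteratedDeriv k L x) (half_pos hδ)
  obtain ⟨M, hM, z, hz, hzc⟩ := hN1 (max M0 N1) (le_max_right _ _)
  have hcard : (0:ℝ) < (PP M).card + 1 := by positivity
  obtain ⟨τ, hτ1, hτ2⟩ := hM0 M (le_trans (le_max_left _ _) hM) z hz (δ / (8 * CC m r * ((PP M).card + 1))) (by positivity)
  refine ⟨τ, ?_⟩
  have hxre : 1 / 2 < (x:ℂ).re := by simpa using hx₁
  set y : ℕ → ℂ := fun p => (p:ℂ) ^ (-(τ * Complex.I)) with hy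
  have hyn : ∀ p ∈ PP M, ‖y p‖ = 1 := by
    intro p hp
    rw [hy]; dsimp only
    rw [Complex.norm_natCast_cpow_of_pos (PP_prime _ hp).pos]; simp
  have han : ∀ p ∈ PP M, AnalyticAt ℂ (ell p (y p)) x := fun p hp => ell_analytic (PP_prime _ hp) hxre (hyn p hp)
  have hsum : AnalyticAt ℂ (fun s => ∑ p ∈ PP M, ell p (y p) s) x := by
    exact Finset.analyticAt_fun_sum _ han
  have hD : AnalyticAt ℂ (fun s => (∑ p ∈ PP M, ell p (y p) s) - L s) x := hsum.sub hL
  have hDj : ∀ k ≤ m, ‖iteratedDeriv k (fun s => (∑ p ∈ PP M, ell p (y p) s) - L s) x‖ ≤ δ := by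
    intro k hk
    rw [iteratedDeriv_fun_sub hsum.contDiffAt hL.contDiffAt, iteratedDeriv_fun_sum (fun p hp => (han p hp).contDiffAt)]
    have h2 : ‖(∑ p ∈ PP M, iteratedDeriv k (ell p (y p)) x) - ∑ p ∈ PP M, iteratedDeriv k (ell p (z p)) x‖ ≤ δ / 2 := by
      rw [← Finset.sum_sub_distrib]
      calc _ ≤ ∑ p ∈ PP M, CC m r * (4 * (δ / (8 * CC m r * ((PP M).card + 1)))) := by
            refine norm_sum_le_of_le _ fun p hp => ?_
            refine (jet_lip (PP_prime _ hp) hr h0 (hyn p hp) (hz p) hk).trans ?_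
            gcongr
            exact (hτ1 p hp).le
        _ = (PP M).card / ((PP M).card + 1) * (δ / 2) := by
            rw [Finset.sum_const, nsmul_eq_mul]; field_simp; ring
        _ ≤ 1 * (δ / 2) := by
            gcongr
            rw [div_le_one hcard]; linarith
        _ = _ := one_mul _
    have h3 := hzc k hk
    calc _ = ‖((∑ p ∈ PP M, iteratedDeriv k (ell p (y p)) x) - ∑ p ∈ PP M, iteratedDeriv k (ell p (z p)) x) +
          ((∑ p ∈ PP M, iteratedDeriv k (ell p (z p)) x) - iteratedDeriv k L x)‖ := by congr 1; ring
      _ ≤ _ := norm_add_le _ _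
      _ ≤ δ / 2 + δ / 2 := add_le_add h2 h3
      _ = δ := by ring
  have hηd : ∀ s : ℂ, s.re < 1 → DifferentiableAt ℂ (fun s => HH (PP M) (s + τ * Complex.I)) s := by
    intro s hs
    have hne : s + τ * Complex.I ≠ 1 := by
      intro h
      have := congrArg Complex.re h
      simp at this; linarith
    exact DifferentiableAt.comp s (HH_diff (PP M) (fun p hp => PP_prime _ hp) hne) (by fun_prop)
  have hη : AnalyticAt ℂ (fun s => HH (PP M) (s + τ * Complex.I)) x := by
    apply DifferentiableOn.analyticAt (s := {s : ℂ | s.re < 1})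
    · exact fun s hs => (hηd s hs).differentiableWithinAt
    · exact (isOpen_lt Complex.continuous_re continuous_const).mem_nhds (by simpa using hx₂)
  have hηj : ∀ k ≤ m, ‖iteratedDeriv k (fun s => HH (PP M) (s + τ * Complex.I)) x‖ ≤ δ := by
    intro k hk
    have := jet_L2 (f := fun s => HH (PP M) (s + τ * Complex.I)) (c := (x:ℂ)) hr (fun s hs =>
      (hηd s (by have := (ball_re hs).2; linarith)).differentiableWithinAt) k hapos hτ2.le
    refine this.trans ?_
    calc _ ≤ CC m r * a := by gcongr; exact CC_ge hr hk
      _ = δ := by rw [ha]; field_simp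
  have hF : (fun s => riemannZeta (s + τ * Complex.I)) =ᶠ[𝓝 (x:ℂ)]
      fun s => BB x m b s * Complex.exp ((∑ p ∈ PP M, ell p (y p) s) - L s) * (1 + HH (PP M) (s + τ * Complex.I)) := by
    have hre : ∀ᶠ s : ℂ in 𝓝 (x:ℂ), 1 / 2 < s.re :=
      (isOpen_lt continuous_const Complex.continuous_re).mem_nhds hxre
    filter_upwards [hLB, hre] with s hs hsr
    rw [Complex.exp_sub, ← hs, Complex.exp_sum, mul_div_cancel₀ _ (Complex.exp_ne_zero _), HH, add_sub_cancel]
    have e : ∀ p ∈ PP M, (1 - (p:ℂ) ^ (-(s + τ * Complex.I))) = 1 - y p * (p:ℂ) ^ (-s) := by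
      intro p hp
      have hp0 : (p:ℂ) ≠ 0 := by exact_mod_cast (PP_prime _ hp).ne_zero
      rw [neg_add, Complex.cpow_add _ _ hp0, mul_comm]
    rw [Finset.prod_congr rfl e, ← mul_assoc, ← Finset.prod_mul_distrib]
    rw [Finset.prod_eq_one, one_mul]
    intro p hp
    rw [ell_exp (PP_prime _ hp) hsr.le (hyn p hp)]
    exact inv_mul_cancel₀ (Complex.slitPlane_ne_zero (one_sub_slit (ell_small' (PP_prime _ hp) hsr.le (hyn p hp))))
  intro k hk
  have := hcomb δ hδ1 _ _ _ hD hη hDj hηj hF k hk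
  rw [BB_jet _ _ _ hk, iteratedDeriv_comp_add_const] at this
  exact this.trans_lt hKδ
end Vor
end

/-- **Voronin's theorem.** For fixed `1/2 < x < 1` and `m ≥ 0`, the curve
`y ↦ (ζ(x+iy), ζ'(x+iy), …, ζ^{(m)}(x+iy))` has dense image in `ℂ^{m+1}`. -/
theorem voronin_zeta_curve_dense (x : ℝ) (hx₁ : 1 / 2 < x) (hx₂ : x < 1) (m : ℕ) :
    DenseRange (fun y : ℝ => fun i : Fin (m + 1) =>
      iteratedDeriv (i : ℕ) riemannZeta ((x : ℂ) + y * Complex.I)) := by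
  rw [DenseRange, Metric.dense_iff]
  intro c ε hε
  obtain ⟨w, hw0, hw⟩ : ∃ w : ℂ, w ≠ 0 ∧ ‖w - c 0‖ < ε / 2 := by
    by_cases h : c 0 = 0
    · refine ⟨((ε / 4 : ℝ) : ℂ), ?_, ?_⟩
      · exact_mod_cast (by positivity : ε / 4 ≠ 0)
      · rw [h, sub_zero, Complex.norm_real, Real.norm_of_nonneg (by positivity)]; linarith
    · exact ⟨c 0, h, by simp; linarith⟩
  obtain ⟨τ, hτ⟩ := Vor.main_approx hx₁ hx₂ m
    (fun k => if k = 0 then w else if h : k < m + 1 then c ⟨k, h⟩ else 0) (by simpa using hw0) (half_pos hε)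
  refine ⟨_, ?_, ⟨τ, rfl⟩⟩
  rw [Metric.mem_ball, dist_pi_lt_iff hε]
  intro i
  have h1 := hτ (i:ℕ) (by omega)
  rw [dist_eq_norm]
  by_cases hi : (i:ℕ) = 0
  · have hi' : i = 0 := Fin.ext hi
    subst hi'
    simp only [Fin.val_zero, if_true] at h1 ⊢
    calc _ = ‖(iteratedDeriv 0 riemannZeta ((x : ℂ) + τ * Complex.I) - w) + (w - c 0)‖ := by congr 1; ring
      _ ≤ _ := norm_add_le _ _
      _ < ε / 2 + ε / 2 := add_lt_add h1 hw
      _ = ε := by ring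
  · rw [if_neg hi, dif_pos i.2] at h1
    have h2 : ‖iteratedDeriv (i:ℕ) riemannZeta ((x : ℂ) + τ * Complex.I) - c i‖ < ε / 2 := h1
    linarith
end

section
/- Let ℓ ≥ 2, n ≥ 1, m ≥ 0 be integers and let P(u₀,…,u_m; v₀,v₁,v₂) be a polynomial with constant complex coefficients such that P(ζ(z), ζ'(z), …, ζ^{(m)}(z); Γ(z), Γ^{(n)}(z), Γ^{(ℓn)}(z)) = 0 for every z ∈ ℂ at which ζ and Γ are analytic. Write P = Σ_{p=0}^{L} P_p, where P_p is the part of P that is homogeneous of total degree p in the variables (v₀,v₁,v₂). Then for each 0 ≤ p ≤ L and all z ∈ ℂ at which ζ and Γ are analytic, P_p(ζ(z), ζ'(z), …, ζ^{(m)}(z); Γ(z), Γ^{(n)}(z), Γ^{(ℓn)}(z)) = 0. -/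
open Complex Filter Topology

noncomputable def lgTerm (j : ℕ) (s : ℂ) : ℂ :=
  s * (Real.log (((j : ℝ) + 2) / (j + 1)) : ℝ) - Complex.log (1 + s / ((j : ℂ) + 1))

noncomputable def lgTerm' (j : ℕ) (s : ℂ) : ℂ :=
  ((Real.log (((j : ℝ) + 2) / (j + 1)) : ℝ) : ℂ) - 1 / (s + (j + 1))

lemma aux_re_pos {s : ℂ} (hs : 0 < s.re) (j : ℕ) : 0 < (1 + s / ((j : ℂ) + 1)).re := by
  have : s / ((j : ℂ) + 1) = ((1 / ((j : ℝ) + 1) : ℝ) : ℂ) * s := by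
    push_cast; ring
  rw [this, add_re, re_ofReal_mul]
  have : 0 < 1 / ((j : ℝ) + 1) * s.re := by positivity
  simp only [one_re]
  linarith

lemma aux_ne {s : ℂ} (hs : 0 < s.re) (j : ℕ) : s + ((j : ℂ) + 1) ≠ 0 := by
  intro h
  have := congrArg re h
  simp at this
  have h2 : (0:ℝ) ≤ j := Nat.cast_nonneg j
  linarith

lemma aux_j (j : ℕ) : ((j : ℂ) + 1) ≠ 0 := by exact_mod_cast Nat.succ_ne_zero j

lemma lgTerm_hasDerivAt (j : ℕ) {s : ℂ} (hs : 0 < s.re) :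
    HasDerivAt (lgTerm j) (lgTerm' j s) s := by
  have h1 : HasDerivAt (fun s : ℂ => 1 + s / ((j : ℂ) + 1)) (1 / ((j : ℂ) + 1)) s :=
    ((hasDerivAt_id s).div_const _).const_add 1
  have h2 := h1.clog (Or.inl (aux_re_pos hs j))
  have h3 := ((hasDerivAt_id s).mul_const
    ((Real.log (((j : ℝ) + 2) / (j + 1)) : ℝ) : ℂ)).sub h2
  refine HasDerivAt.congr_deriv h3 ?_
  unfold lgTerm'
  have ha := aux_ne hs j
  have hb := aux_j j
  have hc : 1 + s / ((j : ℂ) + 1) ≠ 0 := by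
    intro h; have := aux_re_pos hs j; rw [h] at this; simp at this
  have : 1 + s / ((j : ℂ) + 1) = (s + (j + 1)) / (j + 1) := by field_simp; ring
  rw [this]
  field_simp

lemma lgTerm'_bound (j : ℕ) {s : ℂ} (hs : 0 < s.re) :
    ‖lgTerm' j s‖ ≤ (1 + ‖s‖) * (1 / ((j : ℝ) + 1) ^ 2) := by
  have hj : (0:ℝ) < (j : ℝ) + 1 := by positivity
  have ha := aux_ne hs j
  have hb := aux_j j
  have e : lgTerm' j s = ((Real.log (((j : ℝ) + 2) / (j + 1)) - 1 / (j + 1) : ℝ) : ℂ)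
      + s / ((j + 1) * (s + (j + 1))) := by
    unfold lgTerm'
    push_cast
    field_simp
    ring
  rw [e]
  refine (norm_add_le _ _).trans ?_
  rw [add_mul (1:ℝ), one_mul]
  refine add_le_add ?_ ?_
  · rw [norm_real, Real.norm_eq_abs, abs_le]
    have hp : 0 < ((j : ℝ) + 2) / (j + 1) := by positivity
    have h1 := Real.log_le_sub_one_of_pos hp
    have h2 := Real.one_sub_inv_le_log_of_pos hp
    have e1 : ((j : ℝ) + 2) / (j + 1) - 1 = 1 / (j + 1) := by field_simp; ring
    have e2 : 1 - (((j : ℝ) + 2) / (j + 1))⁻¹ = 1 / (j + 2) := by field_simp; ring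
    have h3 : 1 / ((j : ℝ) + 1) - 1 / (j + 2) ≤ 1 / ((j:ℝ) + 1) ^ 2 := by
      rw [div_sub_div _ _ (by positivity) (by positivity), div_le_div_iff₀ (by positivity) (by positivity)]
      nlinarith
    have h4 : 0 ≤ 1 / ((j:ℝ) + 1) ^ 2 := by positivity
    constructor <;> linarith
  · rw [norm_div, norm_mul]
    have n1 : ‖(j : ℂ) + 1‖ = (j : ℝ) + 1 := by
      rw [show (j : ℂ) + 1 = (((j : ℝ) + 1 : ℝ) : ℂ) by push_cast; ring, norm_real,
        Real.norm_of_nonneg hj.le]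
    have n2 : (j : ℝ) + 1 ≤ ‖s + ((j : ℂ) + 1)‖ := by
      refine le_trans ?_ (re_le_norm _)
      simp; exact hs.le
    rw [n1, div_eq_mul_one_div, sq]
    gcongr

lemma lgSummable : Summable (fun j : ℕ => 1 / ((j : ℝ) + 1) ^ 2) := by
  have := (summable_nat_add_iff 1).2 (Real.summable_one_div_nat_pow.2 one_lt_two)
  simpa using this

lemma lgTerm_one (j : ℕ) : lgTerm j 1 = 0 := by
  unfold lgTerm
  have : (1 : ℂ) + 1 / ((j : ℂ) + 1) = (((((j : ℝ) + 2) / (j + 1)) : ℝ) : ℂ) := by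
    have hb := aux_j j
    push_cast; field_simp; ring
  rw [this, ← ofReal_log (by positivity)]
  ring

lemma lg_both {s : ℂ} (hs : 0 < s.re) :
    (Summable fun j => lgTerm j s) ∧
    HasDerivAt (fun z => ∑' j, lgTerm j z) (∑' j, lgTerm' j s) s := by
  set R : ℝ := ‖s‖ + 2
  set t : Set ℂ := {z | 0 < z.re} ∩ Metric.ball 0 R
  have ht : IsOpen t := (isOpen_lt continuous_const continuous_re).inter Metric.isOpen_ball
  have hc : IsPreconnected t :=
    ((convex_halfSpace_re_gt 0).inter (convex_ball 0 R)).isPreconnected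
  have hu : Summable (fun j : ℕ => (1 + R) * (1 / ((j : ℝ) + 1) ^ 2)) := lgSummable.mul_left _
  have hg : ∀ (n : ℕ) y, y ∈ t → HasDerivAt (lgTerm n) (lgTerm' n y) y :=
    fun n y hy => lgTerm_hasDerivAt n hy.1
  have hg' : ∀ (n : ℕ) y, y ∈ t → ‖lgTerm' n y‖ ≤ (1 + R) * (1 / ((n : ℝ) + 1) ^ 2) := by
    intro n y hy
    refine (lgTerm'_bound n hy.1).trans ?_
    have : ‖y‖ < R := by simpa using hy.2
    gcongr
  have h1 : (1 : ℂ) ∈ t := by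
    refine ⟨by simp, ?_⟩
    have := norm_nonneg s
    simp [R]; linarith
  have h0 : Summable (fun n => lgTerm n 1) := by simp [lgTerm_one]
  have hst : s ∈ t := ⟨hs, by simp [R]⟩
  exact ⟨summable_of_summable_hasDerivAt_of_isPreconnected hu ht hc hg hg' h1 h0 hst,
    hasDerivAt_tsum_of_isPreconnected hu ht hc hg hg' h1 h0 hst⟩

lemma exp_lgTerm (n : ℕ) {s : ℂ} (hs : 0 < s.re) :
    exp (lgTerm n s) * ((n + 1 : ℕ) : ℂ) ^ s = ((n + 2 : ℕ) : ℂ) ^ s * ((n + 1) / (s + (n + 1))) := by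
  have ha := aux_ne hs n
  have hb := aux_j n
  have hc : 1 + s / ((n : ℂ) + 1) ≠ 0 := by
    intro h; have := aux_re_pos hs n; rw [h] at this; simp at this
  rw [lgTerm, exp_sub, exp_log hc, cpow_def_of_ne_zero (Nat.cast_ne_zero.2 (Nat.succ_ne_zero _)),
    cpow_def_of_ne_zero (Nat.cast_ne_zero.2 (Nat.succ_ne_zero _)), Real.log_div (by positivity) (by positivity),
    ← natCast_log, ← natCast_log]
  have : exp (s * ((Real.log ((n:ℝ)+2) - Real.log ((n:ℝ)+1) : ℝ) : ℂ)) * exp (((Real.log ((n+1 : ℕ) : ℝ) : ℝ) : ℂ) * s)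
     = exp (((Real.log ((n+2 : ℕ) : ℝ) : ℝ) : ℂ) * s) := by
    rw [← exp_add]; congr 1; push_cast; ring
  rw [← this]
  have : 1 + s / ((n : ℂ) + 1) = (s + (n + 1)) / (n + 1) := by field_simp; ring
  rw [this]
  field_simp

lemma exp_sum_lgTerm (n : ℕ) {s : ℂ} (hs : 0 < s.re) :
    exp (∑ j ∈ Finset.range n, lgTerm j s) =
      s * GammaSeq s (n + 1) * (1 + s / ((n : ℂ) + 1)) := by
  have hs0 : s ≠ 0 := by rintro rfl; simp at hs
  induction n with
  | zero =>
    have h := aux_ne hs 0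
    simp [GammaSeq, Finset.prod_range_succ] at h ⊢
    field_simp
    ring
  | succ n ih =>
    rw [Finset.sum_range_succ, exp_add, ih]
    have h := exp_lgTerm n hs
    have hp : ((n + 1 : ℕ) : ℂ) ^ s ≠ 0 := by
      rw [Ne, cpow_eq_zero_iff]; push Not; intro h; exact absurd h (Nat.cast_ne_zero.2 (Nat.succ_ne_zero _))
    have h2 : exp (lgTerm n s) = ((n + 2 : ℕ) : ℂ) ^ s * ((n + 1) / (s + (n + 1))) / ((n + 1 : ℕ) : ℂ) ^ s := by
      rw [← h]; field_simp
    rw [h2]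
    simp only [GammaSeq]
    rw [Finset.prod_range_succ _ (n+1+1)]
    have h3 : (∏ j ∈ Finset.range (n + 1 + 1), (s + (j : ℂ))) ≠ 0 := by
      rw [Finset.prod_ne_zero_iff]
      rintro (_ | a) _
      · simpa using hs0
      · push_cast; exact aux_ne hs a
    have h4 := aux_ne hs n
    have h5 := aux_ne hs (n + 1)
    have h6 := aux_j n
    have h7 := aux_j (n+1)
    rw [Nat.factorial_succ (n+1)]
    push_cast at *
    field_simp
    ring

lemma Gamma_add_one_eq_exp {s : ℂ} (hs : 0 < s.re) :
    Gamma (s + 1) = exp (∑' j, lgTerm j s) := by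
  have hs0 : s ≠ 0 := by rintro rfl; simp at hs
  have h1 := (continuous_exp.tendsto _).comp (lg_both hs).1.hasSum.tendsto_sum_nat
  have h2 : Tendsto (fun n : ℕ => s * GammaSeq s (n + 1) * (1 + s / ((n : ℂ) + 1))) atTop
      (𝓝 (s * Gamma s * (1 + 0))) := by
    refine ((tendsto_const_nhds.mul ((GammaSeq_tendsto_Gamma s).comp (tendsto_add_atTop_nat 1))).mul
      (tendsto_const_nhds.add ?_))
    have := (tendsto_one_div_add_atTop_nhds_zero_nat (𝕜 := ℂ)).const_mul s
    simpa [div_eq_mul_inv] using this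
  have h3 := tendsto_nhds_unique h1 (h2.congr fun n => (exp_sum_lgTerm n hs).symm)
  rw [Gamma_add_one s hs0, h3]
  ring

lemma digamma_bound : ∃ C : ℝ, 0 ≤ C ∧ ∀ s : ℂ, 0 < s.re →
    ‖deriv Gamma (s + 1) / Gamma (s + 1)‖ ≤ C * (1 + ‖s‖) := by
  refine ⟨∑' j : ℕ, 1 / ((j : ℝ) + 1) ^ 2, tsum_nonneg fun j => by positivity, fun s hs => ?_⟩
  have hd := (lg_both hs).2.cexp
  have he : (fun z => Gamma (z + 1)) =ᶠ[𝓝 s] fun z => exp (∑' j, lgTerm j z) := by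
    filter_upwards [(isOpen_lt continuous_const continuous_re).mem_nhds hs] with z hz
    exact Gamma_add_one_eq_exp hz
  have h1 := (hd.congr_of_eventuallyEq he).deriv
  rw [deriv_comp_add_const] at h1
  rw [h1, Gamma_add_one_eq_exp hs, mul_div_cancel_left₀ _ (exp_ne_zero _), mul_comm, ← tsum_mul_left]
  exact tsum_of_norm_bounded (lgSummable.mul_left _).hasSum fun j => lgTerm'_bound j hs

/-- Holomorphic and of polynomial growth on some right half-plane. -/
def PolyGrowth (f : ℂ → ℂ) : Prop :=
  ∃ (a C : ℝ) (k : ℕ), ∀ z : ℂ, a ≤ z.re → DifferentiableAt ℂ f z ∧ ‖f z‖ ≤ C * (1 + ‖z‖) ^ k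

lemma PolyGrowth.const (c : ℂ) : PolyGrowth (fun _ => c) :=
  ⟨0, ‖c‖, 0, fun z _ => ⟨differentiableAt_const c, by simp⟩⟩

lemma PolyGrowth.mul {f g : ℂ → ℂ} (hf : PolyGrowth f) (hg : PolyGrowth g) :
    PolyGrowth (fun z => f z * g z) := by
  obtain ⟨a, C, k, hf⟩ := hf
  obtain ⟨b, D, l, hg⟩ := hg
  refine ⟨max a b, C * D, k + l, fun z hz => ?_⟩
  obtain ⟨h1, h2⟩ := hf z ((le_max_left _ _).trans hz)
  obtain ⟨h3, h4⟩ := hg z ((le_max_right _ _).trans hz)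
  refine ⟨h1.mul h3, ?_⟩
  rw [norm_mul]
  calc ‖f z‖ * ‖g z‖ ≤ (C * (1 + ‖z‖) ^ k) * (D * (1 + ‖z‖) ^ l) :=
        mul_le_mul h2 h4 (norm_nonneg _) ((norm_nonneg _).trans h2)
    _ = _ := by ring

lemma PolyGrowth.add {f g : ℂ → ℂ} (hf : PolyGrowth f) (hg : PolyGrowth g) :
    PolyGrowth (fun z => f z + g z) := by
  obtain ⟨a, C, k, hf⟩ := hf
  obtain ⟨b, D, l, hg⟩ := hg
  refine ⟨max a b, |C| + |D|, k + l, fun z hz => ?_⟩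
  obtain ⟨h1, h2⟩ := hf z ((le_max_left _ _).trans hz)
  obtain ⟨h3, h4⟩ := hg z ((le_max_right _ _).trans hz)
  refine ⟨h1.add h3, (norm_add_le _ _).trans ?_⟩
  have h1z : (1:ℝ) ≤ 1 + ‖z‖ := by linarith [norm_nonneg z]
  rw [add_mul]
  refine add_le_add (h2.trans ?_) (h4.trans ?_)
  · refine mul_le_mul (le_abs_self C) (pow_le_pow_right₀ h1z (by omega)) (by positivity) (abs_nonneg _)
  · refine mul_le_mul (le_abs_self D) (pow_le_pow_right₀ h1z (by omega)) (by positivity) (abs_nonneg _)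

lemma PolyGrowth.congr {f g : ℂ → ℂ} (hf : PolyGrowth f) (b : ℝ)
    (h : ∀ z : ℂ, b < z.re → f z = g z) : PolyGrowth g := by
  obtain ⟨a, C, k, hf⟩ := hf
  refine ⟨max a (b + 1), C, k, fun z hz => ?_⟩
  obtain ⟨h1, h2⟩ := hf z ((le_max_left _ _).trans hz)
  have hb : b < z.re := by linarith [(le_max_right _ _).trans hz]
  refine ⟨h1.congr_of_eventuallyEq ?_, by rwa [← h z hb]⟩
  filter_upwards [(isOpen_lt continuous_const continuous_re).mem_nhds hb] with w hw
  exact (h w hw).symm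

lemma PolyGrowth.deriv {f : ℂ → ℂ} (hf : PolyGrowth f) : PolyGrowth (deriv f) := by
  obtain ⟨a, C, k, hf⟩ := hf
  refine ⟨a + 1, |C| * 2 ^ k, k, fun z hz => ⟨?_, ?_⟩⟩
  · have hd : DifferentiableOn ℂ f {w | a < w.re} := fun w hw =>
      (hf w (le_of_lt hw)).1.differentiableWithinAt
    have ho : IsOpen {w : ℂ | a < w.re} := isOpen_lt continuous_const continuous_re
    exact (hd.deriv ho).differentiableAt (ho.mem_nhds (by simp; linarith))
  · have hre : ∀ w ∈ Metric.closedBall z 1, a ≤ w.re := by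
      intro w hw
      have h1 : ‖w - z‖ ≤ 1 := by simpa [dist_eq_norm] using hw
      have h2 := (abs_le.1 ((abs_re_le_norm (w - z)).trans h1)).1
      simp at h2
      linarith
    have hd : DifferentiableOn ℂ f (Metric.closedBall z 1) := fun w hw =>
      (hf w (hre w hw)).1.differentiableWithinAt
    have := norm_deriv_le_of_forall_mem_sphere_norm_le (f := f) (c := z) (R := 1)
      (C := |C| * 2 ^ k * (1 + ‖z‖) ^ k) one_pos
      (DifferentiableOn.diffContOnCl (hd.mono Metric.closure_ball_subset_closedBall)) ?_
    · simpa using this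
    · intro w hw
      have hw' := Metric.sphere_subset_closedBall hw
      refine (hf w (hre w hw')).2.trans ?_
      have h1 : ‖w - z‖ ≤ 1 := by simpa [dist_eq_norm] using hw'
      have h2 : ‖w‖ ≤ ‖z‖ + 1 := by
        calc ‖w‖ = ‖z + (w - z)‖ := by ring_nf
          _ ≤ _ := (norm_add_le _ _).trans (by linarith)
      rw [mul_assoc, ← mul_pow]
      refine mul_le_mul (le_abs_self C) (pow_le_pow_left₀ (by positivity) ?_ k) (by positivity) (abs_nonneg _)
      linarith [norm_nonneg z]

lemma PolyGrowth.iteratedDeriv {f : ℂ → ℂ} (hf : PolyGrowth f) (n : ℕ) :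
    PolyGrowth (iteratedDeriv n f) := by
  induction n with
  | zero => simpa using hf
  | succ n ih => rw [iteratedDeriv_succ]; exact ih.deriv

lemma PolyGrowth.mvPoly {σ : Type*} {x : σ → ℂ → ℂ} (hx : ∀ i, PolyGrowth (x i))
    (Q : MvPolynomial σ ℂ) : PolyGrowth (fun z => MvPolynomial.eval (fun i => x i z) Q) := by
  induction Q using MvPolynomial.induction_on with
  | C a => simpa using PolyGrowth.const a
  | add p q hp hq => simpa using hp.add hq
  | mul_X p i hp => simpa using hp.mul (hx i)

lemma PolyGrowth.zeta : PolyGrowth riemannZeta := by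
  refine ⟨2, ∑' n : ℕ, 1 / ((n : ℝ) + 1) ^ 2, 0, fun z hz => ⟨?_, ?_⟩⟩
  · refine differentiableAt_riemannZeta ?_
    rintro rfl
    norm_num at hz
  · rw [zeta_eq_tsum_one_div_nat_add_one_cpow (by linarith), pow_zero, mul_one]
    refine tsum_of_norm_bounded lgSummable.hasSum fun j => ?_
    have e : ((j : ℂ) + 1) = (((j : ℝ) + 1 : ℝ) : ℂ) := by push_cast; ring
    rw [norm_div, norm_one, e, norm_cpow_eq_rpow_re_of_pos (by positivity)]
    gcongr
    rw [← Real.rpow_natCast]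
    refine Real.rpow_le_rpow_of_exponent_le (by linarith [(Nat.cast_nonneg j : (0:ℝ) ≤ j)]) ?_
    exact_mod_cast hz

lemma re_pos_ne_neg_nat {z : ℂ} (hz : 0 < z.re) (m : ℕ) : z ≠ -(m : ℂ) := by
  rintro rfl
  simp at hz
  linarith [(Nat.cast_nonneg m : (0:ℝ) ≤ m)]

lemma PolyGrowth.digamma : PolyGrowth (fun z => _root_.deriv Gamma z / Gamma z) := by
  obtain ⟨C, hC, h⟩ := digamma_bound
  refine ⟨2, C * 2, 1, fun z hz => ⟨?_, ?_⟩⟩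
  · have hz0 : 0 < z.re := by linarith
    have ho : IsOpen {w : ℂ | 0 < w.re} := isOpen_lt continuous_const continuous_re
    have hd : DifferentiableOn ℂ Gamma {w | 0 < w.re} := fun w hw =>
      (differentiableAt_Gamma w (re_pos_ne_neg_nat hw)).differentiableWithinAt
    exact ((hd.deriv ho).differentiableAt (ho.mem_nhds hz0)).div
      (hd.differentiableAt (ho.mem_nhds hz0)) (Gamma_ne_zero_of_re_pos hz0)
  · have := h (z - 1) (by simp; linarith)
    rw [sub_add_cancel] at this
    refine this.trans ?_
    rw [pow_one, mul_assoc]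
    gcongr
    have := norm_sub_le z 1
    simp at this
    linarith [norm_nonneg z]

lemma differentiableAt_iteratedDeriv_Gamma (k : ℕ) {z : ℂ} (hz : 0 < z.re) :
    DifferentiableAt ℂ (iteratedDeriv k Gamma) z := by
  have ho : IsOpen {w : ℂ | 0 < w.re} := isOpen_lt continuous_const continuous_re
  have hd : DifferentiableOn ℂ Gamma {w | 0 < w.re} := fun w hw =>
      (differentiableAt_Gamma w (re_pos_ne_neg_nat hw)).differentiableWithinAt
  have : DifferentiableOn ℂ (iteratedDeriv k Gamma) {w | 0 < w.re} := by
    induction k with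
    | zero => simpa using hd
    | succ n ih => rw [iteratedDeriv_succ]; exact ih.deriv ho
  exact this.differentiableAt (ho.mem_nhds hz)

lemma PolyGrowth.gammaRatio (k : ℕ) :
    PolyGrowth (fun z => _root_.iteratedDeriv k Gamma z / Gamma z) := by
  induction k with
  | zero =>
    refine (PolyGrowth.const 1).congr 0 fun z hz => ?_
    simp [div_self (Gamma_ne_zero_of_re_pos hz)]
  | succ k ih =>
    refine (ih.deriv.add (PolyGrowth.digamma.mul ih)).congr 0 fun z hz => ?_
    have h0 := Gamma_ne_zero_of_re_pos hz
    have h1 : _root_.deriv (fun z => _root_.iteratedDeriv k Gamma z / Gamma z) z = _ :=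
      ((differentiableAt_iteratedDeriv_Gamma k hz).hasDerivAt.div
      (differentiableAt_Gamma z (re_pos_ne_neg_nat hz)).hasDerivAt h0).deriv
    rw [h1, iteratedDeriv_succ]
    field_simp
    ring

lemma gamma_beats (R : ℝ) (hR : 1 ≤ R) :
    Tendsto (fun x : ℝ => R ^ x / Real.Gamma x) atTop (𝓝 0) := by
  have h1 := FloorSemiring.tendsto_pow_div_factorial_atTop R
  have h2 : Tendsto (fun x : ℝ => ⌊x⌋₊ - 1) atTop atTop :=
    (tendsto_sub_atTop_nat 1).comp (tendsto_nat_floor_atTop)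
  have h3 := (h1.comp h2).const_mul (R ^ 2)
  rw [mul_zero] at h3
  refine squeeze_zero' ?_ ?_ h3
  · filter_upwards [eventually_gt_atTop 0] with x hx
    have := Real.Gamma_pos_of_pos hx
    positivity
  · filter_upwards [eventually_ge_atTop 2] with x hx
    have hf : 2 ≤ ⌊x⌋₊ := Nat.le_floor (by exact_mod_cast hx)
    obtain ⟨m, hm⟩ : ∃ m, ⌊x⌋₊ = m + 1 := ⟨⌊x⌋₊ - 1, by omega⟩
    have hle : ((m + 1 : ℕ) : ℝ) ≤ x := hm ▸ Nat.floor_le (by linarith)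
    have hlt : x < (m + 1 : ℕ) + 1 := by rw [← hm]; exact Nat.lt_floor_add_one x
    have hg : (m.factorial : ℝ) ≤ Real.Gamma x := by
      rw [← Real.Gamma_nat_eq_factorial]
      push_cast at hle
      refine Real.Gamma_strictMonoOn_Ici.monotoneOn ?_ hx hle
      have : (2:ℝ) ≤ ((m + 1 : ℕ) : ℝ) := by rw [← hm]; exact_mod_cast hf
      push_cast at this
      exact this
    have hp : R ^ x ≤ R ^ 2 * R ^ m := by
      rw [← pow_add, ← Real.rpow_natCast]
      refine Real.rpow_le_rpow_of_exponent_le hR ?_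
      push_cast at hlt ⊢
      linarith
    have hmp : (0:ℝ) < m.factorial := by exact_mod_cast m.factorial_pos
    simp only [Function.comp, hm, Nat.add_sub_cancel]
    rw [← mul_div_assoc]
    exact div_le_div₀ (by positivity) hp hmp hg

lemma pl_vanish {f : ℂ → ℂ} (hf : PolyGrowth f) {a C : ℝ} {k : ℕ}
    (h : ∀ x : ℝ, a ≤ x → ‖f x‖ * Real.Gamma x ≤ C * (1 + ‖x‖) ^ k) :
    ∃ b : ℝ, ∀ z : ℂ, b ≤ z.re → f z = 0 := by
  obtain ⟨a', C', k', hf⟩ := hf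
  set b : ℝ := max (max a a') 1
  have hb1 : 1 ≤ b := le_max_right _ _
  have hba : a ≤ b := (le_max_left _ _).trans (le_max_left _ _)
  have hba' : a' ≤ b := (le_max_right _ _).trans (le_max_left _ _)
  set F : ℂ → ℂ := fun z => f (z + b) / (z + 1) ^ k' with hF
  have hne : ∀ z : ℂ, 0 ≤ z.re → z + 1 ≠ 0 := by
    intro z hz h
    have := congrArg re h
    simp at this
    linarith
  have hn1 : ∀ z : ℂ, 0 ≤ z.re → 1 ≤ ‖z + 1‖ := by
    intro z hz
    refine le_trans ?_ (re_le_norm _)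
    simpa using hz
  have hn2 : ∀ z : ℂ, 0 ≤ z.re → ‖z‖ ≤ ‖z + 1‖ := by
    intro z hz
    refine (sq_le_sq₀ (norm_nonneg _) (norm_nonneg _)).1 ?_
    rw [Complex.sq_norm, Complex.sq_norm, normSq_apply, normSq_apply]
    simp
    nlinarith
  have hbd : ∀ z : ℂ, 0 ≤ z.re → ‖F z‖ ≤ |C'| * (2 + b) ^ k' := by
    intro z hz
    have h1 := (hf (z + b) (by simp; linarith)).2
    have h3 := hn1 z hz
    rw [hF]
    simp only [norm_div, norm_pow]
    rw [div_le_iff₀ (by positivity)]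
    refine h1.trans ?_
    rw [mul_assoc, ← mul_pow]
    refine mul_le_mul (le_abs_self _) (pow_le_pow_left₀ (by positivity) ?_ _) (by positivity) (abs_nonneg _)
    have h4 := norm_add_le z (b : ℂ)
    rw [norm_real, Real.norm_of_nonneg (by linarith : (0:ℝ) ≤ b)] at h4
    have := hn2 z hz
    nlinarith
  have hdF : ∀ z : ℂ, 0 ≤ z.re → DifferentiableAt ℂ F z := by
    intro z hz
    have h1 := (hf (z + b) (by simp; linarith)).1
    have h2 : DifferentiableAt ℂ (fun z => f (z + b)) z := by
      have := h1.comp z (differentiableAt_id.add_const (b : ℂ))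
      exact this
    exact h2.div (by fun_prop) (pow_ne_zero _ (hne z hz))
  have key := PhragmenLindelof.eq_zero_on_right_half_plane_of_superexponential_decay (f := F)
    ?_ ?_ ?_ ?_
  · refine ⟨b, fun z hz => ?_⟩
    have h1 : 0 ≤ (z - b).re := by simp; linarith
    have h2 := key h1
    simp only [hF, sub_add_cancel, Pi.zero_apply, div_eq_zero_iff] at h2
    exact h2.resolve_right (pow_ne_zero _ (hne _ h1))
  · refine DifferentiableOn.diffContOnCl fun z hz => (hdF z ?_).differentiableWithinAt
    rw [closure_setOfPred_lt_re] at hz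
    exact hz
  · refine ⟨1, by norm_num, 0, ?_⟩
    refine Asymptotics.IsBigO.of_bound (|C'| * (2 + b) ^ k') ?_
    refine eventually_inf_principal.2 (Eventually.of_forall fun z hz => ?_)
    simpa using hbd z (le_of_lt hz)
  · intro n
    have hlim := ((gamma_beats (Real.exp (n + k)) (Real.one_le_exp (by positivity))).comp
      (tendsto_atTop_add_const_right atTop b tendsto_id)).const_mul |C|
    rw [mul_zero] at hlim
    refine squeeze_zero' ?_ ?_ hlim
    · exact Eventually.of_forall fun x => by positivity
    · filter_upwards [eventually_ge_atTop 0] with x hx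
      have h1 := h (x + b) (by linarith)
      have hG : 0 < Real.Gamma (x + b) := Real.Gamma_pos_of_pos (by linarith)
      have h2 : ‖F x‖ ≤ ‖f ((x + b : ℝ) : ℂ)‖ := by
        have := hn1 (x : ℂ) (by simpa using hx)
        simp only [hF, norm_div, norm_pow]
        push_cast
        exact div_le_self (norm_nonneg _) (one_le_pow₀ this)
      rw [← le_div_iff₀ hG] at h1
      simp only [Function.comp, id]
      calc Real.exp x ^ n * ‖F x‖ ≤ Real.exp (x + b) ^ n * (C * (1 + ‖x + b‖) ^ k / Real.Gamma (x + b)) := by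
            refine mul_le_mul ?_ (h2.trans h1) (norm_nonneg _) (by positivity)
            gcongr
            linarith
        _ ≤ Real.exp (x + b) ^ n * (|C| * (Real.exp (x + b)) ^ k / Real.Gamma (x + b)) := by
            gcongr
            · exact le_abs_self C
            · rw [Real.norm_of_nonneg (by linarith)]
              linarith [Real.add_one_le_exp (x + b)]
        _ = _ := by
            have e : Real.exp ((n : ℝ) + k) ^ (x + b) =
                Real.exp (x + b) ^ n * Real.exp (x + b) ^ k := by
              rw [← Real.exp_mul, ← Real.exp_nat_mul, ← Real.exp_nat_mul, ← Real.exp_add]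
              congr 1
              ring
            rw [e]
            ring
  · exact ⟨_, fun x => hbd _ (by simp)⟩

lemma sum_vanish (N : ℕ) (A : ℕ → ℂ → ℂ) (hA : ∀ p, PolyGrowth (A p)) (a : ℝ)
    (h : ∀ z : ℂ, a ≤ z.re → ∑ p ∈ Finset.range N, Gamma z ^ p * A p z = 0) :
    ∀ p < N, ∃ b : ℝ, ∀ z : ℂ, b ≤ z.re → A p z = 0 := by
  induction N generalizing a with
  | zero => intro p hp; omega
  | succ N ih =>
    obtain ⟨b, hb⟩ : ∃ b : ℝ, ∀ z : ℂ, b ≤ z.re → A N z = 0 := by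
      -- common bound for the lower coefficients
      have hB : ∀ M, ∃ (a' C : ℝ) (k : ℕ), ∀ z : ℂ, a' ≤ z.re →
          ∑ p ∈ Finset.range M, ‖A p z‖ ≤ C * (1 + ‖z‖) ^ k := by
        intro M
        induction M with
        | zero => exact ⟨0, 0, 0, fun z _ => by simp⟩
        | succ M ihM =>
          obtain ⟨a1, C1, k1, h1⟩ := ihM
          obtain ⟨a2, C2, k2, h2⟩ := hA M
          refine ⟨max a1 a2, |C1| + |C2|, k1 + k2, fun z hz => ?_⟩
          have h3 := h1 z ((le_max_left _ _).trans hz)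
          have h4 := (h2 z ((le_max_right _ _).trans hz)).2
          have h1z : (1:ℝ) ≤ 1 + ‖z‖ := by linarith [norm_nonneg z]
          rw [Finset.sum_range_succ, add_mul]
          refine add_le_add (h3.trans ?_) (h4.trans ?_)
          · exact mul_le_mul (le_abs_self _) (pow_le_pow_right₀ h1z (by omega)) (by positivity) (abs_nonneg _)
          · exact mul_le_mul (le_abs_self _) (pow_le_pow_right₀ h1z (by omega)) (by positivity) (abs_nonneg _)
      obtain ⟨a', C, k, hB⟩ := hB N
      refine pl_vanish (hA N) (a := max (max a a') 2) (C := C) (k := k) fun x hx => ?_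
      have hx2 : 2 ≤ x := (le_max_right _ _).trans hx
      have hxa : a ≤ x := (le_max_left _ _).trans ((le_max_left _ _).trans hx)
      have hxa' : a' ≤ x := (le_max_right _ _).trans ((le_max_left _ _).trans hx)
      have hG1 : 1 ≤ Real.Gamma x := by
        rw [← Real.Gamma_two]
        exact Real.Gamma_strictMonoOn_Ici.monotoneOn (by simp) hx2 hx2
      have h0 := h x (by simpa using hxa)
      have h1 := hB x (by simpa using hxa')
      rw [norm_real] at h1
      refine le_trans ?_ h1
      rw [Finset.sum_range_succ, Gamma_ofReal] at h0
      set G := Real.Gamma x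
      have hG0 : 0 < G := by linarith
      have h2 : G ^ N * ‖A N x‖ ≤ ∑ p ∈ Finset.range N, G ^ p * ‖A p x‖ := by
        have e : ((G : ℂ)) ^ N * A N x = - ∑ p ∈ Finset.range N, (G : ℂ) ^ p * A p x := by
          linear_combination h0
        have e2 := congrArg norm e
        rw [norm_neg, norm_mul, norm_pow, norm_real, Real.norm_of_nonneg hG0.le] at e2
        rw [e2]
        refine (norm_sum_le _ _).trans (le_of_eq (Finset.sum_congr rfl fun p _ => ?_))
        rw [norm_mul, norm_pow, norm_real, Real.norm_of_nonneg hG0.le]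
      rcases N with _ | N
      · simp at h2
        simp [h2]
      · have h3 : G ^ N * (‖A (N+1) x‖ * G) ≤ G ^ N * ∑ p ∈ Finset.range (N+1), ‖A p x‖ := by
          calc _ = G ^ (N+1) * ‖A (N+1) x‖ := by ring
            _ ≤ _ := h2
            _ ≤ _ := by
              rw [Finset.mul_sum]
              refine Finset.sum_le_sum fun p hp => ?_
              have : p ≤ N := by simp at hp; omega
              gcongr
        exact le_of_mul_le_mul_left h3 (by positivity)
    intro p hp
    rcases Nat.lt_succ_iff_lt_or_eq.1 hp with h1 | rfl
    · refine ih (max a b) (fun z hz => ?_) p h1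
      have := h z ((le_max_left _ _).trans hz)
      rw [Finset.sum_range_succ, hb z ((le_max_right _ _).trans hz)] at this
      simpa using this
    · exact ⟨b, hb⟩

lemma weighted_scale {σ : Type*} (w : σ → ℕ) (Q : MvPolynomial σ ℂ) (p : ℕ)
    (hQ : MvPolynomial.IsWeightedHomogeneous w Q p) (g : ℂ) (x : σ → ℂ) :
    MvPolynomial.eval (fun i => g ^ w i * x i) Q = g ^ p * MvPolynomial.eval x Q := by
  rw [MvPolynomial.eval_eq, MvPolynomial.eval_eq, Finset.mul_sum]
  refine Finset.sum_congr rfl fun d hd => ?_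
  have h := hQ (MvPolynomial.mem_support_iff.1 hd)
  simp only [mul_pow, Finset.prod_mul_distrib, ← pow_mul]
  have : ∏ i ∈ d.support, g ^ (w i * d i) = g ^ p := by
    rw [Finset.prod_pow_eq_pow_sum, ← h, Finsupp.weight_apply, Finsupp.sum]
    congr 1
    exact Finset.sum_congr rfl fun i _ => by simp [mul_comm]
  rw [this]; ring

lemma isClosed_negNat : IsClosed {z : ℂ | ∃ k : ℕ, z = -(k : ℂ)} := by
  have : {z : ℂ | ∃ k : ℕ, z = -(k : ℂ)} = {z | (Gamma z)⁻¹ = 0} := by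
    ext z; simp [Gamma_eq_zero_iff]
  rw [this]
  exact isClosed_eq differentiable_one_div_Gamma.continuous continuous_const

theorem homogeneous_components_vanish (ℓ m n : ℕ) (hℓ : 2 ≤ ℓ) (hn : 1 ≤ n)
    (P : MvPolynomial (Fin (m + 1) ⊕ Fin 3) ℂ)
    (hP : ∀ z : ℂ, z ≠ 1 → (∀ k : ℕ, z ≠ -(k : ℂ)) →
      MvPolynomial.eval
        (Sum.elim (fun i : Fin (m + 1) => iteratedDeriv (i : ℕ) riemannZeta z)
          (fun j : Fin 3 => iteratedDeriv (![0, n, ℓ * n] j) Complex.Gamma z)) P = 0) :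
    ∀ p : ℕ, ∀ z : ℂ, z ≠ 1 → (∀ k : ℕ, z ≠ -(k : ℂ)) →
      MvPolynomial.eval
        (Sum.elim (fun i : Fin (m + 1) => iteratedDeriv (i : ℕ) riemannZeta z)
          (fun j : Fin 3 => iteratedDeriv (![0, n, ℓ * n] j) Complex.Gamma z))
        (MvPolynomial.weightedHomogeneousComponent
          (Sum.elim (fun _ : Fin (m + 1) => (0 : ℕ)) (fun _ : Fin 3 => (1 : ℕ))) p P) = 0 := by
  intro p
  set w : Fin (m + 1) ⊕ Fin 3 → ℕ :=
    Sum.elim (fun _ : Fin (m + 1) => (0 : ℕ)) (fun _ : Fin 3 => (1 : ℕ)) with hw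
  -- evaluation point and rescaled evaluation point
  set V : ℂ → Fin (m + 1) ⊕ Fin 3 → ℂ := fun z =>
    Sum.elim (fun i : Fin (m + 1) => iteratedDeriv (i : ℕ) riemannZeta z)
          (fun j : Fin 3 => iteratedDeriv (![0, n, ℓ * n] j) Complex.Gamma z) with hV
  set X : Fin (m + 1) ⊕ Fin 3 → ℂ → ℂ := 
    Sum.elim (fun (i : Fin (m + 1)) z => iteratedDeriv (i : ℕ) riemannZeta z)
          (fun (j : Fin 3) z => iteratedDeriv (![0, n, ℓ * n] j) Complex.Gamma z / Gamma z) with hX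
  change ∀ z : ℂ, z ≠ 1 → (∀ k : ℕ, z ≠ -(k : ℂ)) → MvPolynomial.eval (V z) _ = 0
  have hXg : ∀ i, PolyGrowth (X i) := by
    rintro (i | j)
    · exact PolyGrowth.zeta.iteratedDeriv i
    · exact PolyGrowth.gammaRatio _
  set Q : ℕ → MvPolynomial (Fin (m + 1) ⊕ Fin 3) ℂ := fun q =>
    MvPolynomial.weightedHomogeneousComponent w q P with hQ
  set A : ℕ → ℂ → ℂ := fun q z => MvPolynomial.eval (fun i => X i z) (Q q) with hA
  have hscale : ∀ q (z : ℂ), 0 < z.re → MvPolynomial.eval (V z) (Q q) = Gamma z ^ q * A q z := by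
    intro q z hz
    have h0 := Gamma_ne_zero_of_re_pos hz
    rw [hA, ← weighted_scale w (Q q) q
      (MvPolynomial.weightedHomogeneousComponent_isWeightedHomogeneous q P)]
    congr 2
    funext i
    rcases i with i | j
    · simp [hV, hX, hw]
    · simp [hV, hX, hw]; field_simp
  -- P is the sum of its components
  obtain ⟨N, hN⟩ : ∃ N : ℕ, p < N ∧ ∑ q ∈ Finset.range N, Q q = P := by
    have hfin := MvPolynomial.weightedHomogeneousComponent_finsupp (w := w) P
    obtain ⟨M, hM⟩ := hfin.bddAbove
    refine ⟨max M p + 1, by omega, ?_⟩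
    rw [← finsum_eq_sum_of_support_subset _ (s := Finset.range (max M p + 1)),
      MvPolynomial.sum_weightedHomogeneousComponent]
    intro q hq
    have := hM hq
    simp
    omega
  have hsum : ∀ z : ℂ, (2:ℝ) ≤ z.re → ∑ q ∈ Finset.range N, Gamma z ^ q * A q z = 0 := by
    intro z hz
    have h1 := hP z (by rintro rfl; norm_num at hz) (re_pos_ne_neg_nat (by linarith))
    change MvPolynomial.eval (V z) P = 0 at h1
    rw [← hN.2, map_sum] at h1
    rw [← h1]
    exact Finset.sum_congr rfl fun q _ => (hscale q z (by linarith)).symm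
  obtain ⟨b, hb⟩ := sum_vanish N A (fun q => PolyGrowth.mvPoly hXg (Q q)) 2 hsum p hN.1
  -- identity theorem
  set B : Set ℂ := {1} ∪ {z : ℂ | ∃ k : ℕ, z = -(k : ℂ)} with hBdef
  have hBc : IsClosed B := isClosed_singleton.union isClosed_negNat
  have hBcount : B.Countable := by
    refine (Set.countable_singleton _).union ?_
    have : {z : ℂ | ∃ k : ℕ, z = -(k : ℂ)} = Set.range (fun k : ℕ => -(k : ℂ)) := by
      ext z; simp [eq_comm]
    rw [this]
    exact Set.countable_range _
  have hpre : IsPreconnected Bᶜ :=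
    (hBcount.isConnected_compl_of_one_lt_rank (by simp)).isPreconnected
  have hζ : AnalyticOnNhd ℂ riemannZeta Bᶜ := by
    refine DifferentiableOn.analyticOnNhd (fun z hz => ?_) hBc.isOpen_compl
    refine (differentiableAt_riemannZeta ?_).differentiableWithinAt
    rintro rfl; exact hz (Or.inl rfl)
  have hΓ : AnalyticOnNhd ℂ Gamma Bᶜ := by
    refine DifferentiableOn.analyticOnNhd (fun z hz => ?_) hBc.isOpen_compl
    refine (differentiableAt_Gamma z fun k hk => ?_).differentiableWithinAt
    exact hz (Or.inr ⟨k, hk⟩)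
  have han : AnalyticOnNhd ℂ (fun z => MvPolynomial.eval (V z) (Q p)) Bᶜ := by
    have := AnalyticOnNhd.aeval_mvPolynomial (𝕜 := ℂ) (A := ℂ) (B := ℂ) (f := V) (s := Bᶜ) ?_ (Q p)
    · simpa [MvPolynomial.aeval_eq_eval] using this
    · rintro (i | j)
      · simp only [hV, Sum.elim_inl, iteratedDeriv_eq_iterate]
        exact hζ.iterated_deriv _
      · simp only [hV, Sum.elim_inr, iteratedDeriv_eq_iterate]
        exact hΓ.iterated_deriv _
  set z₀ : ℂ := ((max b 2 + 1 : ℝ) : ℂ) with hz₀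
  have hz₀re : z₀.re = max b 2 + 1 := by simp [hz₀]
  have hz₀B : z₀ ∈ Bᶜ := by
    have h2 := le_max_right b 2
    rintro (h | ⟨k, hk⟩)
    · have h3 := congrArg re (Set.mem_singleton_iff.1 h)
      rw [hz₀re, one_re] at h3
      linarith
    · exact re_pos_ne_neg_nat (by rw [hz₀re]; linarith) k hk
  have hev : (fun z => MvPolynomial.eval (V z) (Q p)) =ᶠ[𝓝 z₀] 0 := by
    have : z₀ ∈ {z : ℂ | max b 2 < z.re} := by
      simp only [Set.mem_ofPred_eq, hz₀re]; linarith
    filter_upwards [(isOpen_lt continuous_const continuous_re).mem_nhds this] with z hz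
    have h1 : max b 2 < z.re := hz
    have h2 := le_max_right b 2
    have h3 := le_max_left b 2
    rw [hscale p z (by linarith), hb z (by linarith)]
    simp
  intro z hz1 hzk
  have := han.eqOn_zero_of_preconnected_of_eventuallyEq_zero hpre hz₀B hev
    (show z ∈ Bᶜ from by
      rintro (h | ⟨k, hk⟩)
      · exact hz1 h
      · exact hzk k hk)
  simpa using this
end
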